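/- For every δ ∈ (−1, −1/2), the family (u_μ)_{μ>0} is Cauchy in the H'²_δ norm as μ → 0: for every ε > 0 there exists μ₀ > 0 such that for all 0 < μ₂ ≤ μ₁ ≤ μ₀, ‖u_{μ₁} − u_{μ₂}‖_{H'²_δ} ≤ ε. Consequently u_μ converges in H'²_δ to a limit u₀ ∈ H'²_δ as μ → 0. -/

import Mathlib

open MeasureTheory Real Filter Metric Set
open scoped ENNReal RealInnerProductSpace NNReal

noncomputable section

abbrev E3 : Type := EuclideanSpace ℝ (Fin 3)

/-- The flat Laplacian on `ℝ³`. -/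
def lap (u : E3 → ℝ) (x : E3) : ℝ :=
  ∑ i : Fin 3, iteratedFDeriv ℝ 2 u x ![EuclideanSpace.single i 1, EuclideanSpace.single i 1]

/-- The weighted norm `‖f‖_{L'²_δ}` (with values in `ℝ≥0∞`). -/
def wL2norm (δ : ℝ) (f : E3 → ℝ) : ℝ≥0∞ :=
  (∫⁻ x in {x : E3 | x ≠ 0}, (‖f x‖₊ : ℝ≥0∞) ^ (2:ℝ) * (‖x‖₊ : ℝ≥0∞) ^ (-2*δ - 3)) ^ (1/2 : ℝ)

/-- The weighted Sobolev norm `‖f‖_{H'^k_δ} = Σ_{j=0}^k ‖D^j f‖_{L'²_{δ-j}}`. -/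
def wHnorm (k : ℕ) (δ : ℝ) (f : E3 → ℝ) : ℝ≥0∞ :=
  ∑ j ∈ Finset.range (k+1), wL2norm (δ - j) (fun x => ‖iteratedFDeriv ℝ j f x‖)

/-- Test functions: `C^∞` functions with compact support contained in `ℝ³ ∖ {0}`. -/
def IsTestFun (g : E3 → ℝ) : Prop :=
  ContDiff ℝ (⊤ : ℕ∞) g ∧ HasCompactSupport g ∧ tsupport g ⊆ {x : E3 | x ≠ 0}

/-- Membership in `H'^k_δ`, the completion of `C^∞_c(ℝ³∖{0})` in the norm `wHnorm k δ`. -/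
def MemH (k : ℕ) (δ : ℝ) (f : E3 → ℝ) : Prop :=
  wHnorm k δ f < ⊤ ∧
    ∀ ε : ℝ≥0∞, 0 < ε → ∃ g : E3 → ℝ, IsTestFun g ∧ wHnorm k δ (f - g) ≤ ε

/-- Membership in `L'²_δ`. -/
def MemL2 (δ : ℝ) (f : E3 → ℝ) : Prop :=
  AEMeasurable f ∧ wL2norm δ f < ⊤

/-- The square `K²` of the extrinsic curvature tensor `K = K_P + K_J + K_A`
(with `Jᵃ = (0,0,J)`). -/
def Ksq (A J : ℝ) (P : E3) (x : E3) : ℝ :=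
  6 * (A^2 + 3 * J^2 * ((x 0)^2 + (x 1)^2) / ‖x‖^2) / ‖x‖^6
  + (12 * A * ⟪P, ‖x‖⁻¹ • x⟫
      + 18 * J * ((‖x‖⁻¹ * x 0) * P 1 - (‖x‖⁻¹ * x 1) * P 0)) / ‖x‖^5
  + 9 * (‖P‖^2 + 2 * ⟪P, ‖x‖⁻¹ • x⟫^2) / (2 * ‖x‖^4)

/-- The nonlinearity `F(x,Φ) = -K²/(8Φ⁷) - 2πρ/Φ³`, with `ρ = σ/(8π r⁴)`. -/
def Fnl (A J : ℝ) (P : E3) (σ : E3 → ℝ) (x : E3) (Φ : ℝ) : ℝ :=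
  - Ksq A J P x / (8 * Φ^7) - σ x / (4 * ‖x‖^4 * Φ^3)

/-- `u` is the (nonnegative, `C¹`, decaying) solution `u_μ` of `Δu = F(x, 1 + μ/2r + u)`. -/
def IsSolμ (A J : ℝ) (P : E3) (σ : E3 → ℝ) (μ : ℝ) (u : E3 → ℝ) : Prop :=
  (∀ x, 0 ≤ u x) ∧ ContDiff ℝ 1 u ∧
    Tendsto u (cocompact E3) (nhds 0) ∧
    ∀ x : E3, x ≠ 0 → lap u x = Fnl A J P σ x (1 + μ / (2*‖x‖) + u x)

/-- The extreme (μ = 0) equation `Δu = -K²/(8(1+u)⁷) - 2πρ/(1+u)³` on `ℝ³∖{0}`. -/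
def IsExtremeSol (A J : ℝ) (P : E3) (σ : E3 → ℝ) (u : E3 → ℝ) : Prop :=
  ∀ x : E3, x ≠ 0 →
    lap u x = - Ksq A J P x / (8 * (1 + u x)^7) - σ x / (4 * ‖x‖^4 * (1 + u x)^3)

/-- The Laplace–Beltrami operator on the unit sphere: Euclidean Laplacian of the
degree-zero homogeneous extension. -/
def sphLap (V : E3 → ℝ) (p : E3) : ℝ := lap (fun y => V (‖y‖⁻¹ • y)) p

/-- A function is `C^∞` on the sphere `S²` iff its homogeneous extension is smooth away
from the origin. -/
def SmoothOnSphere (V : E3 → ℝ) : Prop :=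
  ContDiffOn ℝ (⊤ : ℕ∞) (fun y : E3 => V (‖y‖⁻¹ • y)) {x : E3 | x ≠ 0}

/-- `sin²θ` for a point on the unit sphere (polar axis = third coordinate axis). -/
def sin2θ (p : E3) : ℝ := (p 0)^2 + (p 1)^2

/-! The maximum principle makes `u_μ` increase as `μ ↓ 0` and bounds it above by `C_β r^{-β}` for
every `β ∈ [1/2, 1)`, uniformly in `μ`. Since `K²` blows up like `r⁻⁶` near the puncture, except
possibly along the axis, a multiple of `r^{-1/2}(1 + sin²θ/8)` is a subsolution there, whence
`Φ_μ ≥ c r^{-1/2}` and `|Δu_μ| ≤ C r^{-5/2}` near the origin, again uniformly. Hence `u_μ` has a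
pointwise limit `u₀`; the Newton potential representation shows that `u_μ` and `u₀` are smooth off
the origin, passes to the limit, and gives `Δu_μ → Δu₀` pointwise.

The bounds on `u_μ` and `Δu_μ` yield a majorant of `u_μ² r^{-2δ-3} + (Δu_μ)² r^{-2δ+1}` which is
integrable exactly because `-1 < δ < -1/2`, so dominated convergence applies to the energy
`∫ w² r^{-2δ-3} + (Δw)² r^{-2δ+1}` of `w = u_μ - u₀`. Weighted integration by parts, performed
against logarithmic cutoffs, bounds the full `H'²_δ` norm by this energy. The same cutoffs, whose
scale-invariant derivatives tend to `0`, show that functions of finite energy are limits of test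
functions. -/

section Laplacian

open Laplacian

/-- The punctured space `ℝ³ ∖ {0}`, on which the equations hold. -/
abbrev puncturedSpace : Set E3 := {x | x ≠ 0}

theorem isOpen_puncturedSpace : IsOpen puncturedSpace := isOpen_ne

abbrev stdVec (i : Fin 3) : E3 := EuclideanSpace.single i 1

/-- The `i`-th partial derivative of a function on `ℝ³`. -/
def pderiv (i : Fin 3) (f : E3 → ℝ) (x : E3) : ℝ := fderiv ℝ f x (stdVec i)

variable {u v : E3 → ℝ} {x : E3}

theorem lap_eq_sum_fderiv_orthonormalBasis (b : OrthonormalBasis (Fin 3) ℝ E3) (u : E3 → ℝ)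
    (x : E3) : lap u x = ∑ i, fderiv ℝ (fderiv ℝ u) x (b i) (b i) := by
  have hstd := InnerProductSpace.laplacian_eq_iteratedFDeriv_orthonormalBasis u
    (EuclideanSpace.basisFun (Fin 3) ℝ)
  have hb := InnerProductSpace.laplacian_eq_iteratedFDeriv_orthonormalBasis u b
  simpa [lap, iteratedFDeriv_two_apply] using congrFun (hstd.symm.trans hb) x

theorem lap_eq_sum_fderiv (u : E3 → ℝ) (x : E3) :
    lap u x = ∑ i, fderiv ℝ (fderiv ℝ u) x (stdVec i) (stdVec i) := by
  simp [lap, iteratedFDeriv_two_apply]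

theorem lap_eq_laplacian (u : E3 → ℝ) : lap u = Δ u := by
  funext x
  simp [lap, InnerProductSpace.laplacian_eq_iteratedFDeriv_orthonormalBasis u
    (EuclideanSpace.basisFun (Fin 3) ℝ)]

theorem lap_congr (h : u =ᶠ[nhds x] v) : lap u x = lap v x := by
  simpa only [lap_eq_laplacian] using (InnerProductSpace.laplacian_congr_nhds h).self_of_nhds

theorem lap_add (hu : ContDiffAt ℝ 2 u x) (hv : ContDiffAt ℝ 2 v x) :
    lap (fun y => u y + v y) x = lap u x + lap v x := by
  rw [lap_eq_laplacian, lap_eq_laplacian, lap_eq_laplacian]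
  exact hu.laplacian_add hv

theorem lap_sub (hu : ContDiffAt ℝ 2 u x) (hv : ContDiffAt ℝ 2 v x) :
    lap (fun y => u y - v y) x = lap u x - lap v x := by
  rw [lap_eq_laplacian, lap_eq_laplacian, lap_eq_laplacian]
  exact hu.laplacian_sub hv

theorem lap_const_mul (c : ℝ) (hu : ContDiffAt ℝ 2 u x) :
    lap (fun y => c * u y) x = c * lap u x := by
  rw [lap_eq_laplacian, lap_eq_laplacian]
  exact InnerProductSpace.laplacian_smul c hu

theorem lap_const (c : ℝ) (x : E3) : lap (fun _ => c) x = 0 := by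
  simp [lap_eq_laplacian]

theorem differentiableAt_fderiv_of_contDiffAt_two (h : ContDiffAt ℝ 2 u x) :
    DifferentiableAt ℝ (fderiv ℝ u) x :=
  (h.fderiv_right (m := 1) (by norm_num)).differentiableAt (by norm_num)

theorem eventually_differentiableAt_of_contDiffAt_two (h : ContDiffAt ℝ 2 u x) :
    ∀ᶠ y in nhds x, DifferentiableAt ℝ u y :=
  (h.eventually (by norm_num)).mono fun _ hy => hy.differentiableAt (by norm_num)

theorem contDiffAt_pderiv {m n : WithTop ℕ∞} (h : ContDiffAt ℝ n u x) (hmn : m + 1 ≤ n)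
    (i : Fin 3) : ContDiffAt ℝ m (pderiv i u) x :=
  (h.fderiv_right hmn).clm_apply contDiffAt_const

theorem differentiableAt_pderiv (h : ContDiffAt ℝ 2 u x) (i : Fin 3) :
    DifferentiableAt ℝ (pderiv i u) x :=
  (contDiffAt_pderiv (m := 1) h (by norm_num) i).differentiableAt (by norm_num)

theorem fderiv_pderiv (h : DifferentiableAt ℝ (fderiv ℝ u) x) (i : Fin 3) (w : E3) :
    fderiv ℝ (pderiv i u) x w = fderiv ℝ (fderiv ℝ u) x w (stdVec i) := by
  have happly := (ContinuousLinearMap.apply ℝ ℝ (stdVec i)).hasFDerivAt.comp x h.hasFDerivAt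
  exact congrArg (· w) happly.fderiv

theorem pderiv_pderiv (h : ContDiffAt ℝ 2 u x) (i j : Fin 3) :
    pderiv i (pderiv j u) x = fderiv ℝ (fderiv ℝ u) x (stdVec i) (stdVec j) :=
  fderiv_pderiv (differentiableAt_fderiv_of_contDiffAt_two h) j _

theorem lap_eq_sum_pderiv (h : ContDiffAt ℝ 2 u x) :
    lap u x = ∑ i, pderiv i (pderiv i u) x := by
  simp only [lap_eq_sum_fderiv, pderiv_pderiv h]

theorem pderiv_congr (h : u =ᶠ[nhds x] v) (i : Fin 3) : pderiv i u x = pderiv i v x := by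
  rw [pderiv, pderiv, h.fderiv_eq]

theorem pderiv_const (c : ℝ) (i : Fin 3) (x : E3) : pderiv i (fun _ => c) x = 0 := by
  simp [pderiv]

theorem pderiv_add (hu : DifferentiableAt ℝ u x) (hv : DifferentiableAt ℝ v x) (i : Fin 3) :
    pderiv i (fun y => u y + v y) x = pderiv i u x + pderiv i v x := by
  simp [pderiv, fderiv_fun_add hu hv]

theorem pderiv_mul (hu : DifferentiableAt ℝ u x) (hv : DifferentiableAt ℝ v x) (i : Fin 3) :
    pderiv i (fun y => u y * v y) x = pderiv i u x * v x + u x * pderiv i v x := by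
  simp [pderiv, fderiv_fun_mul hu hv]
  ring

theorem pderiv_coord (i j : Fin 3) (x : E3) :
    pderiv i (fun y : E3 => y j) x = if i = j then 1 else 0 := by
  have hproj := (EuclideanSpace.proj j : E3 →L[ℝ] ℝ).hasFDerivAt (x := x)
  rw [pderiv, show (fun y : E3 => y j) = (EuclideanSpace.proj j : E3 →L[ℝ] ℝ) from rfl,
    hproj.fderiv]
  simp [eq_comm]

theorem lap_mul (hu : ContDiffAt ℝ 2 u x) (hv : ContDiffAt ℝ 2 v x) :
    lap (fun y => u y * v y) x =
      lap u x * v x + 2 * (∑ i, pderiv i u x * pderiv i v x) + u x * lap v x := by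
  have hsecond (i : Fin 3) : pderiv i (pderiv i fun y => u y * v y) x =
      pderiv i (pderiv i u) x * v x + 2 * (pderiv i u x * pderiv i v x) +
        u x * pderiv i (pderiv i v) x := by
    have hfirst : (pderiv i fun y => u y * v y) =ᶠ[nhds x]
        fun y => pderiv i u y * v y + u y * pderiv i v y := by
      filter_upwards [eventually_differentiableAt_of_contDiffAt_two hu,
        eventually_differentiableAt_of_contDiffAt_two hv] with y huy hvy
      exact pderiv_mul huy hvy i
    have hdu := hu.differentiableAt two_ne_zero
    have hdv := hv.differentiableAt two_ne_zero
    have hpu := differentiableAt_pderiv hu i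
    have hpv := differentiableAt_pderiv hv i
    rw [pderiv_congr hfirst, pderiv_add (hpu.fun_mul hdv) (hdu.fun_mul hpv), pderiv_mul hpu hdv,
      pderiv_mul hdu hpv]
    ring
  rw [lap_eq_sum_pderiv (hu.mul hv), lap_eq_sum_pderiv hu, lap_eq_sum_pderiv hv]
  simp only [hsecond, Finset.sum_add_distrib, Finset.mul_sum, Finset.sum_mul]

theorem pderiv_comp_norm_sq {g : ℝ → ℝ} {g' : ℝ} (hg : HasDerivAt g g' (‖x‖ ^ 2)) (i : Fin 3) :
    pderiv i (fun y => g (‖y‖ ^ 2)) x = 2 * x i * g' := by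
  have hcomp : HasFDerivAt (fun y : E3 => g (‖y‖ ^ 2)) (g' • 2 • innerSL ℝ x) x :=
    hg.comp_hasFDerivAt x (hasStrictFDerivAt_norm_sq x).hasFDerivAt
  simp [pderiv, hcomp.fderiv, EuclideanSpace.inner_single_right]
  ring

theorem lap_comp_norm_sq {g g' : ℝ → ℝ} {g'' : ℝ}
    (hg : ∀ᶠ t in nhds (‖x‖ ^ 2), HasDerivAt g (g' t) t)
    (hg' : HasDerivAt g' g'' (‖x‖ ^ 2)) (hc : ContDiffAt ℝ 2 g (‖x‖ ^ 2)) :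
    lap (fun y => g (‖y‖ ^ 2)) x = 4 * ‖x‖ ^ 2 * g'' + 6 * g' (‖x‖ ^ 2) := by
  have hsecond (i : Fin 3) : pderiv i (pderiv i fun y => g (‖y‖ ^ 2)) x =
      2 * g' (‖x‖ ^ 2) + 4 * x i ^ 2 * g'' := by
    have hfirst : (pderiv i fun y => g (‖y‖ ^ 2)) =ᶠ[nhds x] fun y => 2 * y i * g' (‖y‖ ^ 2) :=
      ((by fun_prop : ContinuousAt (fun y : E3 => ‖y‖ ^ 2) x).eventually hg).mono
        fun y hy => pderiv_comp_norm_sq hy i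
    have hnorm : DifferentiableAt ℝ (fun y : E3 => ‖y‖ ^ 2) x :=
      (contDiff_norm_sq ℝ).differentiable two_ne_zero x
    have hcoord : DifferentiableAt ℝ (fun y : E3 => y i) x := by fun_prop
    rw [pderiv_congr hfirst, pderiv_mul (v := fun y => g' (‖y‖ ^ 2)) (hcoord.const_mul 2)
      (hg'.differentiableAt.comp x hnorm),
      pderiv_mul (differentiableAt_const 2) hcoord, pderiv_coord, pderiv_comp_norm_sq hg']
    simp [pderiv_const]
    ring
  rw [lap_eq_sum_pderiv (u := fun y => g (‖y‖ ^ 2)) (hc.comp x (contDiff_norm_sq ℝ).contDiffAt)]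
  have hnorm : ‖x‖ ^ 2 = x 0 ^ 2 + x 1 ^ 2 + x 2 ^ 2 := by
    simp [EuclideanSpace.norm_sq_eq, Fin.sum_univ_three]
  simp only [hsecond, Fin.sum_univ_three]
  linear_combination -4 * g'' * hnorm

theorem contDiff_pderiv (h : ContDiff ℝ (⊤ : ℕ∞) u) (i : Fin 3) :
    ContDiff ℝ (⊤ : ℕ∞) (pderiv i u) :=
  (h.fderiv_right (m := (⊤ : ℕ∞)) (by simp)).clm_apply contDiff_const

theorem contDiff_lap (h : ContDiff ℝ (⊤ : ℕ∞) u) : ContDiff ℝ (⊤ : ℕ∞) (lap u) := by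
  rw [funext (lap_eq_sum_fderiv u)]
  exact ContDiff.sum fun i _ => (((h.fderiv_right (m := (⊤ : ℕ∞)) (by simp)).fderiv_right
    (m := (⊤ : ℕ∞)) (by simp)).clm_apply contDiff_const).clm_apply contDiff_const

theorem continuousAt_lap (h : ContDiffAt ℝ 2 u x) : ContinuousAt (lap u) x := by
  have hsecond : ContinuousAt (fderiv ℝ (fderiv ℝ u)) x :=
    ((h.fderiv_right (m := 1) (by norm_num)).fderiv_right (m := 0) (by norm_num)).continuousAt
  rw [funext (lap_eq_sum_fderiv u)]
  exact tendsto_finsetSum _ fun i _ =>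
    (hsecond.clm_apply continuousAt_const).clm_apply continuousAt_const

theorem tsupport_pderiv_subset (i : Fin 3) (u : E3 → ℝ) : tsupport (pderiv i u) ⊆ tsupport u :=
  closure_minimal (fun x hx => by
    contrapose! hx
    simp [pderiv, fderiv_of_notMem_tsupport (𝕜 := ℝ) hx]) (isClosed_tsupport u)

theorem tsupport_lap_subset (u : E3 → ℝ) : tsupport (lap u) ⊆ tsupport u :=
  closure_minimal (fun x hx => by
    contrapose! hx
    rw [Function.notMem_support, lap_congr (notMem_tsupport_iff_eventuallyEq.1 hx)]
    exact lap_const 0 x) (isClosed_tsupport u)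

end Laplacian

section MaximumPrinciple

theorem deriv_deriv_nonpos_of_isLocalMax {g : ℝ → ℝ} {t : ℝ} (hg : ContinuousAt g t)
    (hmax : IsLocalMax g t) : deriv (deriv g) t ≤ 0 := by
  by_contra! hpos
  have hmin : IsLocalMin g t := isLocalMin_of_deriv_deriv_pos hpos hmax.deriv_eq_zero hg
  have hconst : g =ᶠ[nhds t] fun _ => g t := by
    filter_upwards [hmin, hmax] with s hmin hmax using le_antisymm hmax hmin
  simp [hconst.deriv.deriv_eq] at hpos

theorem fderiv_fderiv_apply_nonpos_of_isLocalMax {E : Type*} [NormedAddCommGroup E]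
    [NormedSpace ℝ E] {f : E → ℝ} {x : E} (hf : ContDiffAt ℝ 2 f x) (hmax : IsLocalMax f x)
    (e : E) : fderiv ℝ (fderiv ℝ f) x e e ≤ 0 := by
  set line : ℝ → E := fun t => x + t • e
  have hzero : line 0 = x := by simp [line]
  have hline (t : ℝ) : HasDerivAt line e t := by
    simpa [line] using ((hasDerivAt_id t).smul_const e).const_add x
  have htendsto : Tendsto line (nhds 0) (nhds x) := hzero ▸ (hline 0).continuousAt.tendsto
  have hfirst : deriv (f ∘ line) =ᶠ[nhds 0] fun t => fderiv ℝ f (line t) e := by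
    filter_upwards [htendsto.eventually (hf.eventually (by norm_num))] with t ht
    exact ((ht.differentiableAt two_ne_zero).hasFDerivAt.comp_hasDerivAt t (hline t)).deriv
  have hsecond : deriv (deriv (f ∘ line)) 0 = fderiv ℝ (fderiv ℝ f) x e e := by
    have hfderiv : HasFDerivAt (fderiv ℝ f) (fderiv ℝ (fderiv ℝ f) x) (line 0) := by
      rw [hzero]
      exact ((hf.fderiv_right (m := 1) (by norm_num)).differentiableAt one_ne_zero).hasFDerivAt
    have hslope := (hfderiv.comp_hasDerivAt 0 (hline 0)).clm_apply (hasDerivAt_const 0 e)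
    rw [hfirst.deriv_eq]
    simpa using hslope.deriv
  rw [← hsecond]
  refine deriv_deriv_nonpos_of_isLocalMax ?_ ?_
  · exact ContinuousAt.comp (by simpa only [hzero] using hf.continuousAt) (hline 0).continuousAt
  · filter_upwards [htendsto.eventually hmax] with t ht
    simpa only [Function.comp_apply, hzero] using ht

theorem lap_nonpos_of_isLocalMax {v : E3 → ℝ} {x : E3} (hv : ContDiffAt ℝ 2 v x)
    (hmax : IsLocalMax v x) : lap v x ≤ 0 := by
  rw [lap_eq_sum_fderiv]
  exact Finset.sum_nonpos fun i _ => fderiv_fderiv_apply_nonpos_of_isLocalMax hv hmax _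

theorem nonpos_of_lap_pos_where_pos {U : Set E3} (hU : IsOpen U) {v : E3 → ℝ}
    (hboundary : ∀ c > 0, ∃ K, IsCompact K ∧ K ⊆ U ∧ ∀ x ∈ U, x ∉ K → v x ≤ c)
    (hv : ∀ x ∈ U, ContDiffAt ℝ 2 v x) (hlap : ∀ x ∈ U, 0 < v x → 0 < lap v x) :
    ∀ x ∈ U, v x ≤ 0 := by
  intro y hyU
  by_contra! hy
  obtain ⟨K, hK, hKU, hvK⟩ := hboundary (v y / 2) (by positivity)
  have hyK : y ∈ K := by
    by_contra hyK
    linarith [hvK y hyU hyK]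
  obtain ⟨x, hxK, hmax⟩ := hK.exists_isMaxOn ⟨y, hyK⟩
    fun z hz => (hv z (hKU hz)).continuousAt.continuousWithinAt
  have hyx : v y ≤ v x := hmax hyK
  have hlocal : IsLocalMax v x := by
    filter_upwards [hU.mem_nhds (hKU hxK)] with z hzU
    by_cases hzK : z ∈ K
    · exact hmax hzK
    · linarith [hvK z hzU hzK]
  linarith [lap_nonpos_of_isLocalMax (hv x (hKU hxK)) hlocal, hlap x (hKU hxK) (by linarith)]

end MaximumPrinciple

section Divergence

variable {n : ℕ} {X : Fin (n + 1) → (Fin (n + 1) → ℝ) → ℝ}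
  {X' : Fin (n + 1) → (Fin (n + 1) → ℝ) → (Fin (n + 1) → ℝ) →L[ℝ] ℝ}
  {g : (Fin (n + 1) → ℝ) → ℝ}

theorem setIntegral_Icc_eq_sum_faces (hX : ∀ i, Continuous (X i)) (hg : Continuous g)
    {a b : Fin (n + 1) → ℝ} (hab : a ≤ b)
    (hd : ∀ x ∈ Set.pi univ (fun i => Ioo (a i) (b i)), ∀ i, HasFDerivAt (X i) (X' i x) x)
    (hdiv : ∀ x ∈ Set.pi univ (fun i => Ioo (a i) (b i)), ∑ i, X' i x (Pi.single i 1) = g x) :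
    ∫ x in Icc a b, g x = ∑ i,
      ((∫ x in Icc (a ∘ i.succAbove) (b ∘ i.succAbove), X i (i.insertNth (b i) x)) -
        ∫ x in Icc (a ∘ i.succAbove) (b ∘ i.succAbove), X i (i.insertNth (a i) x)) := by
  have hae : (fun x => ∑ i, X' i x (Pi.single i 1)) =ᵐ[volume.restrict (Icc a b)] g := by
    have hIoo : (Set.pi univ fun i => Ioo (a i) (b i)) =ᵐ[volume] Icc a b :=
      Measure.univ_pi_Ioo_ae_eq_Icc
    rw [← Measure.restrict_congr_set hIoo]
    filter_upwards [ae_restrict_mem (MeasurableSet.univ_pi fun i => measurableSet_Ioo)] with x hx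
    exact hdiv x hx
  rw [← integral_congr_ae hae]
  refine integral_divergence_of_hasFDerivAt_off_countable' a b hab X X' ∅ countable_empty
    (fun i => (hX i).continuousOn) (fun x hx i => hd x hx.1 i) ?_
  exact IntegrableOn.congr_fun_ae (hg.continuousOn.integrableOn_compact isCompact_Icc) hae.symm

theorem integral_eq_setIntegral_halfBoxes_add (hg : Continuous g) {M : ℝ}
    (hgM : ∀ x j, M ≤ |x j| → g x = 0) :
    ∫ x, g x = (∫ x in Icc (fun _ => -M) (Fin.cons 0 fun _ => M), g x) +
      ∫ x in Icc (Fin.cons 0 fun _ => -M) (fun _ => M), g x := by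
  have hdisjoint : AEDisjoint volume (Icc (fun _ => -M) (Fin.cons 0 fun _ : Fin n => M))
      (Icc (Fin.cons 0 fun _ : Fin n => -M) (fun _ => M)) := by
    refine measure_mono_null (t := {x : Fin (n + 1) → ℝ | x 0 = 0}) ?_
      (Measure.pi_hyperplane _ 0 0)
    rintro x ⟨hlower, hupper⟩
    exact le_antisymm (hlower.2 0) (hupper.1 0)
  rw [← setIntegral_union₀ hdisjoint measurableSet_Icc.nullMeasurableSet
    (hg.continuousOn.integrableOn_compact isCompact_Icc)
    (hg.continuousOn.integrableOn_compact isCompact_Icc),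
    setIntegral_eq_integral_of_forall_compl_eq_zero]
  intro x hx
  by_contra hgx
  have hbound (j) : -M < x j ∧ x j < M := abs_lt.1 (not_le.1 fun h => hgx (hgM x j h))
  refine hx ((le_total (x 0) 0).imp (fun h => ⟨fun j => (hbound j).1.le, fun j => ?_⟩)
    fun h => ⟨fun j => ?_, fun j => (hbound j).2.le⟩)
  · exact j.cases h fun i => (hbound i.succ).2.le
  · exact j.cases h fun i => (hbound i.succ).1.le

/-- A jump of the derivatives of `X` across the hyperplane is harmless: the two copies of the face
`x 0 = 0` cancel. -/
theorem integral_eq_zero_of_divergence_off_hyperplane (hX : ∀ i, Continuous (X i))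
    (hg : Continuous g) {K : Set (Fin (n + 1) → ℝ)} (hK : IsCompact K)
    (hXK : ∀ i, ∀ x ∉ K, X i x = 0) (hgK : ∀ x ∉ K, g x = 0)
    (hd : ∀ x, x 0 ≠ 0 → ∀ i, HasFDerivAt (X i) (X' i x) x)
    (hdiv : ∀ x, x 0 ≠ 0 → ∑ i, X' i x (Pi.single i 1) = g x) :
    ∫ x, g x = 0 := by
  obtain ⟨M, hM, hMK⟩ : ∃ M > 0, ∀ x : Fin (n + 1) → ℝ, ∀ j, M ≤ |x j| → x ∉ K := by
    obtain ⟨M, hM, hMK⟩ := hK.isBounded.exists_pos_norm_lt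
    exact ⟨M, hM, fun x j hj hx => not_lt.2 (hj.trans (norm_le_pi_norm x j)) (hMK x hx)⟩
  have hface (i : Fin (n + 1)) (s : ℝ) (hs : |s| = M) (x : Fin n → ℝ) :
      X i (i.insertNth (α := fun _ => ℝ) s x) = 0 :=
    hXK i _ (hMK _ i (by simp [hs]))
  have hlower := setIntegral_Icc_eq_sum_faces (a := fun _ => -M) (b := Fin.cons 0 fun _ => M)
    hX hg (fun j => j.cases (by simpa using hM.le) fun _ => by simpa using hM.le)
    (fun x hx => hd x (hx 0 (mem_univ _)).2.ne) (fun x hx => hdiv x (hx 0 (mem_univ _)).2.ne)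
  have hupper := setIntegral_Icc_eq_sum_faces (a := Fin.cons 0 fun _ => -M) (b := fun _ => M)
    hX hg (fun j => j.cases (by simpa using hM.le) fun _ => by simpa using hM.le)
    (fun x hx => hd x (hx 0 (mem_univ _)).1.ne') (fun x hx => hdiv x (hx 0 (mem_univ _)).1.ne')
  rw [Fin.sum_univ_succ] at hlower hupper
  simp only [Fin.cons_zero, Fin.cons_succ, hface _ M (abs_of_pos hM),
    hface _ (-M) (by rw [abs_neg, abs_of_pos hM]), integral_zero, sub_self,
    Finset.sum_const_zero, add_zero, sub_zero, zero_sub] at hlower hupper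
  rw [integral_eq_setIntegral_halfBoxes_add hg fun x j h => hgK x (hMK x j h), hlower, hupper]
  have hlowerFace : (Fin.cons 0 fun _ => M : Fin (n + 1) → ℝ) ∘ Fin.succAbove 0 = fun _ => M := by
    ext j; simp
  have hupperFace :
      (Fin.cons 0 fun _ => -M : Fin (n + 1) → ℝ) ∘ Fin.succAbove 0 = fun _ => -M := by
    ext j; simp
  rw [hlowerFace, hupperFace]
  exact add_neg_cancel _

end Divergence

section DivergenceInOrthonormalBasis

/-- The coordinates of an orthonormal basis, as an isomorphism from the sup-normed `ι → ℝ`. -/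
def basisEquiv {ι E : Type*} [Fintype ι] [NormedAddCommGroup E] [InnerProductSpace ℝ E]
    (b : OrthonormalBasis ι ℝ E) : (ι → ℝ) ≃L[ℝ] E :=
  (EuclideanSpace.equiv ι ℝ).symm.trans b.repr.symm.toContinuousLinearEquiv

variable {ι E : Type*} [Fintype ι] [NormedAddCommGroup E] [InnerProductSpace ℝ E]

theorem inner_basisEquiv (b : OrthonormalBasis ι ℝ E) (y : ι → ℝ) (i : ι) :
    ⟪b i, basisEquiv b y⟫ = y i := by
  simp [← b.repr_apply_apply, basisEquiv]

theorem basisEquiv_single [DecidableEq ι] (b : OrthonormalBasis ι ℝ E) (i : ι) :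
    basisEquiv b (Pi.single i 1) = b i := by
  simp [basisEquiv]

theorem measurePreserving_basisEquiv [FiniteDimensional ℝ E] [MeasurableSpace E] [BorelSpace E]
    (b : OrthonormalBasis ι ℝ E) : MeasurePreserving (basisEquiv b) :=
  b.measurePreserving_repr_symm.comp
    (EuclideanSpace.volume_preserving_symm_measurableEquiv_toLp ι).symm

theorem integral_eq_zero_of_divergence_off_inner_eq_zero [FiniteDimensional ℝ E]
    [MeasurableSpace E] [BorelSpace E] {n : ℕ} (b : OrthonormalBasis (Fin (n + 1)) ℝ E)
    {Y : Fin (n + 1) → E → ℝ} {g : E → ℝ} (hY : ∀ i, Continuous (Y i)) (hg : Continuous g)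
    {K : Set E} (hK : IsCompact K) (hYK : ∀ i, ∀ x ∉ K, Y i x = 0) (hgK : ∀ x ∉ K, g x = 0)
    (hd : ∀ x, ⟪b 0, x⟫ ≠ 0 → ∀ i, DifferentiableAt ℝ (Y i) x)
    (hdiv : ∀ x, ⟪b 0, x⟫ ≠ 0 → ∑ i, fderiv ℝ (Y i) x (b i) = g x) :
    ∫ x, g x = 0 := by
  set L := basisEquiv b
  rw [← (measurePreserving_basisEquiv b).integral_comp L.toHomeomorph.measurableEmbedding g]
  refine integral_eq_zero_of_divergence_off_hyperplane (X := fun i y => Y i (L y))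
    (X' := fun i y => (fderiv ℝ (Y i) (L y)).comp (L : (Fin (n + 1) → ℝ) →L[ℝ] E))
    (fun i => (hY i).comp L.continuous)
    (hg.comp L.continuous) (K := L ⁻¹' K) (L.toHomeomorph.isCompact_preimage.2 hK)
    (fun i x hx => hYK i _ hx) (fun x hx => hgK _ hx) (fun y hy i => ?_) fun y hy => ?_
  · rw [← inner_basisEquiv b y 0] at hy
    exact (hd _ hy i).hasFDerivAt.comp y L.hasFDerivAt
  · rw [← inner_basisEquiv b y 0] at hy
    simpa [L, basisEquiv_single] using hdiv _ hy

end DivergenceInOrthonormalBasis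

section WeakForm

theorem continuous_of_continuousAt_of_eq_zero {α : Type*} [TopologicalSpace α] {h : α → ℝ}
    {K : Set α} (hK : IsClosed K) (hzero : ∀ x ∉ K, h x = 0)
    (hcont : ∀ x ∈ K, ContinuousAt h x) : Continuous h :=
  continuous_of_tsupport fun x hx =>
    hcont x (closure_minimal (fun _ hy => not_imp_comm.1 (hzero _) hy) hK hx)

theorem exists_orthonormalBasis_zero_eq {n : E3} (hn : ‖n‖ = 1) :
    ∃ b : OrthonormalBasis (Fin 3) ℝ E3, b 0 = n := by
  have hv : Orthonormal ℝ (({0} : Set (Fin 3)).domRestrict fun _ => n) :=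
    ⟨fun _ => by simp [hn], fun i j hij => absurd (Subsingleton.elim i j) hij⟩
  obtain ⟨b, hb⟩ := hv.exists_orthonormalBasis_extension_of_card_eq (by simp)
  exact ⟨b, hb 0 rfl⟩

/-- The component along `e` of the field `φ ∇u - u ∇φ` of Green's second identity. -/
def greenField (u φ : E3 → ℝ) (e x : E3) : ℝ := φ x * fderiv ℝ u x e - u x * fderiv ℝ φ x e

variable {u f φ : E3 → ℝ} {x e : E3}

theorem greenField_eq_zero (hx : x ∉ tsupport φ) : greenField u φ e x = 0 := by
  simp [greenField, image_eq_zero_of_notMem_tsupport hx, fderiv_of_notMem_tsupport (𝕜 := ℝ) hx]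

theorem continuousAt_greenField (hu : ContDiffAt ℝ 1 u x) (hφ : ContDiffAt ℝ 1 φ x) :
    ContinuousAt (greenField u φ e) x :=
  (hφ.continuousAt.mul ((hu.fderiv_right (m := 0) le_rfl).continuousAt.clm_apply
    continuousAt_const)).sub (hu.continuousAt.mul
      ((hφ.fderiv_right (m := 0) le_rfl).continuousAt.clm_apply continuousAt_const))

theorem hasFDerivAt_greenField (hu : DifferentiableAt ℝ u x)
    (hu' : DifferentiableAt ℝ (fderiv ℝ u) x) (hφ : DifferentiableAt ℝ φ x)
    (hφ' : DifferentiableAt ℝ (fderiv ℝ φ) x) :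
    DifferentiableAt ℝ (greenField u φ e) x ∧ fderiv ℝ (greenField u φ e) x e =
      φ x * fderiv ℝ (fderiv ℝ u) x e e - u x * fderiv ℝ (fderiv ℝ φ) x e e := by
  have h := (hφ.hasFDerivAt.mul (hu'.hasFDerivAt.clm_apply (hasFDerivAt_const e x))).sub
    (hu.hasFDerivAt.mul (hφ'.hasFDerivAt.clm_apply (hasFDerivAt_const e x)))
  refine ⟨h.differentiableAt, ?_⟩
  have hfderiv : fderiv ℝ (greenField u φ e) x = _ := h.fderiv
  rw [hfderiv]
  simp
  ring

theorem continuous_mul_of_tsupport_subset {U : Set E3} (hU : IsOpen U) (hf : ContinuousOn f U)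
    (hφ : Continuous φ) (hφs : tsupport φ ⊆ U) : Continuous fun x => f x * φ x :=
  continuous_of_continuousAt_of_eq_zero (isClosed_tsupport φ)
    (fun x hx => by simp [image_eq_zero_of_notMem_tsupport hx])
    fun x hx => (hf.continuousAt (hU.mem_nhds (hφs hx))).mul hφ.continuousAt

/-- The equation may fail on a plane through the origin, because `∇u` is continuous across it. -/
theorem integral_mul_lap_eq {n : E3} (hn : ‖n‖ = 1) (hu : ContDiffOn ℝ 1 u puncturedSpace)
    (hf : ContinuousOn f puncturedSpace)
    (huf : ∀ x ∈ puncturedSpace, ⟪n, x⟫ ≠ 0 → DifferentiableAt ℝ (fderiv ℝ u) x ∧ lap u x = f x)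
    (hφ : ContDiff ℝ 2 φ) (hφc : HasCompactSupport φ) (hφs : tsupport φ ⊆ puncturedSpace) :
    ∫ x, u x * lap φ x = ∫ x, f x * φ x := by
  obtain ⟨b, hb⟩ := exists_orthonormalBasis_zero_eq hn
  have hopen := isOpen_puncturedSpace
  have huAt (x) (hx : x ∈ puncturedSpace) : ContDiffAt ℝ 1 u x := hu.contDiffAt (hopen.mem_nhds hx)
  have hfφ := continuous_mul_of_tsupport_subset hopen hf hφ.continuous hφs
  have hlapφ : Continuous (lap φ) :=
    continuous_iff_continuousAt.2 fun x => continuousAt_lap hφ.contDiffAt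
  have huφ := continuous_mul_of_tsupport_subset hopen hu.continuousOn hlapφ
    ((tsupport_lap_subset φ).trans hφs)
  have hgreen : ∫ x, (f x * φ x - u x * lap φ x) = 0 := by
    refine integral_eq_zero_of_divergence_off_inner_eq_zero b (Y := fun i => greenField u φ (b i))
      (fun i => continuous_of_continuousAt_of_eq_zero (isClosed_tsupport φ)
        (fun x => greenField_eq_zero) fun x hx =>
          continuousAt_greenField (huAt x (hφs hx)) (hφ.contDiffAt.of_le (by norm_num)))
      (hfφ.sub huφ) hφc.isCompact (fun i x => greenField_eq_zero) (fun x hx => ?_)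
      (fun x hx i => ?_) fun x hx => ?_
    · simp [image_eq_zero_of_notMem_tsupport hx,
        image_eq_zero_of_notMem_tsupport fun h => hx (tsupport_lap_subset φ h)]
    all_goals
      have hx0 : x ∈ puncturedSpace := by rintro rfl; simp at hx
      have hfield (e : E3) := hasFDerivAt_greenField (e := e)
        ((huAt x hx0).differentiableAt one_ne_zero) (huf x hx0 (hb ▸ hx)).1
        (hφ.contDiffAt.differentiableAt two_ne_zero)
        (differentiableAt_fderiv_of_contDiffAt_two hφ.contDiffAt)
    · exact (hfield _).1
    · simp only [(hfield _).2, Finset.sum_sub_distrib, ← Finset.mul_sum]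
      rw [← lap_eq_sum_fderiv_orthonormalBasis, ← lap_eq_sum_fderiv_orthonormalBasis,
        (huf x hx0 (hb ▸ hx)).2, mul_comm]
  rw [integral_sub (hfφ.integrable_of_hasCompactSupport hφc.mul_left)
    (huφ.integrable_of_hasCompactSupport (hφc.mono' <|
      (Function.support_mul_subset_right _ _).trans
        (subset_closure.trans (tsupport_lap_subset φ))))] at hgreen
  exact (sub_eq_zero.1 hgreen).symm

end WeakForm

section NewtonKernel

/-- The Newton kernel `1 / |z|`, regularised by `e` at the origin and without its constant. -/
def newtonKernel (e : ℝ) (z : E3) : ℝ := (‖z‖ ^ 2 + e) ^ (-(1 / 2) : ℝ)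

/-- Minus the Laplacian of `newtonKernel e`: an approximate Dirac mass at the origin as `e → 0`. -/
def newtonPeak (e : ℝ) (z : E3) : ℝ := 3 * e * (‖z‖ ^ 2 + e) ^ (-(5 / 2) : ℝ)

variable {e : ℝ} {z : E3}

theorem hasDerivAt_add_const_rpow {t : ℝ} (h : 0 < t + e) (p : ℝ) :
    HasDerivAt (fun s : ℝ => (s + e) ^ p) (p * (t + e) ^ (p - 1)) t := by
  simpa using ((hasDerivAt_id t).add_const e).rpow_const (p := p) (Or.inl h.ne')

theorem contDiffAt_newtonKernel {n : WithTop ℕ∞} (h : 0 < ‖z‖ ^ 2 + e) :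
    ContDiffAt ℝ n (newtonKernel e) z :=
  ((contDiff_norm_sq ℝ).contDiffAt.add contDiffAt_const).rpow_const_of_ne h.ne'

theorem hasFDerivAt_newtonKernel (h : 0 < ‖z‖ ^ 2 + e) :
    HasFDerivAt (newtonKernel e) (-(‖z‖ ^ 2 + e) ^ (-(3 / 2) : ℝ) • innerSL ℝ z) z := by
  have hcomp := (hasDerivAt_add_const_rpow h (-(1 / 2))).comp_hasFDerivAt z
    (hasStrictFDerivAt_norm_sq z).hasFDerivAt
  convert! hcomp using 1
  rw [show (-(1 / 2) - 1 : ℝ) = -(3 / 2) by norm_num]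
  module

theorem lap_newtonKernel (h : 0 < ‖z‖ ^ 2 + e) :
    lap (newtonKernel e) z = -newtonPeak e z := by
  have hpos : ∀ᶠ t in nhds (‖z‖ ^ 2), 0 < t + e :=
    (continuous_id.add continuous_const).continuousAt.eventually (lt_mem_nhds h)
  have hlap := lap_comp_norm_sq (x := z) (hpos.mono fun t ht => hasDerivAt_add_const_rpow ht _)
    ((hasDerivAt_add_const_rpow h (-(1 / 2) - 1)).const_mul _)
    ((contDiffAt_id.add contDiffAt_const).rpow_const_of_ne (p := -(1 / 2)) h.ne')
  have hpow : (‖z‖ ^ 2 + e) ^ (-(3 / 2) : ℝ) =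
      (‖z‖ ^ 2 + e) * (‖z‖ ^ 2 + e) ^ (-(5 / 2) : ℝ) := by
    rw [← Real.rpow_one_add' h.le (by norm_num)]
    norm_num
  unfold newtonKernel newtonPeak
  rw [hlap, show (-(1 / 2) - 1 : ℝ) = -(3 / 2) by norm_num, hpow,
    show (-(3 / 2) - 1 : ℝ) = -(5 / 2) by norm_num]
  ring

theorem norm_sq_add_rpow_le (he : 0 ≤ e) (hz : z ≠ 0) {p : ℝ} (hp : p ≤ 0) :
    (‖z‖ ^ 2 + e) ^ p ≤ ‖z‖ ^ (2 * p) := by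
  have hz' : 0 < ‖z‖ := norm_pos_iff.2 hz
  rw [Real.rpow_mul hz'.le, Real.rpow_two]
  exact Real.rpow_le_rpow_of_nonpos (by positivity) (by linarith) hp

theorem abs_newtonKernel_le (he : 0 ≤ e) (hz : z ≠ 0) : |newtonKernel e z| ≤ ‖z‖ ^ (-1 : ℝ) := by
  rw [newtonKernel, abs_of_nonneg (by positivity)]
  convert! norm_sq_add_rpow_le he hz (p := -(1 / 2)) (by norm_num) using 2
  norm_num

theorem norm_sq_add_rpow_mul_norm_le (he : 0 ≤ e) (hz : z ≠ 0) :
    (‖z‖ ^ 2 + e) ^ (-(3 / 2) : ℝ) * ‖z‖ ≤ ‖z‖ ^ (-2 : ℝ) := by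
  refine (mul_le_mul_of_nonneg_right (norm_sq_add_rpow_le he hz (by norm_num))
    (norm_nonneg z)).trans_eq ?_
  rw [← Real.rpow_add_one (norm_ne_zero_iff.2 hz)]
  norm_num

theorem measurable_newtonKernel (e : ℝ) : Measurable (newtonKernel e) := by
  unfold newtonKernel
  fun_prop

theorem tendsto_norm_sq_add_rpow (hz : z ≠ 0) (p : ℝ) {ι : Type*} {l : Filter ι} {e : ι → ℝ}
    (he : Tendsto e l (nhds 0)) :
    Tendsto (fun n => (‖z‖ ^ 2 + e n) ^ p) l (nhds ((‖z‖ ^ 2 + 0) ^ p)) := by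
  have := norm_pos_iff.2 hz
  exact (tendsto_const_nhds.add he).rpow_const (Or.inl (by positivity))

end NewtonKernel

section TruncatedPower

/-- The function `C |z| ^ p` on the closed ball of radius `R`, extended by zero. -/
def ballPow (R C p : ℝ) : E3 → ℝ := (closedBall (0 : E3) R).indicator fun z => C * ‖z‖ ^ p

variable {R C p : ℝ} {z : E3}

theorem integrableOn_closedBall_norm_rpow (hp : -3 < p) (R : ℝ) :
    IntegrableOn (fun z : E3 => ‖z‖ ^ p) (closedBall 0 R) := by
  suffices h : IntegrableOn (fun z : E3 => ‖z‖ ^ p) (ball 0 (R + 1)) from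
    h.mono_set (closedBall_subset_ball (by linarith))
  rw [integrableOn_fun_norm_addHaar volume (f := fun t : ℝ => t ^ p)]
  have hradial : IntegrableOn (fun t : ℝ => t ^ (p + 2)) (Ioo 0 (R + 1)) := by
    by_cases hR : 0 < R + 1
    · exact (intervalIntegral.integrableOn_Ioo_rpow_iff hR).2 (by linarith)
    · simp [Ioo_eq_empty hR]
  refine hradial.congr_fun (fun t ht => ?_) measurableSet_Ioo
  simp [Real.rpow_add ht.1, mul_comm]

theorem integrable_ballPow (hp : -3 < p) : Integrable (ballPow R C p) := by
  rw [ballPow, integrable_indicator_iff measurableSet_closedBall]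
  exact (integrableOn_closedBall_norm_rpow hp R).const_mul C

theorem mem_closedBall_of_ballPow_ne_zero (h : ballPow R C p z ≠ 0) : z ∈ closedBall (0 : E3) R :=
  Set.mem_of_indicator_ne_zero h

theorem abs_le_ballPow {a : ℝ} (hin : ‖z‖ ≤ R → |a| ≤ C * ‖z‖ ^ p) (hout : R < ‖z‖ → a = 0) :
    |a| ≤ ballPow R C p z := by
  by_cases h : z ∈ closedBall (0 : E3) R
  · simpa only [ballPow, indicator_of_mem h] using hin (by simpa using h)
  · simp [ballPow, indicator_of_notMem h, hout (by simpa using h)]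

end TruncatedPower

section Parametrix

variable (η : ContDiffBump (0 : E3)) {e : ℝ} {z : E3}

/-- The Newton kernel multiplied by a cutoff: a compactly supported parametrix of `lap`. -/
def parametrix (e : ℝ) (z : E3) : ℝ := η z * newtonKernel e z

/-- The part of the Laplacian of `parametrix η e` in which derivatives fall on the cutoff. -/
def parametrixRemainder (e : ℝ) (z : E3) : ℝ :=
  lap η z * newtonKernel e z - 2 * (fderiv ℝ η z z * (‖z‖ ^ 2 + e) ^ (-(3 / 2) : ℝ))

theorem contDiffAt_parametrix {n : ℕ∞} (h : 0 < ‖z‖ ^ 2 + e) :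
    ContDiffAt ℝ n (parametrix η e) z :=
  η.contDiff.contDiffAt.mul (contDiffAt_newtonKernel h)

theorem contDiff_parametrix {n : ℕ∞} (he : 0 < e) : ContDiff ℝ n (parametrix η e) :=
  contDiff_iff_contDiffAt.2 fun _ => contDiffAt_parametrix η (by positivity)

theorem hasCompactSupport_parametrix (e : ℝ) : HasCompactSupport (parametrix η e) :=
  η.hasCompactSupport.mul_right

theorem sum_pderiv_mul_coord (h : E3 → ℝ) (z : E3) :
    ∑ i, pderiv i h z * z i = fderiv ℝ h z z := by
  have hz : z = ∑ i, z i • stdVec i := by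
    ext j
    simp [Finset.sum_apply, Pi.single_apply]
  rw [(congrArg (fderiv ℝ h z) hz).trans (map_sum _ _ _)]
  simp [pderiv, mul_comm]

theorem lap_parametrix (h : 0 < ‖z‖ ^ 2 + e) : lap (parametrix η e) z =
    parametrixRemainder η e z - newtonPeak e z * η z := by
  have hpderiv (i : Fin 3) :
      pderiv i (newtonKernel e) z = -((‖z‖ ^ 2 + e) ^ (-(3 / 2) : ℝ)) * z i := by
    simp [pderiv, (hasFDerivAt_newtonKernel h).fderiv, EuclideanSpace.inner_single_right]
  unfold parametrix
  rw [lap_mul (η.contDiff (n := 2)).contDiffAt (contDiffAt_newtonKernel h), parametrixRemainder,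
    lap_newtonKernel h, ← sum_pderiv_mul_coord, Finset.sum_mul]
  simp only [hpderiv, Fin.sum_univ_three]
  ring

theorem fderiv_parametrix (h : 0 < ‖z‖ ^ 2 + e) : fderiv ℝ (parametrix η e) z =
    η z • (-(‖z‖ ^ 2 + e) ^ (-(3 / 2) : ℝ) • innerSL ℝ z) + newtonKernel e z • fderiv ℝ η z :=
  (((η.contDiff (n := 1)).differentiable one_ne_zero z).hasFDerivAt.mul
    (hasFDerivAt_newtonKernel h)).fderiv

theorem contDiff_parametrixRemainder (he : 0 ≤ e) :
    ContDiff ℝ (⊤ : ℕ∞) (parametrixRemainder η e) := by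
  rw [contDiff_iff_contDiffAt]
  intro z
  by_cases h : ‖z‖ < η.rIn
  · have hzero : parametrixRemainder η e =ᶠ[nhds z] fun _ => 0 := by
      filter_upwards [isOpen_ball.mem_nhds (mem_ball_zero_iff.2 h)] with y hy
      have hone : η =ᶠ[nhds y] fun _ => (1 : ℝ) := η.eventuallyEq_one_of_mem_ball hy
      simp [parametrixRemainder, lap_congr hone, hone.fderiv_eq, lap_const]
    exact contDiffAt_const.congr_of_eventuallyEq hzero
  · have hz : 0 < ‖z‖ ^ 2 + e := by
      have := η.rIn_pos.trans_le (not_lt.1 h)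
      positivity
    have hdη : ContDiff ℝ (⊤ : ℕ∞) fun z => fderiv ℝ η z z :=
      ((η.contDiff (n := (⊤ : ℕ∞))).fderiv_right (by simp)).clm_apply contDiff_id
    exact ((contDiff_lap η.contDiff).contDiffAt.mul (contDiffAt_newtonKernel hz)).sub
      (contDiffAt_const.mul (hdη.contDiffAt.mul
        (((contDiff_norm_sq ℝ).contDiffAt.add contDiffAt_const).rpow_const_of_ne hz.ne')))

theorem notMem_tsupport_of_rOut_lt (h : η.rOut < ‖z‖) : z ∉ tsupport η := by
  simpa [η.tsupport_eq] using h

theorem parametrix_eq_zero (e : ℝ) (h : η.rOut < ‖z‖) : parametrix η e z = 0 := by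
  simp [parametrix, image_eq_zero_of_notMem_tsupport (notMem_tsupport_of_rOut_lt η h)]

theorem parametrixRemainder_eq_zero (e : ℝ) (h : η.rOut < ‖z‖) :
    parametrixRemainder η e z = 0 := by
  have hz := notMem_tsupport_of_rOut_lt η h
  simp [parametrixRemainder, fderiv_of_notMem_tsupport (𝕜 := ℝ) hz,
    image_eq_zero_of_notMem_tsupport fun h => hz (tsupport_lap_subset η h)]

theorem abs_parametrix_le (he : 0 ≤ e) (hz : z ≠ 0) :
    |parametrix η e z| ≤ ballPow η.rOut 1 (-1) z := by
  refine abs_le_ballPow (fun _ => ?_) (parametrix_eq_zero η e)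
  rw [parametrix, abs_mul, abs_of_nonneg η.nonneg]
  exact mul_le_mul η.le_one (abs_newtonKernel_le he hz) (abs_nonneg _) zero_le_one

theorem exists_norm_fderiv_le : ∃ D, 0 ≤ D ∧ ∀ z, ‖fderiv ℝ η z‖ ≤ D := by
  obtain ⟨D, hD⟩ := (η.hasCompactSupport.fderiv (𝕜 := ℝ)).exists_bound_of_continuous
    ((η.contDiff (n := 1)).continuous_fderiv one_ne_zero)
  exact ⟨D, (norm_nonneg _).trans (hD 0), hD⟩

theorem abs_newtonKernel_le_of_norm_le (he : 0 ≤ e) (hz : z ≠ 0) {R : ℝ} (hR : ‖z‖ ≤ R) :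
    |newtonKernel e z| ≤ R * ‖z‖ ^ (-2 : ℝ) := by
  refine (abs_newtonKernel_le he hz).trans ?_
  calc ‖z‖ ^ (-1 : ℝ) = ‖z‖ * ‖z‖ ^ (-2 : ℝ) := by
        rw [← Real.rpow_one_add' (norm_nonneg z) (by norm_num)]
        norm_num
    _ ≤ R * ‖z‖ ^ (-2 : ℝ) := by gcongr

theorem exists_norm_fderiv_parametrix_le : ∃ C, ∀ e ≥ 0, ∀ z : E3, z ≠ 0 →
    ‖fderiv ℝ (parametrix η e) z‖ ≤ ballPow η.rOut C (-2) z := by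
  obtain ⟨D, _, hD⟩ := exists_norm_fderiv_le η
  refine ⟨1 + η.rOut * D, fun e he z hz => ?_⟩
  rw [← abs_norm]
  refine abs_le_ballPow (fun hzR => ?_) fun h => ?_
  all_goals
    have := norm_pos_iff.2 hz
    rw [fderiv_parametrix η (by positivity)]
  · rw [abs_norm, add_mul]
    refine (norm_add_le _ _).trans (add_le_add ?_ ?_)
    · rw [norm_smul, norm_smul, norm_neg, innerSL_apply_norm, Real.norm_of_nonneg η.nonneg,
        Real.norm_of_nonneg (by positivity)]
      exact mul_le_mul η.le_one (norm_sq_add_rpow_mul_norm_le he hz) (by positivity) zero_le_one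
    · rw [norm_smul, mul_right_comm]
      exact mul_le_mul (abs_newtonKernel_le_of_norm_le he hz hzR) (hD z) (norm_nonneg _)
        (by have := η.rOut_pos; positivity)
  · have hzη := notMem_tsupport_of_rOut_lt η h
    simp [fderiv_of_notMem_tsupport (𝕜 := ℝ) hzη, image_eq_zero_of_notMem_tsupport hzη]

theorem exists_abs_parametrixRemainder_le : ∃ C, ∀ e ≥ 0, ∀ z : E3, z ≠ 0 →
    |parametrixRemainder η e z| ≤ ballPow η.rOut C (-2) z := by
  obtain ⟨D, hD0, hD⟩ := exists_norm_fderiv_le η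
  obtain ⟨L, hL⟩ := (η.hasCompactSupport.mono'
    (subset_closure.trans (tsupport_lap_subset η))).exists_bound_of_continuous
    (contDiff_lap η.contDiff).continuous
  refine ⟨L * η.rOut + 2 * D, fun e he z hz =>
    abs_le_ballPow (fun hzR => ?_) (parametrixRemainder_eq_zero η e)⟩
  rw [parametrixRemainder, add_mul]
  refine (abs_sub _ _).trans (add_le_add ?_ ?_)
  · rw [abs_mul, mul_assoc]
    exact mul_le_mul (hL z) (abs_newtonKernel_le_of_norm_le he hz hzR) (abs_nonneg _)
      ((norm_nonneg _).trans (hL 0))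
  · rw [abs_mul, abs_of_pos two_pos, mul_assoc, abs_mul, abs_of_nonneg (a := (_ : ℝ) ^ (_ : ℝ))
      (by positivity)]
    refine mul_le_mul_of_nonneg_left ?_ zero_le_two
    calc |fderiv ℝ η z z| * (‖z‖ ^ 2 + e) ^ (-(3 / 2) : ℝ)
        ≤ (D * ‖z‖) * (‖z‖ ^ 2 + e) ^ (-(3 / 2) : ℝ) := by
          gcongr
          exact (fderiv ℝ η z).le_of_opNorm_le (hD z) z
      _ = D * ((‖z‖ ^ 2 + e) ^ (-(3 / 2) : ℝ) * ‖z‖) := by ring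
      _ ≤ D * ‖z‖ ^ (-2 : ℝ) := by
          gcongr
          exact norm_sq_add_rpow_mul_norm_le he hz

theorem measurable_parametrix (e : ℝ) : Measurable (parametrix η e) :=
  η.continuous.measurable.mul (measurable_newtonKernel e)

theorem measurable_parametrixRemainder (e : ℝ) : Measurable (parametrixRemainder η e) := by
  have hdη : Continuous fun z => fderiv ℝ η z z :=
    ((η.contDiff (n := 1)).continuous_fderiv one_ne_zero).clm_apply continuous_id
  exact ((contDiff_lap η.contDiff).continuous.measurable.mul (measurable_newtonKernel e)).sub
    (measurable_const.mul (hdη.measurable.mul (by fun_prop)))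

variable {ι : Type*} {l : Filter ι} {e : ι → ℝ}

theorem tendsto_parametrix (hz : z ≠ 0) (he : Tendsto e l (nhds 0)) :
    Tendsto (fun n => parametrix η (e n) z) l (nhds (parametrix η 0 z)) :=
  (tendsto_norm_sq_add_rpow hz _ he).const_mul _

theorem tendsto_fderiv_parametrix (hz : z ≠ 0) (he : Tendsto e l (nhds 0))
    (he0 : ∀ n, 0 ≤ e n) :
    Tendsto (fun n => fderiv ℝ (parametrix η (e n)) z) l (nhds (fderiv ℝ (parametrix η 0) z)) := by
  have := norm_pos_iff.2 hz
  rw [fderiv_parametrix η (by positivity)]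
  refine Tendsto.congr (fun n => (fderiv_parametrix η (by have := he0 n; positivity)).symm) ?_
  exact (((tendsto_norm_sq_add_rpow hz _ he).neg.smul_const _).const_smul _).add
    ((tendsto_norm_sq_add_rpow hz _ he).smul_const _)

theorem tendsto_parametrixRemainder (hz : z ≠ 0) (he : Tendsto e l (nhds 0)) :
    Tendsto (fun n => parametrixRemainder η (e n) z) l (nhds (parametrixRemainder η 0 z)) :=
  ((tendsto_norm_sq_add_rpow hz _ he).const_mul _).sub (Tendsto.const_mul _
    ((tendsto_norm_sq_add_rpow hz _ he).const_mul _))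

end Parametrix

section Domination

variable {α : Type*} [MeasurableSpace α] {μ : Measure α} {b w : α → ℝ} {M : ℝ}

theorem norm_mul_le_mul_abs_of_ne_zero {a b w M : ℝ} (hab : |a| ≤ b) (hw : b ≠ 0 → |w| ≤ M) :
    ‖a * w‖ ≤ b * |M| := by
  rw [norm_mul]
  rcases eq_or_ne b 0 with rfl | hb
  · simp [abs_nonpos_iff.1 hab]
  · exact mul_le_mul hab ((hw hb).trans (le_abs_self M)) (abs_nonneg w) ((abs_nonneg a).trans hab)

theorem integrable_mul_of_dominated {k : α → ℝ} (hb : Integrable b μ)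
    (hk : AEStronglyMeasurable k μ) (hkb : ∀ᵐ z ∂μ, |k z| ≤ b z)
    (hw : AEStronglyMeasurable w μ) (hwM : ∀ z, b z ≠ 0 → |w z| ≤ M) :
    Integrable (fun z => k z * w z) μ :=
  (hb.mul_const |M|).mono' (hk.mul hw) <|
    hkb.mono fun z hz => norm_mul_le_mul_abs_of_ne_zero hz (hwM z)

theorem tendsto_integral_mul_of_dominated {ι : Type*} {l : Filter ι} [l.IsCountablyGenerated]
    {k : ι → α → ℝ} {k₀ : α → ℝ} (hb : Integrable b μ)
    (hk : ∀ n, AEStronglyMeasurable (k n) μ) (hkb : ∀ n, ∀ᵐ z ∂μ, |k n z| ≤ b z)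
    (hlim : ∀ᵐ z ∂μ, Tendsto (fun n => k n z) l (nhds (k₀ z)))
    (hw : AEStronglyMeasurable w μ) (hwM : ∀ z, b z ≠ 0 → |w z| ≤ M) :
    Tendsto (fun n => ∫ z, k n z * w z ∂μ) l (nhds (∫ z, k₀ z * w z ∂μ)) :=
  tendsto_integral_filter_of_dominated_convergence (fun z => b z * |M|)
    (.of_forall fun n => (hk n).mul hw)
    (.of_forall fun n => (hkb n).mono fun z hz => norm_mul_le_mul_abs_of_ne_zero hz (hwM z))
    (hb.mul_const _) (hlim.mono fun z hz => hz.mul_const (w z))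

end Domination

section Peak

variable {e : ℝ} {z : E3}

/-- The total mass of `newtonPeak e`, that is `4 * π`; only its positivity matters here. -/
def newtonConst : ℝ := ∫ z : E3, newtonPeak 1 z

theorem newtonPeak_nonneg (he : 0 ≤ e) (z : E3) : 0 ≤ newtonPeak e z := by
  unfold newtonPeak
  positivity

theorem newtonPeak_pos (he : 0 < e) (z : E3) : 0 < newtonPeak e z := by
  unfold newtonPeak
  positivity

theorem measurable_newtonPeak (e : ℝ) : Measurable (newtonPeak e) := by
  unfold newtonPeak
  fun_prop

theorem integrable_newtonPeak_one : Integrable (newtonPeak 1) := by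
  have h := (integrable_rpow_neg_one_add_norm_sq (E := E3) (μ := volume) (r := 5)
    (by simp; norm_num)).const_mul 3
  refine h.congr (.of_forall fun z => ?_)
  simp [newtonPeak, add_comm, neg_div]

theorem newtonConst_pos : 0 < newtonConst := by
  rw [newtonConst, integral_pos_iff_support_of_nonneg (newtonPeak_nonneg zero_le_one)
    integrable_newtonPeak_one,
    show Function.support (newtonPeak 1) = univ from
      Function.support_eq_univ fun z => (newtonPeak_pos one_pos z).ne']
  simp

theorem newtonPeak_le (he : 0 < e) (z : E3) :
    newtonPeak e z ≤ 3 * e * e ^ (-(5 / 2) : ℝ) := by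
  have hle : e ≤ ‖z‖ ^ 2 + e := by linarith [sq_nonneg ‖z‖]
  exact mul_le_mul_of_nonneg_left (Real.rpow_le_rpow_of_nonpos he hle (by norm_num))
    (by positivity)

theorem newtonPeak_smul {c : ℝ} (hc : 0 < c) (z : E3) :
    c ^ 3 * newtonPeak 1 (c • z) = newtonPeak (c ^ 2)⁻¹ z := by
  have hscale : ‖c • z‖ ^ 2 + 1 = c ^ 2 * (‖z‖ ^ 2 + (c ^ 2)⁻¹) := by
    rw [norm_smul, mul_pow, Real.norm_eq_abs, sq_abs]
    field_simp
  have hpow : (c ^ 2 : ℝ) ^ (-(5 / 2) : ℝ) = (c ^ 5)⁻¹ := by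
    rw [← Real.rpow_natCast, ← Real.rpow_mul hc.le, ← Real.rpow_natCast, ← Real.rpow_neg hc.le]
    norm_num
  rw [newtonPeak, newtonPeak, hscale, Real.mul_rpow (by positivity) (by positivity), hpow]
  field_simp

theorem tendsto_norm_pow_mul_newtonPeak :
    Tendsto (fun z : E3 => ‖z‖ ^ 3 * newtonPeak 1 z) (Bornology.cobounded E3) (nhds 0) := by
  have hbound (z : E3) : ‖z‖ ^ 3 * newtonPeak 1 z ≤ 3 * (‖z‖ ^ 2)⁻¹ := by
    rcases eq_or_ne z 0 with rfl | hz
    · simp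
    have hz' := norm_pos_iff.2 hz
    calc ‖z‖ ^ 3 * newtonPeak 1 z ≤ ‖z‖ ^ 3 * (3 * 1 * ‖z‖ ^ (2 * (-(5 / 2)) : ℝ)) := by
          unfold newtonPeak
          gcongr
          exact norm_sq_add_rpow_le zero_le_one hz (by norm_num)
      _ = 3 * (‖z‖ ^ 2)⁻¹ := by
          rw [show (2 * (-(5 / 2)) : ℝ) = -(5 : ℕ) by norm_num, Real.rpow_neg hz'.le,
            Real.rpow_natCast]
          field_simp
  refine squeeze_zero (fun z => mul_nonneg (by positivity) (newtonPeak_nonneg zero_le_one z))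
    hbound ?_
  have hpow := (tendsto_pow_atTop two_ne_zero).comp (tendsto_norm_cobounded_atTop (E := E3))
  simpa using (tendsto_inv_atTop_zero.comp hpow).const_mul 3

theorem tendsto_integral_newtonPeak_mul {g : E3 → ℝ} (hg : Integrable g)
    (hg0 : ContinuousAt g 0) :
    Tendsto (fun c : ℝ => ∫ z, newtonPeak (c ^ 2)⁻¹ z * g z) atTop
      (nhds (newtonConst * g 0)) := by
  have hpeak := tendsto_integral_comp_smul_smul_of_integrable (μ := (volume : Measure E3))
    (φ := fun z => newtonConst⁻¹ * newtonPeak 1 z)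
    (fun z => mul_nonneg (inv_nonneg.2 newtonConst_pos.le) (newtonPeak_nonneg zero_le_one z))
    (by rw [integral_const_mul]; exact inv_mul_cancel₀ newtonConst_pos.ne')
    (by simpa [mul_left_comm] using tendsto_norm_pow_mul_newtonPeak.const_mul newtonConst⁻¹)
    hg hg0
  refine (hpeak.const_mul newtonConst).congr' ?_
  filter_upwards [eventually_gt_atTop 0] with c hc
  rw [← integral_const_mul]
  congr 1 with z
  rw [← newtonPeak_smul hc, finrank_euclideanSpace, Fintype.card_fin, smul_eq_mul]
  field_simp [newtonConst_pos.ne']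

end Peak

open scoped Convolution

section Representation

/-- `u` solves `Δu = f` on the punctured space in the sense of distributions. -/
def IsWeakSolution (u f : E3 → ℝ) : Prop :=
  ∀ φ : E3 → ℝ, ContDiff ℝ 2 φ → HasCompactSupport φ → tsupport φ ⊆ puncturedSpace →
    ∫ x, u x * lap φ x = ∫ x, f x * φ x

/-- A measurable function which is bounded on every compact subset of the punctured space. -/
structure IsLocallyBounded (u : E3 → ℝ) : Prop where
  measurable : Measurable u
  exists_bound : ∀ K : Set E3, IsCompact K → K ⊆ puncturedSpace → ∃ M, ∀ x ∈ K, |u x| ≤ M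

variable {u f : E3 → ℝ} {x : E3} {R C p : ℝ}

theorem IsLocallyBounded.exists_abs_sub_le (hu : IsLocallyBounded u)
    (hball : closedBall x R ⊆ puncturedSpace) :
    ∃ M, ∀ z ∈ closedBall (0 : E3) R, |u (x - z)| ≤ M := by
  obtain ⟨M, hM⟩ := hu.exists_bound _ (isCompact_closedBall x R) hball
  exact ⟨M, fun z hz => hM _ (by simpa [dist_eq_norm] using hz)⟩

theorem IsLocallyBounded.integrable_mul_comp_sub (hu : IsLocallyBounded u)
    (hball : closedBall x R ⊆ puncturedSpace) (hp : -3 < p) {k : E3 → ℝ} (hk : Measurable k)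
    (hkb : ∀ z ≠ 0, |k z| ≤ ballPow R C p z) : Integrable fun z => k z * u (x - z) := by
  obtain ⟨M, hM⟩ := hu.exists_abs_sub_le hball
  exact integrable_mul_of_dominated (integrable_ballPow hp) hk.aestronglyMeasurable
    ((volume.ae_ne 0).mono hkb) (hu.measurable.comp (by fun_prop)).aestronglyMeasurable
    fun z hz => hM z (mem_closedBall_of_ballPow_ne_zero hz)

theorem IsLocallyBounded.tendsto_convolution (hu : IsLocallyBounded u)
    (hball : closedBall x R ⊆ puncturedSpace) (hp : -3 < p) {ι : Type*} {l : Filter ι}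
    [l.IsCountablyGenerated] {k : ι → E3 → ℝ} {k₀ : E3 → ℝ} (hk : ∀ n, Measurable (k n))
    (hkb : ∀ n, ∀ z ≠ 0, |k n z| ≤ ballPow R C p z)
    (hlim : ∀ z ≠ 0, Tendsto (fun n => k n z) l (nhds (k₀ z))) :
    Tendsto (fun n => (k n ⋆ u) x) l (nhds ((k₀ ⋆ u) x)) := by
  obtain ⟨M, hM⟩ := hu.exists_abs_sub_le hball
  exact tendsto_integral_mul_of_dominated (integrable_ballPow hp)
    (fun n => (hk n).aestronglyMeasurable) (fun n => (volume.ae_ne 0).mono (hkb n))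
    ((volume.ae_ne 0).mono hlim) (hu.measurable.comp (by fun_prop)).aestronglyMeasurable
    fun z hz => hM z (mem_closedBall_of_ballPow_ne_zero hz)

theorem fderiv_comp_const_sub {F : Type*} [NormedAddCommGroup F] [NormedSpace ℝ F] (h : E3 → F)
    (x y : E3) : fderiv ℝ (fun y => h (x - y)) y = -fderiv ℝ h (x - y) := by
  have hneg := (ContinuousLinearEquiv.neg ℝ (M := E3)).comp_right_fderiv
    (f := fun w => h (x + w)) (x := y)
  rw [show (fun w => h (x + w)) ∘ ContinuousLinearEquiv.neg ℝ (M := E3) = fun y => h (x - y) by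
    ext y; simp [sub_eq_add_neg]] at hneg
  rw [hneg, fderiv_comp_add_left]
  ext v
  simp [sub_eq_add_neg]

theorem lap_comp_const_sub (h : E3 → ℝ) (x y : E3) :
    lap (fun y => h (x - y)) y = lap h (x - y) := by
  simp only [lap_eq_sum_fderiv, funext (fderiv_comp_const_sub h x), fderiv_fun_neg,
    fderiv_comp_const_sub (fderiv ℝ h), neg_neg]

theorem IsWeakSolution.integral_newtonPeak_mul (huf : IsWeakSolution u f)
    (hu : IsLocallyBounded u) (η : ContDiffBump (0 : E3))
    (hball : closedBall x η.rOut ⊆ puncturedSpace) (hint : Integrable fun z => η z * u (x - z))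
    {e : ℝ} (he : 0 < e) :
    ∫ z, newtonPeak e z * (η z * u (x - z)) =
      (parametrixRemainder η e ⋆ u) x - (parametrix η e ⋆ f) x := by
  have hsupp : Function.support (fun y => parametrix η e (x - y)) ⊆ closedBall x η.rOut := by
    intro y hy
    by_contra h
    exact hy (parametrix_eq_zero η e (by simpa [dist_eq_norm'] using h))
  have hweak := huf (fun y => parametrix η e (x - y))
    ((contDiff_parametrix η (n := 2) he).comp (contDiff_const.sub contDiff_id))
    (.of_support_subset_isCompact (isCompact_closedBall x _) hsupp)
    ((closure_minimal hsupp isClosed_closedBall).trans hball)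
  simp only [lap_comp_const_sub] at hweak
  rw [← integral_sub_left_eq_self _ volume x,
    ← integral_sub_left_eq_self (fun y => f y * _) volume x] at hweak
  simp only [sub_sub_cancel, fun z => lap_parametrix η (e := e) (z := z) (by positivity)] at hweak
  obtain ⟨C, hC⟩ := exists_abs_parametrixRemainder_le η
  have hremainder := hu.integrable_mul_comp_sub hball (by norm_num)
    (measurable_parametrixRemainder η e) (hC e he.le)
  have hpeak : Integrable fun z => newtonPeak e z * (η z * u (x - z)) :=
    hint.bdd_mul (measurable_newtonPeak e).aestronglyMeasurable (.of_forall fun z => by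
      rw [Real.norm_of_nonneg (newtonPeak_nonneg he.le z)]
      exact newtonPeak_le he z)
  simp only [convolution_lsmul, smul_eq_mul, mul_comm (parametrix η e _), ← hweak]
  rw [eq_sub_iff_add_eq, ← integral_add hpeak]
  · congr 1 with z
    ring
  · exact (hremainder.sub hpeak).congr (.of_forall fun z => by simp; ring)

theorem IsWeakSolution.newtonConst_mul_eq (huf : IsWeakSolution u f) (hu : IsLocallyBounded u)
    (hf : IsLocallyBounded f) (η : ContDiffBump (0 : E3))
    (hball : closedBall x η.rOut ⊆ puncturedSpace) (hux : ContinuousAt u x) :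
    newtonConst * u x = (parametrixRemainder η 0 ⋆ u) x - (parametrix η 0 ⋆ f) x := by
  have hint : Integrable fun z => η z * u (x - z) :=
    hu.integrable_mul_comp_sub hball (C := 1) (p := 0) (by norm_num) η.continuous.measurable
      fun z _ => abs_le_ballPow (fun _ => by simpa [abs_of_nonneg η.nonneg] using η.le_one)
        fun h => image_eq_zero_of_notMem_tsupport (notMem_tsupport_of_rOut_lt η h)
  have hpeak := tendsto_integral_newtonPeak_mul hint (by
    refine η.continuous.continuousAt.mul (ContinuousAt.comp (f := fun z => x - z) ?_ (by fun_prop))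
    simpa using hux)
  rw [η.one_of_mem_closedBall (mem_closedBall_self η.rIn_pos.le), sub_zero, one_mul] at hpeak
  have he : Tendsto (fun c : ℝ => (c ^ 2)⁻¹) atTop (nhds 0) :=
    tendsto_inv_atTop_zero.comp (tendsto_pow_atTop two_ne_zero)
  obtain ⟨C, hC⟩ := exists_abs_parametrixRemainder_le η
  have hremainder := hu.tendsto_convolution hball (by norm_num)
    (fun c : ℝ => measurable_parametrixRemainder η (c ^ 2)⁻¹) (fun c => hC _ (by positivity))
    fun z hz => tendsto_parametrixRemainder η hz he
  have hparametrix := hf.tendsto_convolution hball (by norm_num)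
    (fun c : ℝ => measurable_parametrix η (c ^ 2)⁻¹)
    (fun c z hz => abs_parametrix_le η (by positivity) hz)
    fun z hz => tendsto_parametrix η hz he
  refine tendsto_nhds_unique hpeak ((hremainder.sub hparametrix).congr' ?_)
  filter_upwards [eventually_gt_atTop 0] with c hc
  exact (huf.integral_newtonPeak_mul hu η hball hint (by positivity)).symm

end Representation

section ConvolutionRegularity

universe v

variable {G E' F : Type v} {E : Type*} [NormedAddCommGroup G] [MeasurableSpace G]
  [NormedAddCommGroup E] [NormedSpace ℝ E]
  [NormedAddCommGroup E'] [NormedSpace ℝ E'] [NormedAddCommGroup F] [NormedSpace ℝ F]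
  {μ : Measure G} {k₀ : G → E} {h : G → E'} {M : ℝ}

theorem norm_convolution_le {k : G → E} (hk : Integrable k μ) (hM : ∀ x, ‖h x‖ ≤ M)
    (L : E →L[ℝ] E' →L[ℝ] F) (x : G) : ‖(k ⋆[L, μ] h) x‖ ≤ ‖L‖ * M * ∫ z, ‖k z‖ ∂μ := by
  rw [← integral_const_mul]
  refine norm_integral_le_of_norm_le (hk.norm.const_mul _) (.of_forall fun z => ?_)
  calc ‖L (k z) (h (x - z))‖ ≤ ‖L‖ * ‖k z‖ * ‖h (x - z)‖ := L.le_opNorm₂ _ _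
    _ ≤ ‖L‖ * ‖k z‖ * M := by gcongr; exact hM _
    _ = ‖L‖ * M * ‖k z‖ := by ring

variable [BorelSpace G]

theorem convolutionExists_of_bounded {k : G → E} (hk : Integrable k μ)
    (hh : StronglyMeasurable h) (hM : ∀ x, ‖h x‖ ≤ M) (L : E →L[ℝ] E' →L[ℝ] F) :
    ConvolutionExists k h L μ := fun x => by
  have hcomp : StronglyMeasurable fun z => h (x - z) := hh.comp_measurable (by fun_prop)
  refine (hk.norm.const_mul (‖L‖ * M)).mono'
    (L.aestronglyMeasurable_comp₂ hk.aestronglyMeasurable hcomp.aestronglyMeasurable)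
    (.of_forall fun z => ?_)
  calc ‖L (k z) (h (x - z))‖ ≤ ‖L‖ * ‖k z‖ * ‖h (x - z)‖ := L.le_opNorm₂ _ _
    _ ≤ ‖L‖ * ‖k z‖ * M := by gcongr; exact hM _
    _ = ‖L‖ * M * ‖k z‖ := by ring

theorem tendstoUniformly_convolution {ι : Type*} {l : Filter ι} {k : ι → G → E}
    (hk : ∀ n, Integrable (k n) μ) (hk₀ : Integrable k₀ μ)
    (hlim : Tendsto (fun n => ∫ z, ‖(k n - k₀) z‖ ∂μ) l (nhds 0)) (hh : StronglyMeasurable h)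
    (hM : ∀ x, ‖h x‖ ≤ M) (L : E →L[ℝ] E' →L[ℝ] F) :
    TendstoUniformly (fun n => k n ⋆[L, μ] h) (k₀ ⋆[L, μ] h) l := by
  rw [Metric.tendstoUniformly_iff]
  intro ε hε
  have hlim' : Tendsto (fun n => ‖L‖ * M * ∫ z, ‖(k n - k₀) z‖ ∂μ) l (nhds 0) := by
    simpa using hlim.const_mul (‖L‖ * M)
  filter_upwards [hlim'.eventually_lt_const hε] with n hn x
  have hdiff := (convolutionExists_of_bounded ((hk n).sub hk₀) hh hM L).add_distrib
    (convolutionExists_of_bounded hk₀ hh hM L)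
  rw [sub_add_cancel] at hdiff
  rw [dist_comm, dist_eq_norm, hdiff, Pi.add_apply, add_sub_cancel_right]
  exact (norm_convolution_le ((hk n).sub hk₀) hM L x).trans_lt hn

theorem locallyIntegrable_of_bounded {X Y : Type*} [TopologicalSpace X] [MeasurableSpace X]
    [NormedAddCommGroup Y] {h : X → Y} {M : ℝ} {μ : Measure X} [IsLocallyFiniteMeasure μ]
    (hh : StronglyMeasurable h) (hM : ∀ x, ‖h x‖ ≤ M) : LocallyIntegrable h μ :=
  (memLp_top_of_bound hh.aestronglyMeasurable M (.of_forall hM)).locallyIntegrable le_top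

variable [NormedSpace ℝ G]

/-- The Sobolev space `W^{1,1}`, described as the closure of the compactly supported `C¹`
functions; the weak derivative is the `L¹` limit of the classical ones. -/
def MemW11 (k₀ : G → E) (μ : Measure G) : Prop :=
  ∃ (k : ℕ → G → E) (k' : G → G →L[ℝ] E),
    (∀ n, ContDiff ℝ 1 (k n) ∧ HasCompactSupport (k n)) ∧ Integrable k₀ μ ∧ Integrable k' μ ∧
    Tendsto (fun n => ∫ z, ‖(k n - k₀) z‖ ∂μ) atTop (nhds 0) ∧
    Tendsto (fun n => ∫ z, ‖(fderiv ℝ (k n) - k') z‖ ∂μ) atTop (nhds 0)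

variable [IsLocallyFiniteMeasure μ] [SFinite μ] [μ.IsAddLeftInvariant] [μ.IsNegInvariant]

theorem MemW11.contDiff_one_convolution (hk : MemW11 k₀ μ) (hh : StronglyMeasurable h)
    (hM : ∀ x, ‖h x‖ ≤ M) (L : E →L[ℝ] E' →L[ℝ] F) : ContDiff ℝ 1 (k₀ ⋆[L, μ] h) := by
  obtain ⟨k, k', hkn, hk₀, hk', hlim, hlim'⟩ := hk
  have hint n : Integrable (k n) μ := (hkn n).1.continuous.integrable_of_hasCompactSupport (hkn n).2
  have hint' n : Integrable (fderiv ℝ (k n)) μ :=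
    ((hkn n).1.continuous_fderiv one_ne_zero).integrable_of_hasCompactSupport ((hkn n).2.fderiv ℝ)
  have hloc : LocallyIntegrable h μ := locallyIntegrable_of_bounded hh hM
  have hderiv n := (hkn n).2.hasFDerivAt_convolution_left L (hkn n).1 hloc
  have hunif' := tendstoUniformly_convolution hint' hk' hlim' hh hM (L.precompL G)
  have hfinal := hasFDerivAt_of_tendstoUniformly hunif' hderiv fun x =>
    (tendstoUniformly_convolution hint hk₀ hlim hh hM L).tendsto_at x
  refine contDiff_one_iff_fderiv.2 ⟨fun x => (hfinal x).differentiableAt, ?_⟩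
  rw [funext fun x => (hfinal x).fderiv]
  refine hunif'.continuous (.of_forall fun n => ?_)
  rw [← funext fun x => (hderiv n x).fderiv]
  exact ((hkn n).2.contDiff_convolution_left L (hkn n).1 hloc).continuous_fderiv one_ne_zero

theorem MemW11.contDiff_succ_convolution (hk : MemW11 k₀ μ) (n : ℕ) (hh : ContDiff ℝ n h)
    (hc : HasCompactSupport h) (L : E →L[ℝ] E' →L[ℝ] F) :
    ContDiff ℝ (n + 1) (k₀ ⋆[L, μ] h) := by
  have ⟨_, _, _, hk₀, _⟩ := hk
  induction n generalizing E' F with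
  | zero =>
    obtain ⟨M, hM⟩ := hc.exists_bound_of_continuous hh.continuous
    simpa using hk.contDiff_one_convolution
      (hh.continuous.stronglyMeasurable_of_hasCompactSupport hc) hM L
  | succ n ih =>
    have hderiv := hc.hasFDerivAt_convolution_right L hk₀.locallyIntegrable
      (hh.of_le (by exact_mod_cast Nat.le_add_left 1 n))
    refine contDiff_succ_iff_fderiv.2
      ⟨fun x => (hderiv x).differentiableAt, fun h => absurd h (by simp), ?_⟩
    rw [funext fun x => (hderiv x).fderiv]
    exact_mod_cast ih (hh.fderiv_right (by simp)) (hc.fderiv ℝ) _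

end ConvolutionRegularity

section Bootstrap

variable {u f : E3 → ℝ} {x₀ : E3}

theorem tendsto_integral_norm_sub_of_dominated {α E : Type*} [MeasurableSpace α]
    {μ : Measure α} [NormedAddCommGroup E] {k : ℕ → α → E} {k₀ : α → E} {b : α → ℝ}
    (hb : Integrable b μ) (hk : ∀ n, AEStronglyMeasurable (k n) μ)
    (hk₀ : AEStronglyMeasurable k₀ μ) (hkb : ∀ n, ∀ᵐ z ∂μ, ‖k n z‖ ≤ b z)
    (hk₀b : ∀ᵐ z ∂μ, ‖k₀ z‖ ≤ b z)
    (hlim : ∀ᵐ z ∂μ, Tendsto (fun n => k n z) atTop (nhds (k₀ z))) :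
    Tendsto (fun n => ∫ z, ‖(k n - k₀) z‖ ∂μ) atTop (nhds 0) := by
  have h := tendsto_integral_of_dominated_convergence (bound := fun z => b z + b z)
    (f := fun _ => (0 : ℝ)) (fun n => ((hk n).sub hk₀).norm) (hb.add hb)
    (fun n => by
      filter_upwards [hkb n, hk₀b] with z hz hz₀
      rw [norm_norm]
      exact (norm_sub_le _ _).trans (add_le_add hz hz₀))
    (hlim.mono fun z hz => tendsto_iff_norm_sub_tendsto_zero.1 hz)
  simpa using h

theorem memW11_parametrix (η : ContDiffBump (0 : E3)) : MemW11 (parametrix η 0) volume := by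
  have he (n : ℕ) : (0 : ℝ) < 1 / (n + 1) := by positivity
  have he0 : Tendsto (fun n : ℕ => (1 : ℝ) / (n + 1)) atTop (nhds 0) :=
    tendsto_one_div_add_atTop_nhds_zero_nat
  have hmeas e := (measurable_parametrix η e).aestronglyMeasurable (μ := volume)
  have hmeas' e := (measurable_fderiv ℝ (parametrix η e)).aestronglyMeasurable (μ := volume)
  have hae := volume.ae_ne (0 : E3)
  have hbound e (he : 0 ≤ e) : ∀ᵐ z : E3, ‖parametrix η e z‖ ≤ ballPow η.rOut 1 (-1) z :=
    hae.mono fun z hz => abs_parametrix_le η he hz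
  obtain ⟨C, hC⟩ := exists_norm_fderiv_parametrix_le η
  have hbound' e (he : 0 ≤ e) := hae.mono (hC e he)
  have hb : Integrable (ballPow η.rOut 1 (-1)) := integrable_ballPow (by norm_num)
  have hb' : Integrable (ballPow η.rOut C (-2)) := integrable_ballPow (by norm_num)
  exact ⟨fun n => parametrix η (1 / (n + 1)), fderiv ℝ (parametrix η 0),
    fun n => ⟨contDiff_parametrix η (he n), hasCompactSupport_parametrix η _⟩,
    hb.mono' (hmeas 0) (hbound 0 le_rfl), hb'.mono' (hmeas' 0) (hbound' 0 le_rfl),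
    tendsto_integral_norm_sub_of_dominated hb (fun n => hmeas _) (hmeas 0)
      (fun n => hbound _ (he n).le) (hbound 0 le_rfl)
      (hae.mono fun z hz => tendsto_parametrix η hz he0),
    tendsto_integral_norm_sub_of_dominated hb' (fun n => hmeas' _) (hmeas' 0)
      (fun n => hbound' _ (he n).le) (hbound' 0 le_rfl)
      (hae.mono fun z hz => tendsto_fderiv_parametrix η hz he0 fun n => (he n).le)⟩

/-- The integral form of `Δu = f`: `u` is recovered from `u` and `f` near `x` by convolution with
the parametrix and its smooth remainder. Unlike the differential equation, it is stable under
locally bounded pointwise limits. -/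
def HasNewtonRepresentation (u f : E3 → ℝ) : Prop :=
  ∀ (x : E3) (η : ContDiffBump (0 : E3)), closedBall x η.rOut ⊆ puncturedSpace →
    newtonConst * u x = (parametrixRemainder η 0 ⋆ u) x - (parametrix η 0 ⋆ f) x

theorem convolution_mul_eq_of_eqOn_one {k χ h : E3 → ℝ} {R : ℝ} {x : E3}
    (hk : ∀ z, R < ‖z‖ → k z = 0) (hχ : ∀ y ∈ closedBall x R, χ y = 1) :
    (k ⋆ fun y => χ y * h y) x = (k ⋆ h) x := by
  simp only [convolution_lsmul]
  congr 1 with z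
  by_cases hz : z ∈ closedBall 0 R
  · rw [hχ _ (by simpa [dist_eq_norm] using hz), one_mul]
  · simp [hk z (by simpa using hz)]

theorem HasNewtonRepresentation.eventually_eq_convolution (h : HasNewtonRepresentation u f)
    (χ : ContDiffBump x₀) (hχ : closedBall x₀ χ.rOut ⊆ puncturedSpace) :
    ∃ η : ContDiffBump (0 : E3), u =ᶠ[nhds x₀] fun x => newtonConst⁻¹ *
      ((parametrixRemainder η 0 ⋆ fun y => χ y * u y) x -
        (parametrix η 0 ⋆ fun y => χ y * f y) x) := by
  have hr := χ.rIn_pos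
  let η : ContDiffBump (0 : E3) := ⟨χ.rIn / 4, χ.rIn / 2, by positivity, by linarith⟩
  refine ⟨η, ?_⟩
  filter_upwards [ball_mem_nhds x₀ (half_pos hr)] with x hx
  have hsub : closedBall x η.rOut ⊆ closedBall x₀ χ.rIn :=
    closedBall_subset_closedBall' (by
      rw [mem_ball] at hx
      change χ.rIn / 2 + _ ≤ _
      linarith)
  have hone y (hy : y ∈ closedBall x η.rOut) : χ y = 1 := χ.one_of_mem_closedBall (hsub hy)
  rw [convolution_mul_eq_of_eqOn_one (fun _ => parametrixRemainder_eq_zero η 0) hone,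
    convolution_mul_eq_of_eqOn_one (fun _ => parametrix_eq_zero η 0) hone,
    eq_inv_mul_iff_mul_eq₀ newtonConst_pos.ne',
    h x η (hsub.trans ((closedBall_subset_closedBall χ.rIn_lt_rOut.le).trans hχ))]

theorem exists_contDiffBump_closedBall_subset {U : Set E3} (hU : IsOpen U) (hx : x₀ ∈ U) :
    ∃ χ : ContDiffBump x₀, closedBall x₀ χ.rOut ⊆ U := by
  obtain ⟨r, hr, hsub⟩ := nhds_basis_closedBall.mem_iff.1 (hU.mem_nhds hx)
  exact ⟨⟨r / 2, r, half_pos hr, half_lt_self hr⟩, hsub⟩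

theorem IsLocallyBounded.bump_mul (hu : IsLocallyBounded u) (χ : ContDiffBump x₀)
    (hχ : closedBall x₀ χ.rOut ⊆ puncturedSpace) :
    StronglyMeasurable (fun y => χ y * u y) ∧ ∃ M, ∀ y, ‖χ y * u y‖ ≤ M := by
  obtain ⟨M, hM⟩ := hu.exists_bound _ (isCompact_closedBall x₀ χ.rOut) hχ
  refine ⟨(χ.continuous.measurable.mul hu.measurable).stronglyMeasurable, |M|, fun y => ?_⟩
  rw [norm_mul, Real.norm_of_nonneg χ.nonneg]
  by_cases hy : y ∈ closedBall x₀ χ.rOut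
  · exact (mul_le_of_le_one_left (norm_nonneg _) χ.le_one).trans ((hM y hy).trans (le_abs_self M))
  · rw [χ.zero_of_le_dist (not_le.1 hy).le, zero_mul]
    exact abs_nonneg M

theorem contDiff_parametrixRemainder_convolution (η : ContDiffBump (0 : E3)) (n : ℕ)
    {h : E3 → ℝ} {M : ℝ} (hh : StronglyMeasurable h) (hM : ∀ x, ‖h x‖ ≤ M) :
    ContDiff ℝ n (parametrixRemainder η 0 ⋆ h) := by
  refine HasCompactSupport.contDiff_convolution_left (n := (n : ℕ∞)) _
    (.intro (isCompact_closedBall 0 η.rOut) fun z hz =>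
      parametrixRemainder_eq_zero η 0 (by simpa using hz))
    ((contDiff_parametrixRemainder η le_rfl).of_le ?_) (locallyIntegrable_of_bounded hh hM)
  exact_mod_cast le_top (a := (n : ℕ∞))

theorem HasNewtonRepresentation.contDiffAt_one (h : HasNewtonRepresentation u f)
    (hu : IsLocallyBounded u) (hf : IsLocallyBounded f) (hx₀ : x₀ ∈ puncturedSpace) :
    ContDiffAt ℝ 1 u x₀ := by
  obtain ⟨χ, hχ⟩ := exists_contDiffBump_closedBall_subset isOpen_puncturedSpace hx₀
  obtain ⟨η, heq⟩ := h.eventually_eq_convolution χ hχ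
  obtain ⟨hum, M, huM⟩ := hu.bump_mul χ hχ
  obtain ⟨hfm, N, hfN⟩ := hf.bump_mul χ hχ
  have hremainder := contDiff_parametrixRemainder_convolution η 1 hum huM
  have hparametrix := (memW11_parametrix η).contDiff_one_convolution hfm hfN (.lsmul ℝ ℝ)
  exact ((contDiff_const.mul ((by exact_mod_cast hremainder :
    ContDiff ℝ 1 _).sub hparametrix)).contDiffAt).congr_of_eventuallyEq heq

theorem HasNewtonRepresentation.contDiffAt_succ (h : HasNewtonRepresentation u f)
    (hu : IsLocallyBounded u) {n : ℕ} (hf : ∀ x ∈ puncturedSpace, ContDiffAt ℝ n f x)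
    (hx₀ : x₀ ∈ puncturedSpace) : ContDiffAt ℝ (n + 1) u x₀ := by
  obtain ⟨χ, hχ⟩ := exists_contDiffBump_closedBall_subset isOpen_puncturedSpace hx₀
  obtain ⟨η, heq⟩ := h.eventually_eq_convolution χ hχ
  obtain ⟨hum, M, huM⟩ := hu.bump_mul χ hχ
  have hcut : ContDiff ℝ n fun y => χ y * f y :=
    contMDiff_iff_contDiff.1 <| contMDiff_of_tsupport fun y hy => (χ.contDiffAt.mul
      (hf y (hχ (χ.tsupport_eq ▸ tsupport_mul_subset_left hy)))).contMDiffAt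
  have hremainder := contDiff_parametrixRemainder_convolution η (n + 1) hum huM
  have hparametrix := (memW11_parametrix η).contDiff_succ_convolution n hcut
    χ.hasCompactSupport.mul_right (.lsmul ℝ ℝ)
  exact ((contDiff_const.mul ((by exact_mod_cast hremainder :
    ContDiff ℝ (n + 1) _).sub hparametrix)).contDiffAt).congr_of_eventuallyEq heq

end Bootstrap

section ExtrinsicCurvature

/-- `r⁶K²`, written as a sum of squares so that its sign and its zeros can be read off. -/
def scaledKsq (A J : ℝ) (P x : E3) : ℝ :=
  6 * (A + ⟪P, x⟫) ^ 2
    + 9 / 2 * ((2 * J * (x 0 / ‖x‖) + P 1 * ‖x‖) ^ 2 + (2 * J * (x 1 / ‖x‖) - P 0 * ‖x‖) ^ 2)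
    + 9 / 2 * P 2 ^ 2 * ‖x‖ ^ 2 + 3 * ⟪P, x⟫ ^ 2

/-- A constant `k` with `r⁶K² ≤ k(1 + r²)`. -/
def ksqConst (A J : ℝ) (P : E3) : ℝ := 12 * A ^ 2 + 36 * J ^ 2 + 30 * ‖P‖ ^ 2

variable {A J : ℝ} {P x : E3}

theorem norm_sq_eq_sum_coord_sq (x : E3) : ‖x‖ ^ 2 = x 0 ^ 2 + x 1 ^ 2 + x 2 ^ 2 := by
  simp [EuclideanSpace.norm_sq_eq, Fin.sum_univ_three]

theorem sq_coord_zero_add_sq_coord_one_le (x : E3) : x 0 ^ 2 + x 1 ^ 2 ≤ ‖x‖ ^ 2 := by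
  linarith [norm_sq_eq_sum_coord_sq x, sq_nonneg (x 2)]

theorem Ksq_eq_scaledKsq_div (A J : ℝ) (P : E3) (hx : x ≠ 0) :
    Ksq A J P x = scaledKsq A J P x / ‖x‖ ^ 6 := by
  have : ‖x‖ ≠ 0 := norm_ne_zero_iff.2 hx
  rw [Ksq, scaledKsq, inner_smul_right, norm_sq_eq_sum_coord_sq P]
  field

theorem scaledKsq_nonneg (A J : ℝ) (P x : E3) : 0 ≤ scaledKsq A J P x := by
  unfold scaledKsq
  positivity

theorem Ksq_nonneg (A J : ℝ) (P : E3) (hx : x ≠ 0) : 0 ≤ Ksq A J P x := by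
  rw [Ksq_eq_scaledKsq_div A J P hx]
  exact div_nonneg (scaledKsq_nonneg A J P x) (by positivity)

theorem ksqConst_nonneg (A J : ℝ) (P : E3) : 0 ≤ ksqConst A J P := by
  unfold ksqConst
  positivity

theorem scaledKsq_le (A J : ℝ) (P : E3) (hx : x ≠ 0) :
    scaledKsq A J P x ≤ ksqConst A J P * (1 + ‖x‖ ^ 2) := by
  have hr : 0 < ‖x‖ := norm_pos_iff.2 hx
  have hinner : ⟪P, x⟫ ^ 2 ≤ ‖P‖ ^ 2 * ‖x‖ ^ 2 := by
    rw [← mul_pow, ← sq_abs]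
    gcongr
    exact abs_real_inner_le_norm P x
  have hsphere : (x 0 / ‖x‖) ^ 2 + (x 1 / ‖x‖) ^ 2 ≤ 1 := by
    rw [div_pow, div_pow, ← add_div, div_le_one (by positivity)]
    exact sq_coord_zero_add_sq_coord_one_le x
  have hPr : ‖P‖ ^ 2 * ‖x‖ ^ 2 = P 0 ^ 2 * ‖x‖ ^ 2 + P 1 ^ 2 * ‖x‖ ^ 2 + P 2 ^ 2 * ‖x‖ ^ 2 := by
    rw [norm_sq_eq_sum_coord_sq P]
    ring
  unfold scaledKsq ksqConst
  set r := ‖x‖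
  set a := x 0 / r
  set b := x 1 / r
  have hA : (A + ⟪P, x⟫) ^ 2 ≤ 2 * (A ^ 2 + ⟪P, x⟫ ^ 2) := add_sq_le
  have ha : (2 * J * a + P 1 * r) ^ 2 ≤ 2 * ((2 * J * a) ^ 2 + (P 1 * r) ^ 2) := add_sq_le
  have hb : (2 * J * b - P 0 * r) ^ 2 ≤ 2 * ((2 * J * b) ^ 2 + (P 0 * r) ^ 2) := by
    simpa [sub_eq_add_neg] using add_sq_le (a := 2 * J * b) (b := -(P 0 * r))
  have hJ : J ^ 2 * (a ^ 2 + b ^ 2) ≤ J ^ 2 * 1 := by gcongr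
  nlinarith [mul_nonneg (sq_nonneg A) (sq_nonneg r), mul_nonneg (sq_nonneg J) (sq_nonneg r),
    sq_nonneg ‖P‖, mul_nonneg (sq_nonneg (P 0)) (sq_nonneg r),
    mul_nonneg (sq_nonneg (P 1)) (sq_nonneg r), mul_nonneg (sq_nonneg (P 2)) (sq_nonneg r)]

theorem eq_zero_of_scaledKsq_eq_zero (h : scaledKsq A J P x = 0) :
    A = 0 ∧ ⟪P, x⟫ = 0 ∧ 2 * J * (x 0 / ‖x‖) + P 1 * ‖x‖ = 0 := by
  unfold scaledKsq at h
  have hP2 : 0 ≤ 9 / 2 * P 2 ^ 2 * ‖x‖ ^ 2 := by positivity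
  set a := 2 * J * (x 0 / ‖x‖) + P 1 * ‖x‖
  set b := 2 * J * (x 1 / ‖x‖) - P 0 * ‖x‖
  have hsq : (A + ⟪P, x⟫) ^ 2 = 0 ∧ ⟪P, x⟫ ^ 2 = 0 ∧ a ^ 2 = 0 := by
    refine ⟨?_, ?_, ?_⟩ <;>
    linarith [sq_nonneg (A + ⟪P, x⟫), sq_nonneg ⟪P, x⟫, sq_nonneg a, sq_nonneg b]
  simp only [sq_eq_zero_iff] at hsq
  exact ⟨by linarith, hsq.2⟩

-- The zeros of `K²` lie on a plane through the origin: on `P^⊥` if `P ≠ 0`, else on `x₀ = 0`.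
theorem exists_norm_eq_one_and_Ksq_pos (hAJ : A ≠ 0 ∨ J ≠ 0) (P : E3) :
    ∃ n : E3, ‖n‖ = 1 ∧ ∀ x : E3, x ≠ 0 → ⟪n, x⟫ ≠ 0 → 0 < Ksq A J P x := by
  suffices ∃ n : E3, ‖n‖ = 1 ∧ ∀ x : E3, x ≠ 0 → scaledKsq A J P x = 0 → ⟪n, x⟫ = 0 by
    obtain ⟨n, hn, hzero⟩ := this
    refine ⟨n, hn, fun x hx hnx => ?_⟩
    have : 0 < ‖x‖ := norm_pos_iff.2 hx
    rw [Ksq_eq_scaledKsq_div A J P hx]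
    exact div_pos ((scaledKsq_nonneg A J P x).lt_of_ne' fun h => hnx (hzero x hx h))
      (by positivity)
  rcases eq_or_ne P 0 with rfl | hP
  · refine ⟨stdVec 0, by simp, fun x hx h => ?_⟩
    obtain ⟨hA, -, hx0⟩ := eq_zero_of_scaledKsq_eq_zero h
    have hJ : J ≠ 0 := hAJ.resolve_left (not_not.2 hA)
    simpa [stdVec, EuclideanSpace.inner_single_left, hJ, hx] using hx0
  · refine ⟨‖P‖⁻¹ • P, norm_smul_inv_norm hP, fun x _ h => ?_⟩
    rw [inner_smul_left, (eq_zero_of_scaledKsq_eq_zero h).2.1, mul_zero]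

theorem contDiff_coord {n : WithTop ℕ∞} (i : Fin 3) : ContDiff ℝ n fun y : E3 => y i := by
  fun_prop

theorem contDiffAt_scaledKsq {n : WithTop ℕ∞} (A J : ℝ) (P : E3) (hx : x ≠ 0) :
    ContDiffAt ℝ n (scaledKsq A J P) x := by
  have hnorm : ContDiffAt ℝ n (fun y : E3 => ‖y‖) x := contDiffAt_norm ℝ hx
  have hinner : ContDiffAt ℝ n (fun y : E3 => ⟪P, y⟫) x := contDiffAt_const.inner ℝ contDiffAt_id
  have hcoord (i : Fin 3) : ContDiffAt ℝ n (fun y : E3 => 2 * J * (y i / ‖y‖)) x :=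
    contDiffAt_const.mul ((contDiff_coord i).contDiffAt.div hnorm (norm_ne_zero_iff.2 hx))
  unfold scaledKsq
  fun_prop

theorem contDiffAt_Ksq {n : WithTop ℕ∞} (A J : ℝ) (P : E3) (hx : x ≠ 0) :
    ContDiffAt ℝ n (Ksq A J P) x := by
  have heq : Ksq A J P =ᶠ[nhds x] fun y => scaledKsq A J P y / ‖y‖ ^ 6 := by
    filter_upwards [isOpen_puncturedSpace.mem_nhds hx] with y hy
    exact Ksq_eq_scaledKsq_div A J P hy
  exact ((contDiffAt_scaledKsq A J P hx).div ((contDiffAt_norm ℝ hx).pow 6)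
    (pow_ne_zero 6 (norm_ne_zero_iff.2 hx))).congr_of_eventuallyEq heq

end ExtrinsicCurvature

section Nonlinearity

variable {A J : ℝ} {P x : E3} {σ : E3 → ℝ} {a b s : ℝ}

theorem contDiffAt_Fnl {n : ℕ} (A J : ℝ) (P : E3) (hσ : ContDiff ℝ (⊤ : ℕ∞) σ) {Φ : E3 → ℝ}
    (hx : x ≠ 0) (hΦ : ContDiffAt ℝ n Φ x) (hpos : 0 < Φ x) :
    ContDiffAt ℝ n (fun y => Fnl A J P σ y (Φ y)) x := by
  have : 0 < ‖x‖ := norm_pos_iff.2 hx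
  have hσn : ContDiffAt ℝ n σ x := (hσ.of_le (by exact_mod_cast le_top)).contDiffAt
  refine ((contDiffAt_Ksq A J P hx).neg.div (contDiffAt_const.mul (hΦ.pow 7)) ?_).sub
    (hσn.div ((contDiffAt_const.mul ((contDiffAt_norm ℝ hx).pow 4)).mul (hΦ.pow 3)) ?_) <;>
  positivity

theorem Fnl_le_Fnl (A J : ℝ) (P : E3) (hσ0 : ∀ x, 0 ≤ σ x) (hx : x ≠ 0) (ha : 0 < a)
    (hab : a ≤ b) : Fnl A J P σ x a ≤ Fnl A J P σ x b := by
  have := norm_pos_iff.2 hx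
  have := Ksq_nonneg A J P hx
  have := hσ0 x
  simp only [Fnl, neg_div]
  gcongr

theorem Fnl_nonpos (A J : ℝ) (P : E3) (hσ0 : ∀ x, 0 ≤ σ x) (hx : x ≠ 0) (ha : 0 ≤ a) :
    Fnl A J P σ x a ≤ 0 := by
  have := Ksq_nonneg A J P hx
  have := hσ0 x
  rw [Fnl, neg_div, neg_sub_left, neg_nonpos]
  positivity

theorem Fnl_neg (hσ0 : ∀ x, 0 ≤ σ x) (hK : 0 < Ksq A J P x) (ha : 0 < a) :
    Fnl A J P σ x a < 0 := by
  have := hσ0 x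
  rw [Fnl, neg_div, neg_sub_left, neg_lt_zero]
  positivity

theorem abs_Fnl_le_abs_Fnl (A J : ℝ) (P : E3) (hσ0 : ∀ x, 0 ≤ σ x) (hx : x ≠ 0) (ha : 0 < a)
    (hab : a ≤ b) : |Fnl A J P σ x b| ≤ |Fnl A J P σ x a| :=
  abs_le_abs_of_nonpos (Fnl_nonpos A J P hσ0 hx (ha.le.trans hab)) (Fnl_le_Fnl A J P hσ0 hx ha hab)

theorem abs_Fnl_le (A J : ℝ) (P : E3) (hσ0 : ∀ x, 0 ≤ σ x) (hσs : ∀ x, σ x ≤ s) (hx : x ≠ 0)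
    (ha : 0 < a) (hab : a ≤ b) :
    |Fnl A J P σ x b|
      ≤ ksqConst A J P * (1 + ‖x‖ ^ 2) / ‖x‖ ^ 6 / (8 * a ^ 7) + s / (4 * ‖x‖ ^ 4 * a ^ 3) := by
  refine (abs_Fnl_le_abs_Fnl A J P hσ0 hx ha hab).trans ?_
  rw [abs_of_nonpos (Fnl_nonpos A J P hσ0 hx ha.le), Fnl, Ksq_eq_scaledKsq_div A J P hx,
    neg_div, neg_sub_left, neg_neg, add_comm]
  gcongr
  exacts [scaledKsq_le A J P hx, hσs x]

theorem abs_Fnl_le_of_one_le_norm (hσ0 : ∀ x, 0 ≤ σ x) (hσs : ∀ x, σ x ≤ s) (hx : 1 ≤ ‖x‖)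
    (ha : 1 ≤ a) : |Fnl A J P σ x a| ≤ (ksqConst A J P + s) / 4 * ‖x‖ ^ (-4 : ℝ) := by
  have hr : 0 < ‖x‖ := one_pos.trans_le hx
  have hk := ksqConst_nonneg A J P
  calc |Fnl A J P σ x a|
      ≤ ksqConst A J P * (1 + ‖x‖ ^ 2) / ‖x‖ ^ 6 / (8 * 1 ^ 7) + s / (4 * ‖x‖ ^ 4 * 1 ^ 3) :=
        abs_Fnl_le A J P hσ0 hσs (norm_pos_iff.1 hr) one_pos ha
    _ ≤ ksqConst A J P * (‖x‖ ^ 2 + ‖x‖ ^ 2) / ‖x‖ ^ 6 / (8 * 1 ^ 7)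
        + s / (4 * ‖x‖ ^ 4 * 1 ^ 3) := by
      gcongr
      exact one_le_pow₀ hx
    _ = (ksqConst A J P + s) / 4 * ‖x‖ ^ (-4 : ℝ) := by
      rw [rpow_neg hr.le, show (4 : ℝ) = (4 : ℕ) by norm_num, rpow_natCast]
      field

-- With `a = c‖x‖^{-1/2}` the two terms of `F` scale like `‖x‖^{-6+7/2}` and `‖x‖^{-4+3/2}`.
theorem abs_Fnl_le_of_norm_le_one {c : ℝ} (hσ0 : ∀ x, 0 ≤ σ x) (hσs : ∀ x, σ x ≤ s) (hx0 : x ≠ 0)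
    (hx : ‖x‖ ≤ 1) (hc : 0 < c) (ha : c * ‖x‖ ^ (-(1 / 2) : ℝ) ≤ a) :
    |Fnl A J P σ x a| ≤ (ksqConst A J P / c ^ 7 + s / c ^ 3) / 4 * ‖x‖ ^ (-(5 / 2) : ℝ) := by
  have hr : 0 < ‖x‖ := norm_pos_iff.2 hx0
  have hk := ksqConst_nonneg A J P
  set q := ‖x‖ ^ (-(1 / 2) : ℝ) with hq
  have : 0 < q := by positivity
  have hrq : ‖x‖ = (q ^ 2)⁻¹ := by
    rw [hq, ← rpow_mul_natCast hr.le, ← rpow_neg hr.le]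
    norm_num
  calc |Fnl A J P σ x a|
      ≤ ksqConst A J P * (1 + ‖x‖ ^ 2) / ‖x‖ ^ 6 / (8 * (c * q) ^ 7)
        + s / (4 * ‖x‖ ^ 4 * (c * q) ^ 3) :=
        abs_Fnl_le A J P hσ0 hσs hx0 (by positivity) ha
    _ ≤ ksqConst A J P * (1 + 1) / ‖x‖ ^ 6 / (8 * (c * q) ^ 7)
        + s / (4 * ‖x‖ ^ 4 * (c * q) ^ 3) := by
      gcongr
      exact pow_le_one₀ hr.le hx
    _ = (ksqConst A J P / c ^ 7 + s / c ^ 3) / 4 * q ^ 5 := by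
      rw [hrq]
      field
    _ = (ksqConst A J P / c ^ 7 + s / c ^ 3) / 4 * ‖x‖ ^ (-(5 / 2) : ℝ) := by
      rw [hq, ← rpow_mul_natCast hr.le]
      norm_num

theorem measurable_Fnl (A J : ℝ) (P : E3) (hσ : Measurable σ) {Φ : E3 → ℝ} (hΦ : Measurable Φ) :
    Measurable fun x => Fnl A J P σ x (Φ x) := by
  unfold Fnl Ksq
  fun_prop

theorem isLocallyBounded_Fnl (A J : ℝ) (P : E3) (hσ : ContDiff ℝ (⊤ : ℕ∞) σ)
    (hσ0 : ∀ x, 0 ≤ σ x) {Φ : E3 → ℝ} (hΦ : Measurable Φ) (hΦ1 : ∀ x, 1 ≤ Φ x) :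
    IsLocallyBounded fun x => Fnl A J P σ x (Φ x) where
  measurable := measurable_Fnl A J P hσ.continuous.measurable hΦ
  exists_bound K hK hKs := by
    have hcont : ContinuousOn (fun x => Fnl A J P σ x 1) K := fun x hx =>
      (contDiffAt_Fnl (n := 0) A J P hσ (hKs hx) contDiffAt_const
        one_pos).continuousAt.continuousWithinAt
    obtain ⟨M, hM⟩ := hK.exists_bound_of_continuousOn hcont
    exact ⟨M, fun x hx =>
      (abs_Fnl_le_abs_Fnl A J P hσ0 (hKs hx) one_pos (hΦ1 x)).trans (hM x hx)⟩

end Nonlinearity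

section Regularity

/-- The standing assumptions on the data of the conformal factor equation: `K²` does not vanish
identically near the puncture, and `8πr⁴ρ = σ` is smooth and nonnegative. -/
structure IsPunctureData (A J : ℝ) (σ : E3 → ℝ) : Prop where
  ne_zero : A ≠ 0 ∨ J ≠ 0
  smooth : ContDiff ℝ (⊤ : ℕ∞) σ
  nonneg : ∀ x, 0 ≤ σ x

/-- The conformal factor `Φ = 1 + μ/(2r) + u`. -/
def conformalFactor (μ : ℝ) (u : E3 → ℝ) (x : E3) : ℝ := 1 + μ / (2 * ‖x‖) + u x

variable {A J μ : ℝ} {P x : E3} {σ u : E3 → ℝ}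

theorem contDiffAt_conformalFactor {n : WithTop ℕ∞} (μ : ℝ) (hx : x ≠ 0)
    (hu : ContDiffAt ℝ n u x) : ContDiffAt ℝ n (conformalFactor μ u) x :=
  (contDiffAt_const.add (contDiffAt_const.div (contDiffAt_const.mul (contDiffAt_norm ℝ hx))
    (mul_ne_zero two_ne_zero (norm_ne_zero_iff.2 hx)))).add hu

theorem measurable_conformalFactor (μ : ℝ) (hu : Measurable u) :
    Measurable (conformalFactor μ u) := by
  unfold conformalFactor
  fun_prop

theorem one_le_conformalFactor (hμ : 0 ≤ μ) (hu : 0 ≤ u x) : 1 ≤ conformalFactor μ u x := by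
  have : 0 ≤ μ / (2 * ‖x‖) := by positivity
  unfold conformalFactor
  linarith

theorem IsSolμ.one_le_conformalFactor (hu : IsSolμ A J P σ μ u) (hμ : 0 ≤ μ) (x : E3) :
    1 ≤ conformalFactor μ u x :=
  _root_.one_le_conformalFactor hμ (hu.1 x)

theorem isLocallyBounded_of_continuous (h : Continuous u) : IsLocallyBounded u where
  measurable := h.measurable
  exists_bound _ hK _ := hK.exists_bound_of_continuousOn h.continuousOn

-- Off the plane where `K²` may vanish the right-hand side is negative, so the equation can only
-- hold with an honest second derivative; the plane itself is invisible to the weak formulation.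
theorem IsSolμ.isWeakSolution (hu : IsSolμ A J P σ μ u) (hD : IsPunctureData A J σ)
    (hμ : 0 ≤ μ) : IsWeakSolution u fun x => Fnl A J P σ x (conformalFactor μ u x) := by
  obtain ⟨n, hn, hK⟩ := exists_norm_eq_one_and_Ksq_pos hD.ne_zero P
  have hpos (x) : 0 < conformalFactor μ u x := one_pos.trans_le (hu.one_le_conformalFactor hμ x)
  intro φ hφ hφc hφs
  refine integral_mul_lap_eq hn hu.2.1.contDiffOn (fun x hx => ?_) (fun x hx hnx => ?_) hφ hφc hφs
  · have hu0 : ContDiffAt ℝ (0 : ℕ) u x := (hu.2.1.of_le (by norm_num)).contDiffAt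
    exact (contDiffAt_Fnl A J P hD.smooth hx (contDiffAt_conformalFactor μ hx hu0)
      (hpos x)).continuousAt.continuousWithinAt
  · have hlap : lap u x = Fnl A J P σ x (conformalFactor μ u x) := hu.2.2.2 x hx
    refine ⟨not_not.1 fun hdiff => ?_, hlap⟩
    have hzero : lap u x = 0 := by
      simp [lap_eq_sum_fderiv, fderiv_zero_of_not_differentiableAt hdiff]
    exact (Fnl_neg hD.nonneg (hK x hx hnx) (hpos x)).ne (hlap.symm.trans hzero)

theorem IsSolμ.hasNewtonRepresentation (hu : IsSolμ A J P σ μ u) (hD : IsPunctureData A J σ)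
    (hμ : 0 ≤ μ) :
    HasNewtonRepresentation u fun x => Fnl A J P σ x (conformalFactor μ u x) :=
  fun _ η hball => (hu.isWeakSolution hD hμ).newtonConst_mul_eq
    (isLocallyBounded_of_continuous hu.2.1.continuous)
    (isLocallyBounded_Fnl A J P hD.smooth hD.nonneg
      (measurable_conformalFactor μ hu.2.1.continuous.measurable) (hu.one_le_conformalFactor hμ))
    η hball hu.2.1.continuous.continuousAt

theorem HasNewtonRepresentation.contDiffAt
    (h : HasNewtonRepresentation u fun x => Fnl A J P σ x (conformalFactor μ u x))
    (hσ : ContDiff ℝ (⊤ : ℕ∞) σ) (hσ0 : ∀ x, 0 ≤ σ x) (hu : IsLocallyBounded u)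
    (hΦ : ∀ x, 1 ≤ conformalFactor μ u x) (n : ℕ) (hx : x ≠ 0) : ContDiffAt ℝ n u x := by
  induction n generalizing x with
  | zero =>
    have hF := isLocallyBounded_Fnl A J P hσ hσ0 (measurable_conformalFactor μ hu.measurable) hΦ
    exact (h.contDiffAt_one hu hF hx).of_le (by norm_num)
  | succ n ih =>
    exact h.contDiffAt_succ hu (fun y hy => contDiffAt_Fnl A J P hσ hy
      (contDiffAt_conformalFactor μ hy (ih hy)) (one_pos.trans_le (hΦ y))) hx

theorem IsSolμ.contDiffAt (hu : IsSolμ A J P σ μ u) (hD : IsPunctureData A J σ) (hμ : 0 ≤ μ)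
    (n : ℕ) (hx : x ≠ 0) : ContDiffAt ℝ n u x :=
  (hu.hasNewtonRepresentation hD hμ).contDiffAt hD.smooth hD.nonneg
    (isLocallyBounded_of_continuous hu.2.1.continuous) (hu.one_le_conformalFactor hμ) n hx

end Regularity

section RadialPowers

variable {x : E3}

theorem contDiffAt_norm_rpow {n : WithTop ℕ∞} (hx : x ≠ 0) (a : ℝ) :
    ContDiffAt ℝ n (fun y : E3 => ‖y‖ ^ a) x :=
  (contDiffAt_norm ℝ hx).rpow_const_of_ne (norm_ne_zero_iff.2 hx)

theorem norm_sq_rpow (x : E3) (a : ℝ) : (‖x‖ ^ 2) ^ a = ‖x‖ ^ (2 * a) := by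
  rw [← rpow_natCast_mul (norm_nonneg x), Nat.cast_ofNat]

theorem norm_rpow_eq_norm_sq_rpow (a : ℝ) :
    (fun y : E3 => ‖y‖ ^ a) = fun y => (‖y‖ ^ 2) ^ (a / 2) := by
  funext y
  rw [norm_sq_rpow, mul_div_cancel₀ a two_ne_zero]

theorem pderiv_norm_rpow (hx : x ≠ 0) (a : ℝ) (i : Fin 3) :
    pderiv i (fun y : E3 => ‖y‖ ^ a) x = a * x i * ‖x‖ ^ (a - 2) := by
  have hr : ‖x‖ ^ 2 ≠ 0 := pow_ne_zero 2 (norm_ne_zero_iff.2 hx)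
  rw [norm_rpow_eq_norm_sq_rpow,
    pderiv_comp_norm_sq (g := (· ^ (a / 2))) (hasDerivAt_rpow_const (Or.inl hr)), norm_sq_rpow,
    show 2 * (a / 2 - 1) = a - 2 by ring]
  ring

theorem lap_norm_rpow (hx : x ≠ 0) (a : ℝ) :
    lap (fun y : E3 => ‖y‖ ^ a) x = a * (a + 1) * ‖x‖ ^ (a - 2) := by
  have hr : ‖x‖ ^ 2 ≠ 0 := pow_ne_zero 2 (norm_ne_zero_iff.2 hx)
  rw [norm_rpow_eq_norm_sq_rpow, lap_comp_norm_sq (g := (· ^ (a / 2)))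
    ((eventually_ne_nhds hr).mono fun t ht => hasDerivAt_rpow_const (Or.inl ht))
    ((hasDerivAt_rpow_const (Or.inl hr)).const_mul (a / 2)) (contDiffAt_rpow_const_of_ne hr),
    rpow_sub_one hr (a / 2 - 1), norm_sq_rpow, show 2 * (a / 2 - 1) = a - 2 by ring]
  field

theorem tendsto_norm_rpow_nhdsNE_zero {a : ℝ} (ha : a < 0) :
    Tendsto (fun x : E3 => ‖x‖ ^ a) (nhdsWithin 0 {0}ᶜ) atTop :=
  (tendsto_rpow_neg_nhdsGT_zero ha).comp tendsto_norm_nhdsNE_zero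

theorem nonpos_of_lap_pos_where_pos_puncturedSpace {v : E3 → ℝ}
    (hzero : ∀ c > 0, ∀ᶠ x in nhdsWithin 0 {0}ᶜ, v x ≤ c)
    (htop : ∀ c > 0, ∀ᶠ x in cocompact E3, v x ≤ c)
    (hv : ∀ x ≠ 0, ContDiffAt ℝ 2 v x) (hlap : ∀ x ≠ 0, 0 < v x → 0 < lap v x) (hx : x ≠ 0) :
    v x ≤ 0 := by
  refine nonpos_of_lap_pos_where_pos isOpen_puncturedSpace (fun c hc => ?_) hv hlap x hx
  obtain ⟨U, hU, h0U, hvU⟩ := mem_nhdsWithin.1 (hzero c hc)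
  obtain ⟨K, hK, hvK⟩ := mem_cocompact.1 (htop c hc)
  refine ⟨K \ U, hK.diff hU, fun y hy hy0 => hy.2 (hy0 ▸ h0U), fun y hy hyKU => ?_⟩
  by_cases hyU : y ∈ U
  · exact hvU ⟨hyU, hy⟩
  · exact hvK fun hyK => hyKU ⟨hyK, hyU⟩

end RadialPowers

section Barriers

variable {A J μ s : ℝ} {P x : E3} {σ u : E3 → ℝ}

-- The singular lower bound on `w` replaces a comparison at the puncture.
theorem IsSolμ.le_of_lap_lt {w : E3 → ℝ} {a c : ℝ} (hu : IsSolμ A J P σ μ u)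
    (hD : IsPunctureData A J σ) (hμ : 0 ≤ μ) (ha : a < 0) (hc : 0 < c)
    (hw : ∀ x ≠ 0, ContDiffAt ℝ 2 w x) (hcw : ∀ x ≠ 0, c * ‖x‖ ^ a ≤ w x)
    (hlap : ∀ x ≠ 0, w x < u x → lap w x < lap u x) (hx : x ≠ 0) : u x ≤ w x := by
  have hu2 (x : E3) (hx : x ≠ 0) : ContDiffAt ℝ 2 u x := hu.contDiffAt hD hμ 2 hx
  refine sub_nonpos.1 <| nonpos_of_lap_pos_where_pos_puncturedSpace (v := fun x => u x - w x)
    (fun ε hε => ?_) (fun ε hε => ?_) (fun x hx => (hu2 x hx).sub (hw x hx))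
    (fun x hx hpos => ?_) hx
  · have hbdd : ∀ᶠ x in nhdsWithin 0 {0}ᶜ, u x < u 0 + 1 :=
      (hu.2.1.continuous.continuousAt.eventually (gt_mem_nhds (lt_add_one (u 0)))).filter_mono
        nhdsWithin_le_nhds
    filter_upwards [((tendsto_norm_rpow_nhdsNE_zero ha).const_mul_atTop hc).eventually_ge_atTop
      (u 0 + 1), hbdd, self_mem_nhdsWithin] with x hlarge hux hx
    linarith [hcw x hx]
  · filter_upwards [hu.2.2.1.eventually (gt_mem_nhds hε),
      (isCompact_singleton (x := (0 : E3))).compl_mem_cocompact] with x hux hx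
    have : 0 ≤ c * ‖x‖ ^ a := by positivity
    linarith [hcw x hx]
  · rw [lap_sub (hu2 x hx) (hw x hx)]
    exact sub_pos.2 (hlap x hx (sub_pos.1 hpos))

theorem abs_Fnl_le_norm_rpow {β Φ : ℝ} (hσ0 : ∀ x, 0 ≤ σ x) (hσs : ∀ x, σ x ≤ s)
    (hβ : 1 / 2 ≤ β) (hβ' : β ≤ 2) (hx : x ≠ 0) (hΦ1 : 1 ≤ Φ) (hΦ : ‖x‖ ^ (-β) ≤ Φ) :
    |Fnl A J P σ x Φ| ≤ (ksqConst A J P + s) / 4 * ‖x‖ ^ (-β - 2) := by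
  have hr : 0 < ‖x‖ := norm_pos_iff.2 hx
  have hk := ksqConst_nonneg A J P
  have hs : 0 ≤ s := (hσ0 0).trans (hσs 0)
  rcases le_total ‖x‖ 1 with h1 | h1
  · have hq : 1 * ‖x‖ ^ (-(1 / 2) : ℝ) ≤ Φ := by
      rw [one_mul]
      exact (rpow_le_rpow_of_exponent_ge hr h1 (by linarith)).trans hΦ
    refine (abs_Fnl_le_of_norm_le_one hσ0 hσs hx h1 one_pos hq).trans ?_
    simp only [one_pow, div_one]
    gcongr ?_ * ?_
    exact rpow_le_rpow_of_exponent_ge hr h1 (by linarith)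
  · refine (abs_Fnl_le_of_one_le_norm hσ0 hσs h1 hΦ1).trans ?_
    gcongr ?_ * ?_
    exact rpow_le_rpow_of_exponent_le h1 (by linarith)

theorem le_conformalFactor (hμ : 0 ≤ μ) (u : E3 → ℝ) (x : E3) :
    u x ≤ conformalFactor μ u x := by
  have : 0 ≤ μ / (2 * ‖x‖) := by positivity
  unfold conformalFactor
  linarith

theorem exists_forall_isSolμ_le_norm_rpow {β : ℝ} (P : E3) (hD : IsPunctureData A J σ)
    (hσs : ∀ x, σ x ≤ s) (hβ : 1 / 2 ≤ β) (hβ1 : β < 1) :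
    ∃ C > 0, ∀ μ ≥ 0, ∀ u, IsSolμ A J P σ μ u → ∀ x ≠ 0, u x ≤ C * ‖x‖ ^ (-β) := by
  have hk := ksqConst_nonneg A J P
  have hs : 0 ≤ s := (hD.nonneg 0).trans (hσs 0)
  have hβpos : 0 < β * (1 - β) := mul_pos (by linarith) (by linarith)
  set C := 1 + (ksqConst A J P + s) / (β * (1 - β)) with hC
  have hC1 : 1 ≤ C := le_add_of_nonneg_right (by positivity)
  have hCk : (ksqConst A J P + s) / 4 < C * (β * (1 - β)) := by
    rw [hC, add_mul, div_mul_cancel₀ _ hβpos.ne']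
    linarith
  refine ⟨C, by linarith, fun μ hμ u hu x hx => ?_⟩
  refine hu.le_of_lap_lt hD hμ (a := -β) (c := C) (by linarith) (by linarith)
    (fun x hx => contDiffAt_const.mul (contDiffAt_norm_rpow hx _)) (fun x _ => le_rfl)
    (fun x hx hlt => ?_) hx
  have hq : 0 < ‖x‖ ^ (-β) := rpow_pos_of_pos (norm_pos_iff.2 hx) _
  have : 0 < ‖x‖ ^ (-β - 2) := rpow_pos_of_pos (norm_pos_iff.2 hx) _
  have hΦ : ‖x‖ ^ (-β) ≤ conformalFactor μ u x :=
    (le_mul_of_one_le_left hq.le hC1).trans (hlt.le.trans (le_conformalFactor hμ u x))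
  have hF := abs_Fnl_le_norm_rpow (A := A) (J := J) (P := P) hD.nonneg hσs hβ (by linarith) hx
    (hu.one_le_conformalFactor hμ x) hΦ
  calc lap (fun y => C * ‖y‖ ^ (-β)) x = -(C * (β * (1 - β)) * ‖x‖ ^ (-β - 2)) := by
        rw [lap_const_mul C (contDiffAt_norm_rpow hx _), lap_norm_rpow hx]
        ring
    _ < -((ksqConst A J P + s) / 4 * ‖x‖ ^ (-β - 2)) := by gcongr
    _ ≤ Fnl A J P σ x (conformalFactor μ u x) := (neg_le_neg hF).trans (neg_abs_le _)
    _ = lap u x := (hu.2.2.2 x hx).symm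

theorem IsSolμ.le_of_le {μ₁ μ₂ : ℝ} {u₁ u₂ : E3 → ℝ} (hu₁ : IsSolμ A J P σ μ₁ u₁)
    (hu₂ : IsSolμ A J P σ μ₂ u₂) (hD : IsPunctureData A J σ) (hμ₂ : 0 ≤ μ₂) (hμ : μ₂ ≤ μ₁)
    (hx : x ≠ 0) : u₁ x ≤ u₂ x := by
  have hperturbed (ε : ℝ) (hε : 0 < ε) : u₁ x ≤ u₂ x + ε * ‖x‖ ^ (-(1 / 2) : ℝ) := by
    refine hu₁.le_of_lap_lt (w := fun x => u₂ x + ε * ‖x‖ ^ (-(1 / 2) : ℝ)) hD (hμ₂.trans hμ)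
      (by norm_num) hε (fun x hx => ?_) (fun x _ => le_add_of_nonneg_left (hu₂.1 x))
      (fun x hx hlt => ?_) hx
    · exact (hu₂.contDiffAt hD hμ₂ 2 hx).add (contDiffAt_const.mul (contDiffAt_norm_rpow hx _))
    have : 0 < ‖x‖ := norm_pos_iff.2 hx
    have hq : 0 < ε * ‖x‖ ^ (-(1 / 2) : ℝ) := by positivity
    have hq2 : 0 < ε * ‖x‖ ^ (-(1 / 2) - 2 : ℝ) := by positivity
    have hmono : Fnl A J P σ x (conformalFactor μ₂ u₂ x)
        ≤ Fnl A J P σ x (conformalFactor μ₁ u₁ x) := by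
      refine Fnl_le_Fnl A J P hD.nonneg hx
        (one_pos.trans_le (hu₂.one_le_conformalFactor hμ₂ x)) ?_
      unfold conformalFactor
      gcongr
      linarith
    have hlap₁ : lap u₁ x = Fnl A J P σ x (conformalFactor μ₁ u₁ x) := hu₁.2.2.2 x hx
    have hlap₂ : lap u₂ x = Fnl A J P σ x (conformalFactor μ₂ u₂ x) := hu₂.2.2.2 x hx
    have hpow := contDiffAt_norm_rpow (n := 2) hx (-(1 / 2))
    rw [lap_add (hu₂.contDiffAt hD hμ₂ 2 hx) (contDiffAt_const.mul hpow), lap_const_mul ε hpow,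
      lap_norm_rpow hx, hlap₁, hlap₂]
    linarith
  have hr : 0 < ‖x‖ ^ (-(1 / 2) : ℝ) := rpow_pos_of_pos (norm_pos_iff.2 hx) _
  refine le_of_forall_pos_le_add fun ε hε => ?_
  exact (hperturbed (ε / ‖x‖ ^ (-(1 / 2) : ℝ)) (by positivity)).trans_eq
    (by rw [div_mul_cancel₀ ε hr.ne'])

end Barriers

section LowerBarrier

variable {A J : ℝ} {P x : E3} {σ : E3 → ℝ}

theorem sq_le_scaledKsq_of_norm_mul_norm_le (J : ℝ) (h : ‖P‖ * ‖x‖ ≤ |A| / 2) :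
    A ^ 2 ≤ scaledKsq A J P x := by
  have hinner : |⟪P, x⟫| ≤ |A| / 2 := (abs_real_inner_le_norm P x).trans h
  have hhalf : |A| / 2 ≤ |A + ⟪P, x⟫| := by
    have := abs_sub_abs_le_abs_sub A (-⟪P, x⟫)
    rw [abs_neg, sub_neg_eq_add] at this
    linarith
  have hsq : (|A| / 2) ^ 2 ≤ |A + ⟪P, x⟫| ^ 2 := by gcongr
  rw [div_pow, sq_abs, sq_abs] at hsq
  have hrest : 0 ≤ scaledKsq A J P x - 6 * (A + ⟪P, x⟫) ^ 2 := by
    simp only [scaledKsq, add_assoc, add_sub_cancel_left]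
    positivity
  linarith [sq_nonneg A]

theorem sq_le_scaledKsq_of_norm_sq_le (A : ℝ) (h : ‖P‖ * ‖x‖ ≤ |J| / 2) (hx : x ≠ 0)
    (hax : ‖x‖ ^ 2 / 4 ≤ x 0 ^ 2 + x 1 ^ 2) : J ^ 2 ≤ scaledKsq A J P x := by
  have  : 0 < ‖x‖ := norm_pos_iff.2 hx
  have hsq : (‖P‖ * ‖x‖) ^ 2 ≤ (|J| / 2) ^ 2 := by gcongr
  rw [div_pow, sq_abs, mul_pow, norm_sq_eq_sum_coord_sq P] at hsq
  have hquarter : 1 / 4 ≤ (x 0 / ‖x‖) ^ 2 + (x 1 / ‖x‖) ^ 2 := by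
    rw [div_pow, div_pow, ← add_div, le_div_iff₀ (by positivity)]
    linarith
  unfold scaledKsq
  set a := x 0 / ‖x‖
  set b := x 1 / ‖x‖
  have hrest : 0 ≤ 6 * (A + ⟪P, x⟫) ^ 2 + 9 / 2 * P 2 ^ 2 * ‖x‖ ^ 2 + 3 * ⟪P, x⟫ ^ 2 := by
    positivity
  have ha : (2 * J * a) ^ 2 / 2 - (P 1 * ‖x‖) ^ 2 ≤ (2 * J * a + P 1 * ‖x‖) ^ 2 := by
    nlinarith [sq_nonneg (2 * J * a + 2 * (P 1 * ‖x‖))]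
  have hb : (2 * J * b) ^ 2 / 2 - (P 0 * ‖x‖) ^ 2 ≤ (2 * J * b - P 0 * ‖x‖) ^ 2 := by
    nlinarith [sq_nonneg (2 * J * b - 2 * (P 0 * ‖x‖))]
  have hJ : J ^ 2 * (1 / 4) ≤ J ^ 2 * (a ^ 2 + b ^ 2) := by gcongr
  nlinarith [mul_nonneg (sq_nonneg (P 2)) (sq_nonneg ‖x‖)]

-- For `A = 0` the leading part `r⁶K² ≈ 18J²sin²θ` degenerates on the axis.
theorem exists_eventually_le_scaledKsq (hAJ : A ≠ 0 ∨ J ≠ 0) (P : E3) :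
    ∃ k > 0, ∀ᶠ x : E3 in nhds 0, x ≠ 0 → ‖x‖ ^ 2 / 4 ≤ x 0 ^ 2 + x 1 ^ 2 →
      k ≤ scaledKsq A J P x := by
  have hsmall (a : ℝ) (ha : a ≠ 0) : ∀ᶠ x : E3 in nhds 0, ‖P‖ * ‖x‖ ≤ |a| / 2 := by
    have hcont : Tendsto (fun x : E3 => ‖P‖ * ‖x‖) (nhds 0) (nhds 0) := by
      simpa using tendsto_norm_zero.const_mul ‖P‖
    exact hcont.eventually (ge_mem_nhds (by positivity))
  rcases hAJ with hA | hJ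
  · exact ⟨A ^ 2, by positivity, (hsmall A hA).mono fun x h _ _ =>
      sq_le_scaledKsq_of_norm_mul_norm_le J h⟩
  · exact ⟨J ^ 2, by positivity, (hsmall J hJ).mono fun x h hx hax =>
      sq_le_scaledKsq_of_norm_sq_le A h hx hax⟩

/-- The profile `r^{-1/2}(1 + sin²θ/8)` of the lower barrier: the angular correction makes it
subharmonic near the axis, where `K²` may be too small to dominate its Laplacian. -/
def lowerBarrier (x : E3) : ℝ :=
  ‖x‖ ^ (-(1 / 2) : ℝ) + 1 / 8 * ((x 0 * x 0 + x 1 * x 1) * ‖x‖ ^ (-(5 / 2) : ℝ))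

theorem lap_coord (j : Fin 3) (x : E3) : lap (fun y : E3 => y j) x = 0 := by
  rw [lap_eq_sum_pderiv (contDiff_coord j).contDiffAt]
  refine Finset.sum_eq_zero fun i _ => ?_
  rw [show pderiv i (fun y : E3 => y j) = fun _ => if i = j then 1 else 0 from
    funext (pderiv_coord i j), pderiv_const]

theorem contDiff_axial {n : WithTop ℕ∞} : ContDiff ℝ n fun y : E3 => y 0 * y 0 + y 1 * y 1 := by
  fun_prop

theorem pderiv_axial (i : Fin 3) (x : E3) :
    pderiv i (fun y : E3 => y 0 * y 0 + y 1 * y 1) x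
      = 2 * (if i = 0 then x 0 else 0) + 2 * (if i = 1 then x 1 else 0) := by
  have hcoord (j : Fin 3) : DifferentiableAt ℝ (fun y : E3 => y j) x := by fun_prop
  rw [pderiv_add (u := fun y : E3 => y 0 * y 0) (v := fun y : E3 => y 1 * y 1)
      ((hcoord 0).mul (hcoord 0)) ((hcoord 1).mul (hcoord 1)),
    pderiv_mul (hcoord 0) (hcoord 0), pderiv_mul (hcoord 1) (hcoord 1), pderiv_coord,
    pderiv_coord]
  split_ifs <;> ring

theorem lap_axial (x : E3) : lap (fun y : E3 => y 0 * y 0 + y 1 * y 1) x = 4 := by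
  have hcoord (j : Fin 3) : ContDiffAt ℝ 2 (fun y : E3 => y j) x := (contDiff_coord j).contDiffAt
  rw [lap_add (u := fun y : E3 => y 0 * y 0) (v := fun y : E3 => y 1 * y 1)
      ((hcoord 0).mul (hcoord 0)) ((hcoord 1).mul (hcoord 1)),
    lap_mul (hcoord 0) (hcoord 0), lap_mul (hcoord 1) (hcoord 1)]
  simp [lap_coord, pderiv_coord]
  norm_num

theorem lap_axial_mul_norm_rpow (hx : x ≠ 0) (a : ℝ) :
    lap (fun y : E3 => (y 0 * y 0 + y 1 * y 1) * ‖y‖ ^ a) x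
      = 4 * ‖x‖ ^ a + (a ^ 2 + 5 * a) * (x 0 * x 0 + x 1 * x 1) * ‖x‖ ^ (a - 2) := by
  rw [lap_mul contDiff_axial.contDiffAt (contDiffAt_norm_rpow hx a), lap_axial, lap_norm_rpow hx]
  simp only [pderiv_axial, pderiv_norm_rpow hx, Fin.sum_univ_three]
  simp
  ring

theorem contDiffAt_lowerBarrier (hx : x ≠ 0) : ContDiffAt ℝ 2 lowerBarrier x :=
  (contDiffAt_norm_rpow hx _).add
    (contDiffAt_const.mul (contDiff_axial.contDiffAt.mul (contDiffAt_norm_rpow hx _)))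

theorem lap_lowerBarrier (hx : x ≠ 0) :
    lap lowerBarrier x = 1 / 4 * ‖x‖ ^ (-(5 / 2) : ℝ)
      - 25 / 32 * ((x 0 * x 0 + x 1 * x 1) * ‖x‖ ^ (-(9 / 2) : ℝ)) := by
  have haxial : ContDiffAt ℝ 2
      (fun y : E3 => (y 0 * y 0 + y 1 * y 1) * ‖y‖ ^ (-(5 / 2) : ℝ)) x :=
    contDiff_axial.contDiffAt.mul (contDiffAt_norm_rpow hx _)
  unfold lowerBarrier
  rw [lap_add (contDiffAt_norm_rpow hx _) (contDiffAt_const.mul haxial), lap_const_mul _ haxial,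
    lap_axial_mul_norm_rpow hx, lap_norm_rpow hx, show (-(1 / 2) - 2 : ℝ) = -(5 / 2) by norm_num,
    show (-(5 / 2) - 2 : ℝ) = -(9 / 2) by norm_num]
  ring

theorem norm_sq_mul_norm_rpow (hx : x ≠ 0) (a : ℝ) : ‖x‖ ^ 2 * ‖x‖ ^ a = ‖x‖ ^ (a + 2) := by
  rw [rpow_add (norm_pos_iff.2 hx), rpow_two, mul_comm]

theorem norm_rpow_le_lowerBarrier (x : E3) : ‖x‖ ^ (-(1 / 2) : ℝ) ≤ lowerBarrier x :=
  le_add_of_nonneg_right <| mul_nonneg (by norm_num) <|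
    mul_nonneg (add_nonneg (mul_self_nonneg _) (mul_self_nonneg _)) (by positivity)

theorem lowerBarrier_le (hx : x ≠ 0) : lowerBarrier x ≤ 9 / 8 * ‖x‖ ^ (-(1 / 2) : ℝ) := by
  have h : (x 0 * x 0 + x 1 * x 1) * ‖x‖ ^ (-(5 / 2) : ℝ) ≤ ‖x‖ ^ 2 * ‖x‖ ^ (-(5 / 2) : ℝ) := by
    gcongr
    simpa only [sq] using sq_coord_zero_add_sq_coord_one_le x
  rw [norm_sq_mul_norm_rpow hx, show (-(5 / 2) + 2 : ℝ) = -(1 / 2) by norm_num] at h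
  unfold lowerBarrier
  linarith

theorem neg_norm_rpow_lt_lap_lowerBarrier (hx : x ≠ 0) :
    -‖x‖ ^ (-(5 / 2) : ℝ) < lap lowerBarrier x := by
  have hq : 0 < ‖x‖ ^ (-(5 / 2) : ℝ) := rpow_pos_of_pos (norm_pos_iff.2 hx) _
  have h : (x 0 * x 0 + x 1 * x 1) * ‖x‖ ^ (-(9 / 2) : ℝ) ≤ ‖x‖ ^ 2 * ‖x‖ ^ (-(9 / 2) : ℝ) := by
    gcongr
    simpa only [sq] using sq_coord_zero_add_sq_coord_one_le x
  rw [norm_sq_mul_norm_rpow hx, show (-(9 / 2) + 2 : ℝ) = -(5 / 2) by norm_num] at h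
  rw [lap_lowerBarrier hx]
  linarith

theorem lap_lowerBarrier_pos (hx : x ≠ 0) (hax : x 0 ^ 2 + x 1 ^ 2 < ‖x‖ ^ 2 / 4) :
    0 < lap lowerBarrier x := by
  have hq : 0 < ‖x‖ ^ (-(5 / 2) : ℝ) := rpow_pos_of_pos (norm_pos_iff.2 hx) _
  have h : (x 0 * x 0 + x 1 * x 1) * ‖x‖ ^ (-(9 / 2) : ℝ)
      ≤ ‖x‖ ^ 2 / 4 * ‖x‖ ^ (-(9 / 2) : ℝ) := by
    gcongr
    simpa only [sq] using hax.le
  rw [div_mul_eq_mul_div, norm_sq_mul_norm_rpow hx,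
    show (-(9 / 2) + 2 : ℝ) = -(5 / 2) by norm_num] at h
  rw [lap_lowerBarrier hx]
  linarith

theorem Fnl_le_neg_norm_rpow {b c : ℝ} (hσ0 : ∀ x, 0 ≤ σ x) (hx : x ≠ 0) (hc0 : 0 < c)
    (hc1 : c ≤ 1) (hK : 20 * c ≤ scaledKsq A J P x) (hb0 : 0 < b)
    (hb : b ≤ 9 / 8 * c * ‖x‖ ^ (-(1 / 2) : ℝ)) : Fnl A J P σ x b ≤ -‖x‖ ^ (-(5 / 2) : ℝ) := by
  have hr : 0 < ‖x‖ := norm_pos_iff.2 hx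
  set q := ‖x‖ ^ (-(1 / 2) : ℝ) with hq
  have : 0 < q := by positivity
  have hrq : ‖x‖ = (q ^ 2)⁻¹ := by
    rw [hq, ← rpow_mul_natCast hr.le, ← rpow_neg hr.le]
    norm_num
  have hq5 : ‖x‖ ^ (-(5 / 2) : ℝ) = q ^ 5 := by
    rw [hq, ← rpow_mul_natCast hr.le]
    norm_num
  have := scaledKsq_nonneg A J P x
  have hσterm : 0 ≤ σ x / (4 * ‖x‖ ^ 4 * b ^ 3) := div_nonneg (hσ0 x) (by positivity)
  suffices ‖x‖ ^ (-(5 / 2) : ℝ) ≤ Ksq A J P x / (8 * b ^ 7) by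
    rw [Fnl, neg_div]
    linarith
  rw [hq5, Ksq_eq_scaledKsq_div A J P hx]
  calc q ^ 5 ≤ 20 * c / (8 * (9 / 8 : ℝ) ^ 7 * c) * q ^ 5 := by
        rw [mul_div_mul_right _ _ hc0.ne']
        exact le_mul_of_one_le_left (by positivity) (by norm_num)
    _ ≤ 20 * c / (8 * (9 / 8 : ℝ) ^ 7 * c ^ 7) * q ^ 5 := by
        gcongr
        exact pow_le_of_le_one hc0.le hc1 (by norm_num)
    _ = 20 * c / ‖x‖ ^ 6 / (8 * (9 / 8 * c * q) ^ 7) := by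
        rw [hrq]
        field
    _ ≤ scaledKsq A J P x / ‖x‖ ^ 6 / (8 * b ^ 7) := by gcongr

theorem Fnl_lt_lap_lowerBarrier {c : ℝ} (hσ0 : ∀ x, 0 ≤ σ x) (hx : x ≠ 0) (hc0 : 0 < c)
    (hc1 : c ≤ 1)
    (hK : ‖x‖ ^ 2 / 4 ≤ x 0 ^ 2 + x 1 ^ 2 → 20 * c ≤ scaledKsq A J P x) :
    Fnl A J P σ x (c * lowerBarrier x) < lap (fun y => c * lowerBarrier y) x := by
  have hr : 0 < ‖x‖ := norm_pos_iff.2 hx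
  have hpos : 0 < lowerBarrier x :=
    (rpow_pos_of_pos hr _).trans_le (norm_rpow_le_lowerBarrier x)
  rw [lap_const_mul c (contDiffAt_lowerBarrier hx)]
  rcases lt_or_ge (x 0 ^ 2 + x 1 ^ 2) (‖x‖ ^ 2 / 4) with hax | hax
  · exact (Fnl_nonpos A J P hσ0 hx (by positivity)).trans_lt
      (mul_pos hc0 (lap_lowerBarrier_pos hx hax))
  · have hle : c * lowerBarrier x ≤ 9 / 8 * c * ‖x‖ ^ (-(1 / 2) : ℝ) := by
      nlinarith [lowerBarrier_le hx]
    calc Fnl A J P σ x (c * lowerBarrier x)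
        ≤ -‖x‖ ^ (-(5 / 2) : ℝ) :=
          Fnl_le_neg_norm_rpow hσ0 hx hc0 hc1 (hK hax) (by positivity) hle
      _ ≤ c * -‖x‖ ^ (-(5 / 2) : ℝ) := by nlinarith [rpow_pos_of_pos hr (-(5 / 2))]
      _ < c * lap lowerBarrier x := by
        gcongr
        exact neg_norm_rpow_lt_lap_lowerBarrier hx

theorem lap_conformalFactor {μ : ℝ} {u : E3 → ℝ} (hx : x ≠ 0) (hu : ContDiffAt ℝ 2 u x) :
    lap (conformalFactor μ u) x = lap u x := by
  have hrw : conformalFactor μ u = fun y => 1 + μ / 2 * ‖y‖ ^ (-1 : ℝ) + u y := by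
    funext y
    rw [conformalFactor, rpow_neg_one, div_mul_eq_div_div, div_eq_mul_inv (μ / 2)]
  have hpow := contDiffAt_norm_rpow (n := 2) hx (-1)
  have hpole : ContDiffAt ℝ 2 (fun y : E3 => μ / 2 * ‖y‖ ^ (-1 : ℝ)) x :=
    contDiffAt_const.mul hpow
  rw [hrw, lap_add (contDiffAt_const.add hpole) hu, lap_add contDiffAt_const hpole, lap_const,
    lap_const_mul _ hpow, lap_norm_rpow hx]
  norm_num

theorem eventually_mul_norm_rpow_le_conformalFactor {μ : ℝ} {u : E3 → ℝ} (hμ : 0 < μ)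
    (hu : ∀ x, 0 ≤ u x) (C : ℝ) :
    ∀ᶠ x in nhdsWithin 0 {0}ᶜ, C * ‖x‖ ^ (-(1 / 2) : ℝ) ≤ conformalFactor μ u x := by
  filter_upwards [((tendsto_norm_rpow_nhdsNE_zero (a := -(1 / 2)) (by norm_num)).const_mul_atTop
    (half_pos hμ)).eventually_ge_atTop C, self_mem_nhdsWithin] with x hlarge hx
  have hr : 0 < ‖x‖ := norm_pos_iff.2 hx
  have hsq : ‖x‖ ^ (-(1 / 2) : ℝ) * ‖x‖ ^ (-(1 / 2) : ℝ) = ‖x‖⁻¹ := by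
    rw [← rpow_add hr, ← rpow_neg_one]
    norm_num
  calc C * ‖x‖ ^ (-(1 / 2) : ℝ)
      ≤ μ / 2 * ‖x‖ ^ (-(1 / 2) : ℝ) * ‖x‖ ^ (-(1 / 2) : ℝ) := by gcongr
    _ = μ / (2 * ‖x‖) := by
      rw [mul_assoc, hsq]
      field
    _ ≤ conformalFactor μ u x := by
      unfold conformalFactor
      linarith [hu x]

theorem IsSolμ.mul_lowerBarrier_le {μ c r₀ : ℝ} {u : E3 → ℝ} (hu : IsSolμ A J P σ μ u)
    (hD : IsPunctureData A J σ) (hμ : 0 < μ) (hc0 : 0 < c) (hc1 : c ≤ 1)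
    (hout : ∀ x : E3, r₀ ≤ ‖x‖ → 9 / 8 * c * ‖x‖ ^ (-(1 / 2) : ℝ) ≤ 1)
    (hK : ∀ x : E3, ‖x‖ < r₀ → x ≠ 0 → ‖x‖ ^ 2 / 4 ≤ x 0 ^ 2 + x 1 ^ 2 →
      20 * c ≤ scaledKsq A J P x) (hx : x ≠ 0) :
    c * lowerBarrier x ≤ conformalFactor μ u x := by
  have hle (x : E3) (hx : x ≠ 0) : c * lowerBarrier x ≤ 9 / 8 * c * ‖x‖ ^ (-(1 / 2) : ℝ) := by
    nlinarith [lowerBarrier_le hx]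
  have hout' (x : E3) (hr : r₀ ≤ ‖x‖) (hx : x ≠ 0) :
      c * lowerBarrier x ≤ conformalFactor μ u x :=
    ((hle x hx).trans (hout x hr)).trans (hu.one_le_conformalFactor hμ.le x)
  have hΦ (x : E3) (hx : x ≠ 0) : ContDiffAt ℝ 2 (conformalFactor μ u) x :=
    contDiffAt_conformalFactor μ hx (hu.contDiffAt hD hμ.le 2 hx)
  have hbarrier (x : E3) (hx : x ≠ 0) : ContDiffAt ℝ 2 (fun y => c * lowerBarrier y) x :=
    contDiffAt_const.mul (contDiffAt_lowerBarrier hx)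
  refine sub_nonpos.1 <| nonpos_of_lap_pos_where_pos_puncturedSpace
    (v := fun x => c * lowerBarrier x - conformalFactor μ u x) (fun ε hε => ?_) (fun ε hε => ?_)
    (fun x hx => (hbarrier x hx).sub (hΦ x hx)) (fun x hx hpos => ?_) hx
  · filter_upwards [eventually_mul_norm_rpow_le_conformalFactor hμ hu.1 (9 / 8 * c),
      self_mem_nhdsWithin] with x hlarge hx
    linarith [hle x hx]
  · filter_upwards [tendsto_norm_cocompact_atTop.eventually_ge_atTop r₀,
      (isCompact_singleton (x := (0 : E3))).compl_mem_cocompact] with x hr hx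
    linarith [hout' x hr hx]
  · have hr : ‖x‖ < r₀ := lt_of_not_ge fun h => by linarith [hout' x h hx]
    rw [lap_sub (hbarrier x hx) (hΦ x hx), lap_conformalFactor hx (hu.contDiffAt hD hμ.le 2 hx),
      hu.2.2.2 x hx, sub_pos]
    refine (Fnl_le_Fnl A J P hD.nonneg hx ?_ (sub_pos.1 hpos).le).trans_lt
      (Fnl_lt_lap_lowerBarrier hD.nonneg hx hc0 hc1 (hK x hr hx))
    exact one_pos.trans_le (hu.one_le_conformalFactor hμ.le x)

theorem exists_forall_norm_rpow_le_conformalFactor (P : E3) (hD : IsPunctureData A J σ) :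
    ∃ c > 0, ∀ μ > 0, ∀ u, IsSolμ A J P σ μ u →
      ∀ x ≠ 0, c * ‖x‖ ^ (-(1 / 2) : ℝ) ≤ conformalFactor μ u x := by
  obtain ⟨k, hk, hnear⟩ := exists_eventually_le_scaledKsq hD.ne_zero P
  obtain ⟨r₀, hr₀, hr₀K⟩ := Metric.eventually_nhds_iff.1 hnear
  simp only [dist_zero_right] at hr₀K
  set c := min (min 1 (k / 20)) (r₀ ^ (1 / 2 : ℝ) / 2)
  have hc0 : 0 < c := by positivity
  have hc1 : c ≤ 1 := (min_le_left _ _).trans (min_le_left _ _)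
  have hck : c ≤ k / 20 := (min_le_left _ _).trans (min_le_right _ _)
  have hcr : c ≤ r₀ ^ (1 / 2 : ℝ) / 2 := min_le_right _ _
  have hout (x : E3) (hx : r₀ ≤ ‖x‖) : 9 / 8 * c * ‖x‖ ^ (-(1 / 2) : ℝ) ≤ 1 := by
    calc 9 / 8 * c * ‖x‖ ^ (-(1 / 2) : ℝ)
        ≤ 9 / 8 * (r₀ ^ (1 / 2 : ℝ) / 2) * r₀ ^ (-(1 / 2) : ℝ) := by
          gcongr ?_ * ?_
          · gcongr
          · exact rpow_le_rpow_of_nonpos hr₀ hx (by norm_num)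
      _ ≤ 1 := by
          rw [rpow_neg hr₀.le]
          field_simp
          norm_num
  refine ⟨c, hc0, fun μ hμ u hu x hx => ?_⟩
  exact (mul_le_mul_of_nonneg_left (norm_rpow_le_lowerBarrier x) hc0.le).trans <|
    hu.mul_lowerBarrier_le hD hμ hc0 hc1 hout
      (fun x hr hx hax => by linarith [hr₀K hr hx hax]) hx

end LowerBarrier

section LocallyDominatedLimits

variable {ι : Type*} {l : Filter ι} {w : ι → E3 → ℝ} {w₀ b : E3 → ℝ}

/-- Pointwise convergence on the punctured space of measurable functions which are dominated there
by a single locally bounded function. -/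
structure TendstoLocallyDominated (w : ι → E3 → ℝ) (w₀ b : E3 → ℝ) (l : Filter ι) : Prop where
  measurable : ∀ n, Measurable (w n)
  abs_le : ∀ n, ∀ x ≠ 0, |w n x| ≤ b x
  tendsto : ∀ x ≠ 0, Tendsto (fun n => w n x) l (nhds (w₀ x))
  isLocallyBounded : IsLocallyBounded b

theorem TendstoLocallyDominated.tendsto_integral_mul [l.IsCountablyGenerated]
    (h : TendstoLocallyDominated w w₀ b l) {k : E3 → ℝ} {K : Set E3} (hk : Integrable k)
    (hK : IsCompact K) (hKs : K ⊆ puncturedSpace) (hkK : ∀ x ∉ K, k x = 0) :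
    Tendsto (fun n => ∫ x, k x * w n x) l (nhds (∫ x, k x * w₀ x)) := by
  obtain ⟨M, hM⟩ := h.isLocallyBounded.exists_bound K hK hKs
  have hmem (x) (hx : |k x| ≠ 0) : x ∈ K := by
    by_contra hxK
    exact hx (by simp [hkK x hxK])
  refine tendsto_integral_filter_of_dominated_convergence (fun x => |k x| * |M|)
    (.of_forall fun n => hk.1.mul (h.measurable n).aestronglyMeasurable)
    (.of_forall fun n => .of_forall fun x => norm_mul_le_mul_abs_of_ne_zero le_rfl fun hx => ?_)
    (hk.abs.mul_const _) ((volume.ae_ne 0).mono fun x hx => (h.tendsto x hx).const_mul _)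
  exact (h.abs_le n x (hKs (hmem x hx))).trans ((le_abs_self _).trans (hM x (hmem x hx)))

theorem TendstoLocallyDominated.tendsto_convolution [l.IsCountablyGenerated]
    (h : TendstoLocallyDominated w w₀ b l) {k : E3 → ℝ} {R : ℝ} {x : E3} (hk : Integrable k)
    (hball : closedBall x R ⊆ puncturedSpace) (hkR : ∀ z, R < ‖z‖ → k z = 0) :
    Tendsto (fun n => (k ⋆ w n) x) l (nhds ((k ⋆ w₀) x)) := by
  simp only [convolution_eq_swap, ContinuousLinearMap.lsmul_apply, smul_eq_mul]
  refine h.tendsto_integral_mul (hk.comp_sub_left x) (isCompact_closedBall x R) hball fun y hy => ?_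
  exact hkR _ (by simpa [dist_eq_norm'] using hy)

variable {u f : ι → E3 → ℝ} {u₀ f₀ c : E3 → ℝ} [l.IsCountablyGenerated] [l.NeBot]

theorem IsWeakSolution.of_tendsto (h : ∀ n, IsWeakSolution (u n) (f n))
    (hu : TendstoLocallyDominated u u₀ b l) (hf : TendstoLocallyDominated f f₀ c l) :
    IsWeakSolution u₀ f₀ := by
  intro φ hφ hφc hφs
  have hlapφ : Continuous (lap φ) := continuous_iff_continuousAt.2 fun x =>
    continuousAt_lap hφ.contDiffAt
  have hlapφc : HasCompactSupport (lap φ) :=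
    hφc.mono' (subset_closure.trans (tsupport_lap_subset φ))
  have hleft := hu.tendsto_integral_mul (hlapφ.integrable_of_hasCompactSupport hlapφc) hφc hφs
    fun x hx => image_eq_zero_of_notMem_tsupport fun h => hx (tsupport_lap_subset φ h)
  have hright := hf.tendsto_integral_mul (hφ.continuous.integrable_of_hasCompactSupport hφc)
    hφc hφs fun x hx => image_eq_zero_of_notMem_tsupport hx
  simp only [mul_comm] at hleft hright
  exact tendsto_nhds_unique hleft (hright.congr fun n => (h n φ hφ hφc hφs).symm)

theorem HasNewtonRepresentation.of_tendsto (h : ∀ n, HasNewtonRepresentation (u n) (f n))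
    (hu : TendstoLocallyDominated u u₀ b l) (hf : TendstoLocallyDominated f f₀ c l) :
    HasNewtonRepresentation u₀ f₀ := by
  intro x η hball
  obtain ⟨C, hC⟩ := exists_abs_parametrixRemainder_le η
  have hx : x ≠ 0 := hball (mem_closedBall_self η.rOut_pos.le)
  have hremainder : Integrable (parametrixRemainder η 0) :=
    (integrable_ballPow (by norm_num)).mono'
      (measurable_parametrixRemainder η 0).aestronglyMeasurable
      ((volume.ae_ne 0).mono fun z hz => hC 0 le_rfl z hz)
  have hparametrix : Integrable (parametrix η 0) :=
    (integrable_ballPow (by norm_num)).mono' (measurable_parametrix η 0).aestronglyMeasurable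
      ((volume.ae_ne 0).mono fun z hz => abs_parametrix_le η le_rfl hz)
  exact tendsto_nhds_unique ((hu.tendsto x hx).const_mul _)
    (((hu.tendsto_convolution hremainder hball fun _ => parametrixRemainder_eq_zero η 0).sub
      (hf.tendsto_convolution hparametrix hball fun _ => parametrix_eq_zero η 0)).congr
        fun n => (h n x η hball).symm)

end LocallyDominatedLimits

theorem IsLocallyBounded.abs {u : E3 → ℝ} (hu : IsLocallyBounded u) :
    IsLocallyBounded fun x => |u x| where
  measurable := hu.measurable.abs
  exists_bound K hK hKs := by simpa only [abs_abs] using hu.exists_bound K hK hKs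

theorem IsWeakSolution.lap_eq {u f : E3 → ℝ} {x : E3} (h : IsWeakSolution u f)
    (hu : ∀ y ≠ 0, ContDiffAt ℝ 2 u y) (hf : ContinuousOn f puncturedSpace) (hx : x ≠ 0) :
    lap u x = f x := by
  have hlap : ContinuousOn (lap u) puncturedSpace := fun y hy =>
    (continuousAt_lap (hu y hy)).continuousWithinAt
  have hopen := isOpen_puncturedSpace
  have hae := hopen.ae_eq_zero_of_integral_contDiff_smul_eq_zero (μ := volume)
    ((hlap.sub hf).locallyIntegrableOn hopen.measurableSet) fun φ hφ hφc hφs => ?_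
  · have hae' : lap u =ᵐ[volume.restrict puncturedSpace] f :=
      (ae_restrict_iff' hopen.measurableSet).2
        (hae.mono fun y hy hy0 => sub_eq_zero.1 (hy hy0))
    exact Measure.eqOn_open_of_ae_eq hae' hopen hlap hf hx
  have hint {g : E3 → ℝ} (hg : ContinuousOn g puncturedSpace) : Integrable fun x => g x * φ x :=
    (continuous_mul_of_tsupport_subset hopen hg hφ.continuous hφs).integrable_of_hasCompactSupport
      hφc.mul_left
  have hφ2 : ContDiff ℝ 2 φ := hφ.of_le (WithTop.coe_le_coe.2 le_top)
  have hweak : ∫ x, u x * lap φ x = ∫ x, lap u x * φ x :=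
    integral_mul_lap_eq (n := stdVec 0) (by simp [stdVec])
      (fun y hy => ((hu y hy).of_le (by norm_num)).contDiffWithinAt) hlap
      (fun y hy _ => ⟨differentiableAt_fderiv_of_contDiffAt_two (hu y hy), rfl⟩) hφ2 hφc hφs
  calc ∫ x, φ x • (lap u x - f x) = ∫ x, (lap u x * φ x - f x * φ x) := by
        simp only [smul_eq_mul, mul_sub, mul_comm]
    _ = 0 := by rw [integral_sub (hint hlap) (hint hf), ← hweak, h φ hφ2 hφc hφs, sub_self]

section ExtremeLimit

variable {A J : ℝ} {P x : E3} {σ : E3 → ℝ} {s : ℝ} {u : ℝ → E3 → ℝ}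

theorem tendsto_Fnl (A J : ℝ) (P : E3) (σ : E3 → ℝ) (hx : x ≠ 0) {ι : Type*} {l : Filter ι}
    {Φ : ι → ℝ} {Φ₀ : ℝ} (hΦ₀ : Φ₀ ≠ 0) (h : Tendsto Φ l (nhds Φ₀)) :
    Tendsto (fun n => Fnl A J P σ x (Φ n)) l (nhds (Fnl A J P σ x Φ₀)) := by
  have : ‖x‖ ≠ 0 := norm_ne_zero_iff.2 hx
  exact (tendsto_const_nhds.div ((h.pow 7).const_mul _) (by positivity)).sub
    (tendsto_const_nhds.div ((h.pow 3).const_mul _) (by positivity))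

/-- The pointwise limit `u₀` of the family `u_μ` as `μ ↓ 0`, with value `0` at the origin, where
the family may be unbounded. -/
def extremeLimit (u : ℝ → E3 → ℝ) (x : E3) : ℝ :=
  if x = 0 then 0 else limUnder (nhdsWithin 0 (Ioi 0)) fun μ => u μ x

theorem tendsto_extremeLimit (hu : ∀ μ > (0 : ℝ), IsSolμ A J P σ μ (u μ))
    (hD : IsPunctureData A J σ) (hσs : ∀ x, σ x ≤ s) (hx : x ≠ 0) :
    Tendsto (fun μ => u μ x) (nhdsWithin 0 (Ioi 0)) (nhds (extremeLimit u x)) := by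
  obtain ⟨C, -, hC⟩ := exists_forall_isSolμ_le_norm_rpow P hD hσs (β := 1 / 2) le_rfl (by norm_num)
  have hanti : MonotoneOn (fun μ => -u μ x) (Ioo 0 1) := fun μ hμ ν hν hle =>
    neg_le_neg ((hu ν hν.1).le_of_le (hu μ hμ.1) hD hμ.1.le hle hx)
  have hbdd : BddBelow ((fun μ => -u μ x) '' Ioo 0 1) := by
    refine ⟨-(C * ‖x‖ ^ (-(1 / 2) : ℝ)), ?_⟩
    rintro _ ⟨μ, hμ, rfl⟩
    exact neg_le_neg (hC μ hμ.1.le (u μ) (hu μ hμ.1) x hx)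
  have hlim := (hanti.tendsto_nhdsWithin_Ioo_right ⟨1 / 2, by norm_num⟩ hbdd).neg
  simp only [neg_neg] at hlim
  rw [extremeLimit, if_neg hx]
  exact tendsto_nhds_limUnder ⟨_, hlim⟩

theorem extremeLimit_nonneg (hu : ∀ μ > (0 : ℝ), IsSolμ A J P σ μ (u μ))
    (hD : IsPunctureData A J σ) (hσs : ∀ x, σ x ≤ s) (x : E3) : 0 ≤ extremeLimit u x := by
  rcases eq_or_ne x 0 with rfl | hx
  · simp [extremeLimit]
  · exact ge_of_tendsto (tendsto_extremeLimit hu hD hσs hx)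
      (eventually_mem_nhdsWithin.mono fun μ hμ => (hu μ hμ).1 x)

theorem extremeLimit_le {a : ℝ} (hu : ∀ μ > (0 : ℝ), IsSolμ A J P σ μ (u μ))
    (hD : IsPunctureData A J σ) (hσs : ∀ x, σ x ≤ s) (hx : x ≠ 0) (ha : ∀ μ > 0, u μ x ≤ a) :
    extremeLimit u x ≤ a :=
  le_of_tendsto (tendsto_extremeLimit hu hD hσs hx) (eventually_mem_nhdsWithin.mono ha)

theorem le_extremeLimit {μ : ℝ} (hu : ∀ μ > (0 : ℝ), IsSolμ A J P σ μ (u μ))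
    (hD : IsPunctureData A J σ) (hσs : ∀ x, σ x ≤ s) (hμ : 0 < μ) (hx : x ≠ 0) :
    u μ x ≤ extremeLimit u x :=
  ge_of_tendsto (tendsto_extremeLimit hu hD hσs hx) <| by
    filter_upwards [Ioo_mem_nhdsGT hμ] with ν hν
    exact (hu μ hμ).le_of_le (hu ν hν.1) hD hν.1.le hν.2.le hx

theorem isLocallyBounded_extremeLimit (hu : ∀ μ > (0 : ℝ), IsSolμ A J P σ μ (u μ))
    (hD : IsPunctureData A J σ) (hσs : ∀ x, σ x ≤ s) : IsLocallyBounded (extremeLimit u) where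
  measurable := by
    obtain ⟨μ, -, hμpos, hμ⟩ := exists_seq_strictAnti_tendsto' (x := (0 : ℝ)) one_pos
    have hμ' : Tendsto μ atTop (nhdsWithin 0 (Ioi 0)) :=
      tendsto_nhdsWithin_iff.2 ⟨hμ, .of_forall fun n => (hμpos n).1⟩
    refine measurable_of_tendsto_metrizable (f := fun n x => if x = 0 then 0 else u (μ n) x)
      (fun n => Measurable.ite (measurableSet_singleton 0) measurable_const
        (hu _ (hμpos n).1).2.1.continuous.measurable) (tendsto_pi_nhds.2 fun x => ?_)
    rcases eq_or_ne x 0 with rfl | hx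
    · simp [extremeLimit]
    · simpa [hx, Function.comp_def] using (tendsto_extremeLimit hu hD hσs hx).comp hμ'
  exists_bound K hK hKs := by
    obtain ⟨C, -, hC⟩ :=
      exists_forall_isSolμ_le_norm_rpow P hD hσs (β := 1 / 2) le_rfl (by norm_num)
    have hcont : ContinuousOn (fun x : E3 => C * ‖x‖ ^ (-(1 / 2) : ℝ)) K := fun x hx =>
      (continuousAt_const.mul
        (contDiffAt_norm_rpow (n := 0) (hKs hx) _).continuousAt).continuousWithinAt
    obtain ⟨M, hM⟩ := hK.exists_bound_of_continuousOn hcont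
    refine ⟨M, fun x hx => ?_⟩
    rw [abs_of_nonneg (extremeLimit_nonneg hu hD hσs x)]
    exact (extremeLimit_le hu hD hσs (hKs hx) fun μ hμ =>
      hC μ hμ.le (u μ) (hu μ hμ) x (hKs hx)).trans ((le_abs_self _).trans (hM x hx))

theorem one_le_conformalFactor_extremeLimit (hu : ∀ μ > (0 : ℝ), IsSolμ A J P σ μ (u μ))
    (hD : IsPunctureData A J σ) (hσs : ∀ x, σ x ≤ s) (x : E3) :
    1 ≤ conformalFactor 0 (extremeLimit u) x :=
  one_le_conformalFactor le_rfl (extremeLimit_nonneg hu hD hσs x)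

variable {μ : ℕ → ℝ}

theorem tendstoLocallyDominated_extremeLimit (hu : ∀ μ > (0 : ℝ), IsSolμ A J P σ μ (u μ))
    (hD : IsPunctureData A J σ) (hσs : ∀ x, σ x ≤ s) (hμpos : ∀ n, 0 < μ n)
    (hμ : Tendsto μ atTop (nhds 0)) :
    TendstoLocallyDominated (fun n => u (μ n)) (extremeLimit u) (extremeLimit u) atTop where
  measurable n := (hu _ (hμpos n)).2.1.continuous.measurable
  abs_le n x hx := by
    rw [abs_of_nonneg ((hu _ (hμpos n)).1 x)]
    exact le_extremeLimit hu hD hσs (hμpos n) hx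
  tendsto x hx := (tendsto_extremeLimit hu hD hσs hx).comp
    (tendsto_nhdsWithin_iff.2 ⟨hμ, .of_forall hμpos⟩)
  isLocallyBounded := isLocallyBounded_extremeLimit hu hD hσs

theorem tendstoLocallyDominated_Fnl_extremeLimit (hu : ∀ μ > (0 : ℝ), IsSolμ A J P σ μ (u μ))
    (hD : IsPunctureData A J σ) (hσs : ∀ x, σ x ≤ s) (hμpos : ∀ n, 0 < μ n)
    (hμ : Tendsto μ atTop (nhds 0)) :
    TendstoLocallyDominated (fun n x => Fnl A J P σ x (conformalFactor (μ n) (u (μ n)) x))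
      (fun x => Fnl A J P σ x (conformalFactor 0 (extremeLimit u) x))
      (fun x => |Fnl A J P σ x 1|) atTop where
  measurable n := measurable_Fnl A J P hD.smooth.continuous.measurable
    (measurable_conformalFactor _ (hu _ (hμpos n)).2.1.continuous.measurable)
  abs_le n x hx := abs_Fnl_le_abs_Fnl A J P hD.nonneg hx one_pos
    ((hu _ (hμpos n)).one_le_conformalFactor (hμpos n).le x)
  tendsto x hx := by
    have hlim := tendstoLocallyDominated_extremeLimit hu hD hσs hμpos hμ
    exact tendsto_Fnl A J P σ hx
      (one_pos.trans_le (one_le_conformalFactor_extremeLimit hu hD hσs x)).ne'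
      (((hμ.div_const _).const_add 1).add (hlim.tendsto x hx))
  isLocallyBounded := (isLocallyBounded_Fnl A J P hD.smooth hD.nonneg measurable_const
    fun _ => le_rfl).abs

theorem contDiffAt_extremeLimit (hu : ∀ μ > (0 : ℝ), IsSolμ A J P σ μ (u μ))
    (hD : IsPunctureData A J σ) (hσs : ∀ x, σ x ≤ s) (n : ℕ) (hx : x ≠ 0) :
    ContDiffAt ℝ n (extremeLimit u) x := by
  obtain ⟨μ, -, hμpos, hμ⟩ := exists_seq_strictAnti_tendsto' (x := (0 : ℝ)) one_pos
  have hμpos (n) : 0 < μ n := (hμpos n).1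
  have hrep := HasNewtonRepresentation.of_tendsto
    (fun n => (hu _ (hμpos n)).hasNewtonRepresentation hD (hμpos n).le)
    (tendstoLocallyDominated_extremeLimit hu hD hσs hμpos hμ)
    (tendstoLocallyDominated_Fnl_extremeLimit hu hD hσs hμpos hμ)
  exact hrep.contDiffAt hD.smooth hD.nonneg (isLocallyBounded_extremeLimit hu hD hσs)
    (one_le_conformalFactor_extremeLimit hu hD hσs) n hx

theorem lap_extremeLimit (hu : ∀ μ > (0 : ℝ), IsSolμ A J P σ μ (u μ))
    (hD : IsPunctureData A J σ) (hσs : ∀ x, σ x ≤ s) (hx : x ≠ 0) :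
    lap (extremeLimit u) x = Fnl A J P σ x (conformalFactor 0 (extremeLimit u) x) := by
  obtain ⟨μ, -, hμpos, hμ⟩ := exists_seq_strictAnti_tendsto' (x := (0 : ℝ)) one_pos
  have hμpos (n) : 0 < μ n := (hμpos n).1
  have hweak := IsWeakSolution.of_tendsto
    (fun n => (hu _ (hμpos n)).isWeakSolution hD (hμpos n).le)
    (tendstoLocallyDominated_extremeLimit hu hD hσs hμpos hμ)
    (tendstoLocallyDominated_Fnl_extremeLimit hu hD hσs hμpos hμ)
  have hsmooth (n : ℕ) (y : E3) (hy : y ≠ 0) := contDiffAt_extremeLimit hu hD hσs n hy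
  refine hweak.lap_eq (hsmooth 2) (fun y hy => ?_) hx
  exact (contDiffAt_Fnl A J P hD.smooth hy (contDiffAt_conformalFactor 0 hy (hsmooth 0 y hy))
    (one_pos.trans_le
      (one_le_conformalFactor_extremeLimit hu hD hσs y))).continuousAt.continuousWithinAt

end ExtremeLimit

section PuncturedSmooth

variable {u v : E3 → ℝ} {x : E3}

theorem contDiffOn_pderiv (h : ContDiffOn ℝ (⊤ : ℕ∞) u puncturedSpace) (i : Fin 3) :
    ContDiffOn ℝ (⊤ : ℕ∞) (pderiv i u) puncturedSpace := fun _ hx =>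
  (contDiffAt_pderiv (h.contDiffAt (isOpen_puncturedSpace.mem_nhds hx)) (by simp)
    i).contDiffWithinAt

theorem contDiffAt_two_of_contDiffOn (h : ContDiffOn ℝ (⊤ : ℕ∞) u puncturedSpace) (hx : x ≠ 0) :
    ContDiffAt ℝ 2 u x :=
  contDiffAt_infty.1 (h.contDiffAt (isOpen_puncturedSpace.mem_nhds hx)) 2

theorem differentiableAt_of_contDiffOn (h : ContDiffOn ℝ (⊤ : ℕ∞) u puncturedSpace) (hx : x ≠ 0) :
    DifferentiableAt ℝ u x :=
  (contDiffAt_two_of_contDiffOn h hx).differentiableAt two_ne_zero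

theorem contDiffOn_lap (h : ContDiffOn ℝ (⊤ : ℕ∞) u puncturedSpace) :
    ContDiffOn ℝ (⊤ : ℕ∞) (lap u) puncturedSpace :=
  (ContDiffOn.sum fun i _ => contDiffOn_pderiv (contDiffOn_pderiv h i) i).congr fun _ hx =>
    lap_eq_sum_pderiv (contDiffAt_two_of_contDiffOn h hx)

theorem pderiv_comm (h : ContDiffAt ℝ 2 u x) (i j : Fin 3) :
    pderiv i (pderiv j u) x = pderiv j (pderiv i u) x := by
  rw [pderiv_pderiv h, pderiv_pderiv h]
  exact h.isSymmSndFDerivAt (by simp) _ _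

theorem pderiv_sum {ι : Type*} {s : Finset ι} {f : ι → E3 → ℝ}
    (h : ∀ j ∈ s, DifferentiableAt ℝ (f j) x) (i : Fin 3) :
    pderiv i (fun y => ∑ j ∈ s, f j y) x = ∑ j ∈ s, pderiv i (f j) x := by
  simp [pderiv, fderiv_fun_sum h]

theorem lap_pderiv (h : ContDiffOn ℝ (⊤ : ℕ∞) u puncturedSpace) (hx : x ≠ 0) (i : Fin 3) :
    lap (pderiv i u) x = pderiv i (lap u) x := by
  have hnear := isOpen_puncturedSpace.mem_nhds hx
  have hlap : lap u =ᶠ[nhds x] fun y => ∑ j, pderiv j (pderiv j u) y := by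
    filter_upwards [hnear] with y hy using lap_eq_sum_pderiv (contDiffAt_two_of_contDiffOn h hy)
  have hp (j : Fin 3) := contDiffOn_pderiv h j
  rw [pderiv_congr hlap, pderiv_sum fun j _ =>
      differentiableAt_of_contDiffOn (contDiffOn_pderiv (hp j) j) hx,
    lap_eq_sum_pderiv (contDiffAt_two_of_contDiffOn (hp i) hx)]
  refine Finset.sum_congr rfl fun j _ => ?_
  rw [pderiv_comm (contDiffAt_two_of_contDiffOn (hp j) hx)]
  refine pderiv_congr ?_ j
  filter_upwards [hnear] with y hy using pderiv_comm (contDiffAt_two_of_contDiffOn h hy) j i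

theorem contDiffOn_norm_rpow {n : WithTop ℕ∞} (p : ℝ) :
    ContDiffOn ℝ n (fun x : E3 => ‖x‖ ^ p) puncturedSpace :=
  fun _ hx => (contDiffAt_norm_rpow hx p).contDiffWithinAt

theorem contDiff_of_tsupport {n : WithTop ℕ∞} (h : ∀ x ∈ tsupport u, ContDiffAt ℝ n u x) :
    ContDiff ℝ n u :=
  contMDiff_iff_contDiff.1 (contMDiff_of_tsupport fun x hx => (h x hx).contMDiffAt)

theorem IsTestFun.mul_left {φ : E3 → ℝ} (hφ : IsTestFun φ)
    (hu : ContDiffOn ℝ (⊤ : ℕ∞) u puncturedSpace) : IsTestFun fun x => u x * φ x := by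
  have hsub : tsupport (fun x => u x * φ x) ⊆ tsupport φ := tsupport_mul_subset_right
  exact ⟨contDiff_of_tsupport fun x hx => (hu.contDiffAt
      (isOpen_puncturedSpace.mem_nhds (hφ.2.2 (hsub hx)))).mul hφ.1.contDiffAt,
    hφ.2.1.mul_left, hsub.trans hφ.2.2⟩

theorem IsTestFun.pderiv {φ : E3 → ℝ} (hφ : IsTestFun φ) (i : Fin 3) : IsTestFun (pderiv i φ) :=
  ⟨contDiff_pderiv hφ.1 i, hφ.2.1.mono' (subset_closure.trans (tsupport_pderiv_subset i φ)),
    (tsupport_pderiv_subset i φ).trans hφ.2.2⟩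

theorem IsTestFun.lap {φ : E3 → ℝ} (hφ : IsTestFun φ) : IsTestFun (lap φ) :=
  ⟨contDiff_lap hφ.1, hφ.2.1.mono' (subset_closure.trans (tsupport_lap_subset φ)),
    (tsupport_lap_subset φ).trans hφ.2.2⟩

theorem IsTestFun.integrable_mul {f φ : E3 → ℝ} (hφ : IsTestFun φ)
    (hf : ContinuousOn f puncturedSpace) : Integrable fun x => f x * φ x :=
  (continuous_mul_of_tsupport_subset isOpen_puncturedSpace hf hφ.1.continuous
    hφ.2.2).integrable_of_hasCompactSupport hφ.2.1.mul_left

end PuncturedSmooth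

section LogarithmicCutoffs

/-- The profile of the logarithmic cutoffs: equal to `1` on `[-1, 1]` and to `0` off `(-2, 2)`. -/
def logCutoffProfile : ContDiffBump (0 : ℝ) := ⟨1, 2, one_pos, one_lt_two⟩

/-- The cutoff `θ(κ log |x|²)`, set to `0` at the origin, where `Real.log` has the value `0`. -/
def logCutoff (κ : ℝ) : E3 → ℝ :=
  puncturedSpace.indicator fun x => logCutoffProfile (κ * Real.log (‖x‖ ^ 2))

variable {κ B : ℝ} {x : E3}

theorem exists_forall_abs_deriv_logCutoffProfile_le :
    ∃ B, ∀ s, |deriv logCutoffProfile s| ≤ B ∧ |deriv (deriv logCutoffProfile) s| ≤ B := by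
  have hsmooth : ContDiff ℝ (⊤ : ℕ∞) logCutoffProfile := logCutoffProfile.contDiff
  have hsmooth' := (contDiff_infty_iff_deriv.1 hsmooth).2
  have hsupp : HasCompactSupport (deriv logCutoffProfile) :=
    logCutoffProfile.hasCompactSupport.deriv
  obtain ⟨B₁, hB₁⟩ := hsmooth'.continuous.bounded_above_of_compact_support hsupp
  obtain ⟨B₂, hB₂⟩ := (contDiff_infty_iff_deriv.1
    hsmooth').2.continuous.bounded_above_of_compact_support hsupp.deriv
  exact ⟨max B₁ B₂, fun s => ⟨(hB₁ s).trans (le_max_left _ _), (hB₂ s).trans (le_max_right _ _)⟩⟩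

theorem logCutoff_nonneg (κ : ℝ) (x : E3) : 0 ≤ logCutoff κ x :=
  indicator_nonneg (fun _ _ => logCutoffProfile.nonneg) x

theorem logCutoff_le_one (κ : ℝ) (x : E3) : logCutoff κ x ≤ 1 :=
  indicator_le' (fun _ _ => logCutoffProfile.le_one) (fun _ _ => zero_le_one) x

theorem logCutoff_eq_one (hx : x ≠ 0) (h : |κ * Real.log (‖x‖ ^ 2)| ≤ 1) : logCutoff κ x = 1 := by
  refine (indicator_of_mem (s := puncturedSpace) hx _).trans ?_
  exact logCutoffProfile.one_of_mem_closedBall (by simpa [logCutoffProfile] using h)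

theorem logCutoff_eventuallyEq (κ : ℝ) (hx : x ≠ 0) :
    logCutoff κ =ᶠ[nhds x] fun y => logCutoffProfile (κ * Real.log (‖y‖ ^ 2)) := by
  filter_upwards [isOpen_puncturedSpace.mem_nhds hx] with y hy using indicator_of_mem hy _

theorem tsupport_logCutoff_subset (hκ : 0 < κ) :
    tsupport (logCutoff κ) ⊆ closedBall 0 (Real.exp κ⁻¹) \ ball 0 (Real.exp (-κ⁻¹)) := by
  refine closure_minimal (fun x hx => ?_) (isClosed_closedBall.sdiff isOpen_ball)
  have hx0 : x ≠ 0 := mem_of_indicator_ne_zero hx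
  have hr := norm_pos_iff.2 hx0
  have hlog : |κ * (2 * Real.log ‖x‖)| < 2 := by
    by_contra! hfar
    refine hx ((indicator_of_mem hx0 _).trans (logCutoffProfile.zero_of_le_dist ?_))
    rw [Real.log_pow]
    simpa [logCutoffProfile] using hfar
  rw [abs_lt] at hlog
  rw [Set.mem_sdiff, mem_closedBall_zero_iff, mem_ball_zero_iff, not_lt,
    ← Real.log_le_iff_le_exp hr, ← Real.le_log_iff_exp_le hr, inv_eq_one_div, neg_le,
    le_div_iff₀ hκ, le_div_iff₀ hκ]
  constructor <;> linarith

theorem isTestFun_logCutoff (hκ : 0 < κ) : IsTestFun (logCutoff κ) := by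
  have hsub := tsupport_logCutoff_subset hκ
  have hzero : tsupport (logCutoff κ) ⊆ puncturedSpace := fun x hx h0 =>
    (hsub hx).2 (h0 ▸ mem_ball_self (Real.exp_pos _))
  refine ⟨contDiff_of_tsupport fun x hx => ?_, HasCompactSupport.of_support_subset_isCompact
    ((isCompact_closedBall 0 _).diff isOpen_ball) (subset_closure.trans hsub), hzero⟩
  have hnorm : ContDiffAt ℝ (⊤ : ℕ∞) (fun y : E3 => ‖y‖ ^ 2) x := (contDiff_norm_sq ℝ).contDiffAt
  exact (logCutoffProfile.contDiff.contDiffAt.comp x (contDiffAt_const.mul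
    (hnorm.log (pow_ne_zero 2 (norm_ne_zero_iff.2 (hzero hx)))))).congr_of_eventuallyEq
    (logCutoff_eventuallyEq κ (hzero hx))

theorem hasDerivAt_comp_const_mul_log {f : ℝ → ℝ} (hf : Differentiable ℝ f) (κ : ℝ) {t : ℝ}
    (ht : t ≠ 0) :
    HasDerivAt (fun t => f (κ * Real.log t)) (deriv f (κ * Real.log t) * (κ * t⁻¹)) t :=
  (hf _).hasDerivAt.comp t ((Real.hasDerivAt_log ht).const_mul κ)

theorem differentiable_logCutoffProfile : Differentiable ℝ logCutoffProfile :=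
  logCutoffProfile.contDiff.differentiable (n := 1) one_ne_zero

theorem abs_pderiv_logCutoff_le (hκ : 0 ≤ κ) (hB : ∀ s, |deriv logCutoffProfile s| ≤ B)
    (hx : x ≠ 0) (i : Fin 3) : |pderiv i (logCutoff κ) x| ≤ 2 * B * κ * ‖x‖⁻¹ := by
  have := norm_pos_iff.2 hx
  rw [pderiv_congr (logCutoff_eventuallyEq κ hx),
    pderiv_comp_norm_sq (g := fun t => logCutoffProfile (κ * Real.log t))
      (hasDerivAt_comp_const_mul_log differentiable_logCutoffProfile κ (by positivity))]
  simp only [abs_mul, abs_inv, abs_pow, abs_norm, abs_two, abs_of_nonneg hκ]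
  calc 2 * |x i| * (|deriv logCutoffProfile (κ * Real.log (‖x‖ ^ 2))| * (κ * (‖x‖ ^ 2)⁻¹))
      ≤ 2 * ‖x‖ * (B * (κ * (‖x‖ ^ 2)⁻¹)) := by
        gcongr
        · exact PiLp.norm_apply_le x i
        · exact hB _
    _ = 2 * B * κ * ‖x‖⁻¹ := by field

theorem abs_lap_logCutoff_le (hκ : 0 ≤ κ) (hκ1 : κ ≤ 1)
    (hB : ∀ s, |deriv logCutoffProfile s| ≤ B ∧ |deriv (deriv logCutoffProfile) s| ≤ B)
    (hx : x ≠ 0) : |lap (logCutoff κ) x| ≤ 6 * B * κ * (‖x‖ ^ 2)⁻¹ := by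
  have ht : ‖x‖ ^ 2 ≠ 0 := pow_ne_zero 2 (norm_ne_zero_iff.2 hx)
  have hfirst {t : ℝ} (ht : t ≠ 0) :=
    hasDerivAt_comp_const_mul_log differentiable_logCutoffProfile κ ht
  have hsecond := (hasDerivAt_comp_const_mul_log ((contDiff_infty_iff_deriv.1
    logCutoffProfile.contDiff).2.differentiable (by simp)) κ ht).mul
      ((hasDerivAt_inv ht).const_mul κ)
  rw [lap_congr (logCutoff_eventuallyEq κ hx),
    lap_comp_norm_sq (g := fun t => logCutoffProfile (κ * Real.log t))
      ((eventually_ne_nhds ht).mono fun _ => hfirst) hsecond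
      (logCutoffProfile.contDiff.contDiffAt.comp _
        (contDiffAt_const.mul (contDiffAt_id.log ht)))]
  obtain ⟨hd, hdd⟩ := hB (κ * Real.log (‖x‖ ^ 2))
  set d := deriv logCutoffProfile (κ * Real.log (‖x‖ ^ 2))
  set d' := deriv (deriv logCutoffProfile) (κ * Real.log (‖x‖ ^ 2))
  have hfactor : |4 * κ * d' + 2 * d| ≤ 4 * 1 * B + 2 * B := by
    refine (abs_add_le _ _).trans ?_
    simp only [abs_mul, Nat.abs_ofNat, abs_of_nonneg hκ]
    gcongr
  calc _ = |(4 * κ * d' + 2 * d) * (κ * (‖x‖ ^ 2)⁻¹)| := by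
        congr 1
        field
    _ = |4 * κ * d' + 2 * d| * (κ * (‖x‖ ^ 2)⁻¹) := by
        rw [abs_mul, abs_of_nonneg (by positivity : 0 ≤ κ * (‖x‖ ^ 2)⁻¹)]
    _ ≤ (4 * 1 * B + 2 * B) * (κ * (‖x‖ ^ 2)⁻¹) := by gcongr
    _ = 6 * B * κ * (‖x‖ ^ 2)⁻¹ := by ring

/-- Test functions `χₙ` in `ℝ³ ∖ {0}` that exhaust it, with scale invariant derivative bounds
`B / (n + 1)` that tend to zero. -/
structure IsCutoffSequence (χ : ℕ → E3 → ℝ) (B : ℝ) : Prop where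
  const_nonneg : 0 ≤ B
  isTestFun : ∀ n, IsTestFun (χ n)
  nonneg : ∀ n x, 0 ≤ χ n x
  le_one : ∀ n x, χ n x ≤ 1
  abs_pderiv_le : ∀ n i x, x ≠ 0 → |pderiv i (χ n) x| ≤ B / (n + 1) * ‖x‖⁻¹
  abs_lap_le : ∀ n x, x ≠ 0 → |lap (χ n) x| ≤ B / (n + 1) * (‖x‖ ^ 2)⁻¹
  tendsto_one : ∀ x, x ≠ 0 → Tendsto (fun n => χ n x) atTop (nhds 1)

theorem exists_isCutoffSequence : ∃ χ B, IsCutoffSequence χ B := by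
  obtain ⟨B, hB⟩ := exists_forall_abs_deriv_logCutoffProfile_le
  have hB0 : 0 ≤ B := (abs_nonneg _).trans (hB 0).1
  have hκ0 (n : ℕ) : 0 < 1 / ((n : ℝ) + 1) := Nat.one_div_pos_of_nat
  refine ⟨fun n => logCutoff (1 / (n + 1)), 6 * B, by positivity,
    fun n => isTestFun_logCutoff (hκ0 n),
    fun n => logCutoff_nonneg _, fun n => logCutoff_le_one _, fun n i x hx => ?_,
    fun n x hx => ?_, fun x hx => ?_⟩
  · rw [div_eq_mul_one_div (6 * B)]
    refine (abs_pderiv_logCutoff_le (hκ0 n).le (fun s => (hB s).1) hx i).trans ?_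
    gcongr
    norm_num
  · rw [div_eq_mul_one_div (6 * B)]
    have hκ1 : 1 / ((n : ℝ) + 1) ≤ 1 := div_le_self zero_le_one (by simp)
    exact abs_lap_logCutoff_le (hκ0 n).le hκ1 hB hx
  · have hlog : Tendsto (fun n : ℕ => 1 / ((n : ℝ) + 1) * Real.log (‖x‖ ^ 2)) atTop (nhds 0) := by
      simpa only [zero_mul] using
        tendsto_one_div_add_atTop_nhds_zero_nat.mul_const (Real.log (‖x‖ ^ 2))
    refine tendsto_const_nhds.congr' ?_
    filter_upwards [hlog.eventually (Metric.closedBall_mem_nhds 0 one_pos)] with n hn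
    exact (logCutoff_eq_one hx (by simpa using hn)).symm

end LogarithmicCutoffs

section WeightedIdentities

variable {w a f g : E3 → ℝ}

theorem integral_mul_pderiv_eq_neg (hf : ContDiffOn ℝ (⊤ : ℕ∞) f puncturedSpace)
    (hg : IsTestFun g) (i : Fin 3) :
    ∫ x, f x * pderiv i g x = -∫ x, pderiv i f x * g x :=
  integral_mul_fderiv_eq_neg_fderiv_mul_of_integrable
    (hg.integrable_mul (contDiffOn_pderiv hf i).continuousOn)
    ((hg.pderiv i).integrable_mul hf.continuousOn) (hg.integrable_mul hf.continuousOn)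
    (fun _ hx => differentiableAt_of_contDiffOn hf (hg.2.2 hx))
    fun x _ => hg.1.differentiable (by simp) x

theorem integral_mul_lap_eq_integral_lap_mul (hf : ContDiffOn ℝ (⊤ : ℕ∞) f puncturedSpace)
    (hg : IsTestFun g) : ∫ x, f x * lap g x = ∫ x, lap f x * g x :=
  integral_mul_lap_eq (n := stdVec 0) (by simp) (hf.of_le (by exact_mod_cast le_top))
    (contDiffOn_lap hf).continuousOn
    (fun _ hx _ => ⟨differentiableAt_fderiv_of_contDiffAt_two (contDiffAt_two_of_contDiffOn hf hx),
      rfl⟩)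
    (contDiff_infty.1 hg.1 2) hg.2.1 hg.2.2

theorem continuousOn_sum_sq_pderiv (hw : ContDiffOn ℝ (⊤ : ℕ∞) w puncturedSpace) :
    ContinuousOn (fun x => ∑ i, pderiv i w x ^ 2) puncturedSpace :=
  continuousOn_finsetSum _ fun i _ => (contDiffOn_pderiv hw i).continuousOn.pow 2

theorem integral_sum_sq_pderiv_mul (hw : ContDiffOn ℝ (⊤ : ℕ∞) w puncturedSpace)
    (ha : IsTestFun a) :
    ∫ x, (∑ i, pderiv i w x ^ 2) * a x =
      ∫ x, (w x ^ 2 / 2 * lap a x - w x * lap w x * a x) := by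
  have hsq : ContinuousOn (fun x => w x ^ 2 / 2) puncturedSpace :=
    (hw.continuousOn.pow 2).div_const 2
  have hmul := (hw.mul (contDiffOn_lap hw)).continuousOn
  have hlap (x : E3) (hx : x ∈ puncturedSpace) :
      lap (fun y => w y * w y / 2) x = (∑ i, pderiv i w x ^ 2) + w x * lap w x := by
    have h2 := contDiffAt_two_of_contDiffOn hw hx
    simp_rw [div_eq_inv_mul]
    rw [lap_const_mul _ (h2.mul h2), lap_mul h2 h2]
    simp only [← sq]
    ring
  have hgreen := integral_mul_lap_eq_integral_lap_mul ((hw.mul hw).div_const 2) ha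
  have hgrad := ha.integrable_mul (continuousOn_sum_sq_pderiv hw)
  rw [integral_sub (ha.lap.integrable_mul hsq)
    (ha.integrable_mul hmul), eq_sub_iff_add_eq, ← integral_add hgrad (ha.integrable_mul hmul)]
  simp_rw [← add_mul, sq (w _)]
  refine (hgreen.trans (integral_congr_ae ?_)).symm
  filter_upwards [Measure.ae_ne volume 0] with x hx using congrArg (· * a x) (hlap x hx)

theorem integral_sum_sq_pderiv_pderiv_mul (hw : ContDiffOn ℝ (⊤ : ℕ∞) w puncturedSpace)
    (ha : IsTestFun a) (i : Fin 3) :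
    ∫ x, (∑ j, pderiv j (pderiv i w) x ^ 2) * a x =
      ∫ x, (pderiv i w x ^ 2 / 2 * lap a x +
        lap w x * (pderiv i (pderiv i w) x * a x + pderiv i w x * pderiv i a x)) := by
  have hv := contDiffOn_pderiv hw i
  have hva := ha.mul_left hv
  have hparts := integral_mul_pderiv_eq_neg (contDiffOn_lap hw) hva i
  have hsq : Integrable fun x => pderiv i w x ^ 2 / 2 * lap a x :=
    ha.lap.integrable_mul ((hv.continuousOn.pow 2).div_const 2)
  have hpderiv : ∀ x, x ≠ 0 → pderiv i (fun y => pderiv i w y * a y) x =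
      pderiv i (pderiv i w) x * a x + pderiv i w x * pderiv i a x := fun x hx =>
    pderiv_mul (differentiableAt_of_contDiffOn hv hx) (ha.1.differentiable (by simp) x) i
  have hcross := (hva.pderiv i).integrable_mul (contDiffOn_lap hw).continuousOn
  calc ∫ x, (∑ j, pderiv j (pderiv i w) x ^ 2) * a x
      = ∫ x, (pderiv i w x ^ 2 / 2 * lap a x - pderiv i w x * lap (pderiv i w) x * a x) :=
        integral_sum_sq_pderiv_mul hv ha
    _ = ∫ x, (pderiv i w x ^ 2 / 2 * lap a x -
          pderiv i (lap w) x * (pderiv i w x * a x)) := by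
        refine integral_congr_ae ?_
        filter_upwards [Measure.ae_ne volume 0] with x hx
        rw [lap_pderiv hw hx]
        ring
    _ = ∫ x, (pderiv i w x ^ 2 / 2 * lap a x +
          lap w x * pderiv i (fun y => pderiv i w y * a y) x) := by
        rw [integral_sub hsq (hva.integrable_mul
          (contDiffOn_pderiv (contDiffOn_lap hw) i).continuousOn), integral_add hsq hcross, hparts,
          sub_eq_add_neg]
    _ = _ := by
        refine integral_congr_ae ?_
        filter_upwards [Measure.ae_ne volume 0] with x hx
        rw [hpderiv x hx]

end WeightedIdentities

section WeightedEstimates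

/-- Test functions `0 ≤ a ≤ |x|ᵖ` whose derivatives up to order two scale like those of `|x|ᵖ`:
the admissible weights in the energy estimates, with `C` the scale invariant constant. -/
structure IsTruncatedPower (C p : ℝ) (a : E3 → ℝ) : Prop where
  isTestFun : IsTestFun a
  nonneg : ∀ x, 0 ≤ a x
  le_rpow : ∀ x, a x ≤ ‖x‖ ^ p
  abs_pderiv_le : ∀ x, x ≠ 0 → ∀ i, |pderiv i a x| ≤ C * ‖x‖ ^ (p - 1)
  abs_lap_le : ∀ x, x ≠ 0 → |lap a x| ≤ C * ‖x‖ ^ (p - 2)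

variable {χ : ℕ → E3 → ℝ} {B C p q : ℝ} {w a F : E3 → ℝ} {x : E3}

theorem IsCutoffSequence.abs_pderiv_le_const (hχ : IsCutoffSequence χ B) (n : ℕ) (hx : x ≠ 0)
    (i : Fin 3) : |pderiv i (χ n) x| ≤ B * ‖x‖⁻¹ :=
  (hχ.abs_pderiv_le n i x hx).trans (by
    gcongr
    exact div_le_self hχ.const_nonneg (by simp))

theorem IsCutoffSequence.abs_lap_le_const (hχ : IsCutoffSequence χ B) (n : ℕ) (hx : x ≠ 0) :
    |lap (χ n) x| ≤ B * (‖x‖ ^ 2)⁻¹ :=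
  (hχ.abs_lap_le n x hx).trans (by
    gcongr
    exact div_le_self hχ.const_nonneg (by simp))

theorem abs_pderiv_norm_rpow_le (hx : x ≠ 0) (p : ℝ) (i : Fin 3) :
    |pderiv i (fun y : E3 => ‖y‖ ^ p) x| ≤ |p| * ‖x‖ ^ (p - 1) := by
  have hr := norm_pos_iff.2 hx
  rw [pderiv_norm_rpow hx, abs_mul, abs_mul, abs_of_pos (rpow_pos_of_pos hr _),
    show p - 1 = 1 + (p - 2) by ring, rpow_add hr, rpow_one, mul_assoc]
  gcongr
  exact PiLp.norm_apply_le x i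

theorem IsCutoffSequence.abs_pderiv_norm_rpow_mul_le (hχ : IsCutoffSequence χ B) (p : ℝ) (n : ℕ)
    (hx : x ≠ 0) (i : Fin 3) :
    |pderiv i (fun y => ‖y‖ ^ p * χ n y) x| ≤ (|p| + B) * ‖x‖ ^ (p - 1) := by
  have hr := norm_pos_iff.2 hx
  rw [pderiv_mul ((contDiffAt_norm_rpow (n := 1) hx p).differentiableAt one_ne_zero)
    ((hχ.isTestFun n).1.differentiable (by simp) x)]
  refine (abs_add_le _ _).trans ?_
  rw [abs_mul, abs_mul, abs_of_nonneg (hχ.nonneg n x), abs_of_pos (rpow_pos_of_pos hr p)]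
  calc |pderiv i (fun y : E3 => ‖y‖ ^ p) x| * χ n x + ‖x‖ ^ p * |pderiv i (χ n) x|
      ≤ |p| * ‖x‖ ^ (p - 1) * 1 + ‖x‖ ^ p * (B * ‖x‖⁻¹) := by
        gcongr
        · exact hχ.nonneg n x
        · exact abs_pderiv_norm_rpow_le hx p i
        · exact hχ.le_one n x
        · exact hχ.abs_pderiv_le_const n hx i
    _ = (|p| + B) * ‖x‖ ^ (p - 1) := by
        rw [rpow_sub_one hr.ne']
        ring

theorem IsCutoffSequence.abs_lap_norm_rpow_mul_le (hχ : IsCutoffSequence χ B) (p : ℝ) (n : ℕ)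
    (hx : x ≠ 0) :
    |lap (fun y => ‖y‖ ^ p * χ n y) x| ≤
      (|p * (p + 1)| + 6 * |p| * B + B) * ‖x‖ ^ (p - 2) := by
  have hr := norm_pos_iff.2 hx
  have hp1 : ‖x‖ ^ (p - 1) = ‖x‖ ^ (p - 2) * ‖x‖ := by rw [← rpow_add_one hr.ne']; congr 1; ring
  have hp : ‖x‖ ^ p = ‖x‖ ^ (p - 2) * ‖x‖ ^ 2 := by
    rw [← rpow_add_natCast hr.ne']; congr 1; push_cast; ring
  rw [lap_mul (contDiffAt_norm_rpow hx p)
    (contDiff_infty.1 (hχ.isTestFun n).1 2).contDiffAt, lap_norm_rpow hx]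
  have hcross (i : Fin 3) : |pderiv i (fun y : E3 => ‖y‖ ^ p) x * pderiv i (χ n) x| ≤
      |p| * B * ‖x‖ ^ (p - 2) := by
    rw [abs_mul]
    calc _ ≤ |p| * ‖x‖ ^ (p - 1) * (B * ‖x‖⁻¹) := by
          gcongr
          · exact abs_pderiv_norm_rpow_le hx p i
          · exact hχ.abs_pderiv_le_const n hx i
      _ = |p| * B * ‖x‖ ^ (p - 2) := by rw [hp1]; field
  have hsum := (Finset.abs_sum_le_sum_abs _ _).trans
    (Finset.sum_le_sum fun i (_ : i ∈ Finset.univ) => hcross i)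
  refine (abs_add_three _ _ _).trans ?_
  rw [abs_mul _ (χ n x), abs_mul _ (‖x‖ ^ (p - 2)), abs_of_nonneg (hχ.nonneg n x), abs_mul 2,
    abs_two, abs_mul (‖x‖ ^ p), abs_of_pos (rpow_pos_of_pos hr p),
    abs_of_pos (rpow_pos_of_pos hr (p - 2))]
  calc _ ≤ |p * (p + 1)| * ‖x‖ ^ (p - 2) * 1 +
        2 * (∑ _i : Fin 3, |p| * B * ‖x‖ ^ (p - 2)) + ‖x‖ ^ p * (B * (‖x‖ ^ 2)⁻¹) := by
        gcongr
        · exact hχ.le_one n x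
        · exact hχ.abs_lap_le_const n hx
    _ = _ := by
        rw [hp, Finset.sum_const, Finset.card_fin, nsmul_eq_mul]
        field

theorem IsCutoffSequence.exists_isTruncatedPower (hχ : IsCutoffSequence χ B) (p : ℝ) :
    ∃ C ≥ 0, ∀ n, IsTruncatedPower C p fun x => ‖x‖ ^ p * χ n x := by
  have hB := hχ.const_nonneg
  refine ⟨|p| + |p * (p + 1)| + 6 * |p| * B + B, by positivity, fun n => ⟨?_, fun x => ?_,
    fun x => ?_, fun x hx i => ?_, fun x hx => ?_⟩⟩
  · exact (hχ.isTestFun n).mul_left (contDiffOn_norm_rpow p)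
  · exact mul_nonneg (by positivity) (hχ.nonneg n x)
  · exact mul_le_of_le_one_right (by positivity) (hχ.le_one n x)
  · refine (hχ.abs_pderiv_norm_rpow_mul_le p n hx i).trans ?_
    gcongr
    linarith [abs_nonneg (p * (p + 1)), mul_nonneg (abs_nonneg p) hB]
  · refine (hχ.abs_lap_norm_rpow_mul_le p n hx).trans ?_
    gcongr
    linarith [abs_nonneg p]

theorem aestronglyMeasurable_of_continuousOn_puncturedSpace
    (hF : ContinuousOn F puncturedSpace) : AEStronglyMeasurable F := by
  have hae : (volume : Measure E3).restrict puncturedSpace = volume :=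
    Measure.restrict_eq_self_of_ae_mem (Measure.ae_ne volume 0)
  exact hae ▸ hF.aestronglyMeasurable isOpen_puncturedSpace.measurableSet

theorem IsCutoffSequence.integrable_of_forall_integral_mul_le {M : ℝ} (hχ : IsCutoffSequence χ B)
    (hF : ContinuousOn F puncturedSpace) (hF0 : ∀ x, 0 ≤ F x)
    (hle : ∀ n, ∫ x, F x * χ n x ≤ M) : Integrable F ∧ ∫ x, F x ≤ M := by
  have hint (n : ℕ) : Integrable fun x => F x * χ n x := (hχ.isTestFun n).integrable_mul hF
  have hnonneg (n : ℕ) : 0 ≤ fun x => F x * χ n x := fun x => mul_nonneg (hF0 x) (hχ.nonneg n x)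
  have hlim : ∀ᵐ x, Tendsto (fun n => F x * χ n x) atTop (nhds (F x)) := by
    filter_upwards [Measure.ae_ne volume 0] with x hx
    simpa using (hχ.tendsto_one x hx).const_mul (F x)
  have hfatou : ∫⁻ x, ENNReal.ofReal (F x) ≤ ENNReal.ofReal M := by
    calc ∫⁻ x, ENNReal.ofReal (F x)
        = ∫⁻ x, liminf (fun n => ENNReal.ofReal (F x * χ n x)) atTop :=
          lintegral_congr_ae (hlim.mono fun x hx => (ENNReal.tendsto_ofReal hx).liminf_eq.symm)
      _ ≤ liminf (fun n => ∫⁻ x, ENNReal.ofReal (F x * χ n x)) atTop :=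
          lintegral_liminf_le' fun n => (hint n).aestronglyMeasurable.aemeasurable.ennreal_ofReal
      _ ≤ ENNReal.ofReal M := liminf_le_of_frequently_le' (Frequently.of_forall fun n => by
          rw [← ofReal_integral_eq_lintegral_ofReal (hint n) (ae_of_all _ (hnonneg n))]
          exact ENNReal.ofReal_le_ofReal (hle n))
  have hFint : Integrable F := ⟨aestronglyMeasurable_of_continuousOn_puncturedSpace hF, by
    rw [hasFiniteIntegral_iff_ofReal (ae_of_all _ hF0)]
    exact hfatou.trans_lt ENNReal.ofReal_lt_top⟩
  refine ⟨hFint, (ENNReal.ofReal_le_ofReal_iff ((integral_nonneg (hnonneg 0)).trans (hle 0))).1 ?_⟩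
  rwa [ofReal_integral_eq_lintegral_ofReal hFint (ae_of_all _ hF0)]

theorem abs_mul_mul_rpow_le {r s p p' : ℝ} (hr : 0 < r) (hs : p + p' = 2 * s) (y z : ℝ) :
    |y * z| * r ^ s ≤ (y ^ 2 * r ^ p + z ^ 2 * r ^ p') / 2 := by
  have hsplit : r ^ s = r ^ (p / 2) * r ^ (p' / 2) := by rw [← rpow_add hr]; congr 1; linarith
  have hsq (p : ℝ) : r ^ p = (r ^ (p / 2)) ^ 2 := by rw [← rpow_mul_natCast hr.le]; norm_num
  have := two_mul_le_add_sq (|y| * r ^ (p / 2)) (|z| * r ^ (p' / 2))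
  rw [hsq p, hsq p', hsplit, abs_mul]
  simp only [mul_pow, sq_abs] at this
  linarith

theorem IsTruncatedPower.integral_sum_sq_pderiv_mul_le (ha : IsTruncatedPower C q a)
    (hC : 0 ≤ C) (hw : ContDiffOn ℝ (⊤ : ℕ∞) w puncturedSpace)
    (h0 : Integrable fun x => w x ^ 2 * ‖x‖ ^ (q - 2))
    (h2 : Integrable fun x => lap w x ^ 2 * ‖x‖ ^ (q + 2)) :
    ∫ x, (∑ i, pderiv i w x ^ 2) * a x ≤
      (1 + C) * ∫ x, (w x ^ 2 * ‖x‖ ^ (q - 2) + lap w x ^ 2 * ‖x‖ ^ (q + 2)) := by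
  rw [integral_sum_sq_pderiv_mul hw ha.isTestFun, ← integral_const_mul]
  refine integral_mono_ae ((ha.isTestFun.lap.integrable_mul
    ((hw.continuousOn.pow 2).div_const 2)).sub (ha.isTestFun.integrable_mul
      (hw.mul (contDiffOn_lap hw)).continuousOn)) ((h0.add h2).const_mul _) ?_
  filter_upwards [Measure.ae_ne volume 0] with x hx
  have hr := norm_pos_iff.2 hx
  have hamgm := abs_mul_mul_rpow_le hr (show q - 2 + (q + 2) = 2 * q by ring) (w x) (lap w x)
  have hlap : w x ^ 2 / 2 * lap a x ≤ w x ^ 2 / 2 * (C * ‖x‖ ^ (q - 2)) :=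
    mul_le_mul_of_nonneg_left ((le_abs_self _).trans (ha.abs_lap_le x hx)) (by positivity)
  have hcross : -(w x * lap w x) * a x ≤ |w x * lap w x| * ‖x‖ ^ q :=
    mul_le_mul (neg_le_abs _) (ha.le_rpow x) (ha.nonneg x) (abs_nonneg _)
  have hp0 : 0 ≤ w x ^ 2 * ‖x‖ ^ (q - 2) := by positivity
  have hp2 : 0 ≤ lap w x ^ 2 * ‖x‖ ^ (q + 2) := by positivity
  nlinarith [mul_nonneg hC hp0, mul_nonneg hC hp2]

theorem IsTruncatedPower.hessian_integrand_le (ha : IsTruncatedPower C p a) (hC : 0 ≤ C)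
    (hx : x ≠ 0) (i : Fin 3) :
    pderiv i w x ^ 2 / 2 * lap a x +
        lap w x * (pderiv i (pderiv i w) x * a x + pderiv i w x * pderiv i a x) ≤
      (∑ j, pderiv j (pderiv i w) x ^ 2) * a x / 2 +
        (1 / 2 + C) * (pderiv i w x ^ 2 * ‖x‖ ^ (p - 2) + lap w x ^ 2 * ‖x‖ ^ p) := by
  have hr := norm_pos_iff.2 hx
  have hlap : pderiv i w x ^ 2 / 2 * lap a x ≤ pderiv i w x ^ 2 / 2 * (C * ‖x‖ ^ (p - 2)) :=
    mul_le_mul_of_nonneg_left ((le_abs_self _).trans (ha.abs_lap_le x hx)) (by positivity)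
  have hdiag : pderiv i (pderiv i w) x ^ 2 ≤ ∑ j, pderiv j (pderiv i w) x ^ 2 :=
    Finset.single_le_sum (f := fun j => pderiv j (pderiv i w) x ^ 2) (fun _ _ => sq_nonneg _)
      (Finset.mem_univ i)
  have hyoung : lap w x * pderiv i (pderiv i w) x ≤
      (∑ j, pderiv j (pderiv i w) x ^ 2) / 2 + lap w x ^ 2 / 2 := by
    linarith [two_mul_le_add_sq (lap w x) (pderiv i (pderiv i w) x)]
  have habsorb := mul_le_mul_of_nonneg_right hyoung (ha.nonneg x)
  have hsq : lap w x ^ 2 * a x ≤ lap w x ^ 2 * ‖x‖ ^ p := by gcongr; exact ha.le_rpow x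
  have hcross : pderiv i w x * lap w x * pderiv i a x ≤
      |pderiv i w x * lap w x| * (C * ‖x‖ ^ (p - 1)) :=
    (le_abs_self _).trans ((abs_mul _ _).trans_le (by gcongr; exact ha.abs_pderiv_le x hx i))
  have hamgm := mul_le_mul_of_nonneg_left
    (abs_mul_mul_rpow_le hr (show p - 2 + p = 2 * (p - 1) by ring) (pderiv i w x) (lap w x)) hC
  have hp1 : 0 ≤ pderiv i w x ^ 2 * ‖x‖ ^ (p - 2) := by positivity
  have hp2 : 0 ≤ lap w x ^ 2 * ‖x‖ ^ p := by positivity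
  linarith [mul_nonneg hC hp2]

theorem IsTruncatedPower.integral_sum_sq_pderiv_pderiv_mul_le (ha : IsTruncatedPower C p a)
    (hC : 0 ≤ C) (hw : ContDiffOn ℝ (⊤ : ℕ∞) w puncturedSpace) (i : Fin 3)
    (h1 : Integrable fun x => pderiv i w x ^ 2 * ‖x‖ ^ (p - 2))
    (h2 : Integrable fun x => lap w x ^ 2 * ‖x‖ ^ p) :
    ∫ x, (∑ j, pderiv j (pderiv i w) x ^ 2) * a x ≤
      (1 + 2 * C) * ∫ x, (pderiv i w x ^ 2 * ‖x‖ ^ (p - 2) + lap w x ^ 2 * ‖x‖ ^ p) := by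
  have hv := contDiffOn_pderiv hw i
  have hL := (contDiffOn_lap hw).continuousOn
  have hS := ha.isTestFun.integrable_mul (continuousOn_sum_sq_pderiv hv)
  have hI₁ : Integrable fun x => pderiv i w x ^ 2 / 2 * lap a x :=
    ha.isTestFun.lap.integrable_mul ((hv.continuousOn.pow 2).div_const 2)
  have hI₂ : Integrable fun x =>
      lap w x * (pderiv i (pderiv i w) x * a x + pderiv i w x * pderiv i a x) := by
    have hvv := (contDiffOn_pderiv hv i).continuousOn
    refine ((ha.isTestFun.integrable_mul (hL.mul hvv)).add
      ((ha.isTestFun.pderiv i).integrable_mul (hL.mul hv.continuousOn))).congr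
        (ae_of_all _ fun x => ?_)
    simp only [Pi.add_apply, Pi.mul_apply]
    ring
  have hG : Integrable fun x =>
      (1 / 2 + C) * (pderiv i w x ^ 2 * ‖x‖ ^ (p - 2) + lap w x ^ 2 * ‖x‖ ^ p) :=
    (h1.add h2).const_mul _
  have hle := integral_mono_ae (hI₁.add hI₂) ((hS.div_const 2).add hG)
    ((Measure.ae_ne volume 0).mono fun x hx => ha.hessian_integrand_le hC hx i)
  simp only [Pi.add_apply] at hle
  rw [← integral_sum_sq_pderiv_pderiv_mul hw ha.isTestFun i, integral_add (hS.div_const 2) hG,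
    integral_div, integral_const_mul] at hle
  linarith

end WeightedEstimates

section WeightedEnergy

/-- The integrand of `weightedEnergy`. -/
def energyDensity (δ : ℝ) (w : E3 → ℝ) (x : E3) : ℝ :=
  w x ^ 2 * ‖x‖ ^ (-2 * δ - 3) + lap w x ^ 2 * ‖x‖ ^ (-2 * δ + 1)

/-- The energy `∫ w² |x|^(-2δ-3) + (Δw)² |x|^(-2δ+1)`, which controls the square of the full
`H'²_δ` norm of a function smooth off the origin. -/
def weightedEnergy (δ : ℝ) (w : E3 → ℝ) : ℝ := ∫ x, energyDensity δ w x

/-- Functions smooth off the origin of finite `weightedEnergy`. -/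
structure HasFiniteEnergy (δ : ℝ) (w : E3 → ℝ) : Prop where
  contDiffOn : ContDiffOn ℝ (⊤ : ℕ∞) w puncturedSpace
  integrable : Integrable (energyDensity δ w)

variable {δ : ℝ} {w G : E3 → ℝ}

theorem energyDensity_nonneg (δ : ℝ) (w : E3 → ℝ) (x : E3) : 0 ≤ energyDensity δ w x := by
  unfold energyDensity
  positivity

theorem weightedEnergy_nonneg (δ : ℝ) (w : E3 → ℝ) : 0 ≤ weightedEnergy δ w :=
  integral_nonneg (energyDensity_nonneg δ w)

theorem aestronglyMeasurable_sq_mul_norm_rpow (hw : ContDiffOn ℝ (⊤ : ℕ∞) w puncturedSpace)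
    (p : ℝ) : AEStronglyMeasurable fun x => w x ^ 2 * ‖x‖ ^ p :=
  aestronglyMeasurable_of_continuousOn_puncturedSpace
    ((hw.continuousOn.pow 2).mul (contDiffOn_norm_rpow (n := 0) p).continuousOn)

theorem aestronglyMeasurable_energyDensity (hw : ContDiffOn ℝ (⊤ : ℕ∞) w puncturedSpace) :
    AEStronglyMeasurable (energyDensity δ w) :=
  (aestronglyMeasurable_sq_mul_norm_rpow hw _).add
    (aestronglyMeasurable_sq_mul_norm_rpow (contDiffOn_lap hw) _)

theorem HasFiniteEnergy.of_le (hw : ContDiffOn ℝ (⊤ : ℕ∞) w puncturedSpace) (hG : Integrable G)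
    (hle : ∀ x, x ≠ 0 → energyDensity δ w x ≤ G x) : HasFiniteEnergy δ w where
  contDiffOn := hw
  integrable := hG.mono' (aestronglyMeasurable_energyDensity hw)
    ((Measure.ae_ne volume 0).mono fun x hx =>
      (Real.norm_of_nonneg (energyDensity_nonneg δ w x)).trans_le (hle x hx))

theorem HasFiniteEnergy.integrable_sq (hw : HasFiniteEnergy δ w) :
    Integrable fun x => w x ^ 2 * ‖x‖ ^ (-2 * δ - 3) :=
  hw.integrable.mono' (aestronglyMeasurable_sq_mul_norm_rpow hw.contDiffOn _)
    (ae_of_all _ fun x => (Real.norm_of_nonneg (by positivity)).trans_le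
      (le_add_of_nonneg_right (by positivity)))

theorem HasFiniteEnergy.integrable_lap_sq (hw : HasFiniteEnergy δ w) :
    Integrable fun x => lap w x ^ 2 * ‖x‖ ^ (-2 * δ + 1) :=
  hw.integrable.mono' (aestronglyMeasurable_sq_mul_norm_rpow (contDiffOn_lap hw.contDiffOn) _)
    (ae_of_all _ fun x => (Real.norm_of_nonneg (by positivity)).trans_le
      (le_add_of_nonneg_left (by positivity)))

theorem HasFiniteEnergy.integral_lap_sq_le (hw : HasFiniteEnergy δ w) :
    ∫ x, lap w x ^ 2 * ‖x‖ ^ (-2 * δ + 1) ≤ weightedEnergy δ w :=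
  integral_mono hw.integrable_lap_sq hw.integrable fun _ =>
    le_add_of_nonneg_left (by positivity)

theorem exists_integral_sum_sq_pderiv_le (δ : ℝ) :
    ∃ K ≥ 0, ∀ w, HasFiniteEnergy δ w →
      (Integrable fun x => (∑ i, pderiv i w x ^ 2) * ‖x‖ ^ (-2 * δ - 1)) ∧
        ∫ x, (∑ i, pderiv i w x ^ 2) * ‖x‖ ^ (-2 * δ - 1) ≤ K * weightedEnergy δ w := by
  obtain ⟨χ, B, hχ⟩ := exists_isCutoffSequence
  obtain ⟨C, hC, ha⟩ := hχ.exists_isTruncatedPower (-2 * δ - 1)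
  refine ⟨1 + C, by positivity, fun w hw => hχ.integrable_of_forall_integral_mul_le
    ((continuousOn_sum_sq_pderiv hw.contDiffOn).mul (contDiffOn_norm_rpow (n := 0) _).continuousOn)
    (fun x => by positivity) fun n => ?_⟩
  have h := (ha n).integral_sum_sq_pderiv_mul_le hC hw.contDiffOn
  simp only [show -2 * δ - 1 - 2 = -2 * δ - 3 by ring,
    show -2 * δ - 1 + 2 = -2 * δ + 1 by ring] at h
  simp only [mul_assoc]
  exact h hw.integrable_sq hw.integrable_lap_sq

theorem exists_integral_sq_pderiv_le (δ : ℝ) :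
    ∃ K ≥ 0, ∀ w, HasFiniteEnergy δ w → ∀ i,
      (Integrable fun x => pderiv i w x ^ 2 * ‖x‖ ^ (-2 * δ - 1)) ∧
        ∫ x, pderiv i w x ^ 2 * ‖x‖ ^ (-2 * δ - 1) ≤ K * weightedEnergy δ w := by
  obtain ⟨K, hK, h⟩ := exists_integral_sum_sq_pderiv_le δ
  refine ⟨K, hK, fun w hw i => ?_⟩
  have hle (x : E3) : pderiv i w x ^ 2 * ‖x‖ ^ (-2 * δ - 1) ≤
      (∑ j, pderiv j w x ^ 2) * ‖x‖ ^ (-2 * δ - 1) := by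
    gcongr
    exact Finset.single_le_sum (f := fun j => pderiv j w x ^ 2) (fun _ _ => sq_nonneg _)
      (Finset.mem_univ i)
  have hint : Integrable fun x => pderiv i w x ^ 2 * ‖x‖ ^ (-2 * δ - 1) :=
    (h w hw).1.mono'
      (aestronglyMeasurable_sq_mul_norm_rpow (contDiffOn_pderiv hw.contDiffOn i) _)
      (ae_of_all _ fun x => (Real.norm_of_nonneg (by positivity)).trans_le (hle x))
  exact ⟨hint, (integral_mono hint (h w hw).1 hle).trans (h w hw).2⟩

theorem exists_integral_sum_sq_pderiv_pderiv_le (δ : ℝ) :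
    ∃ K ≥ 0, ∀ w, HasFiniteEnergy δ w → ∀ i,
      (Integrable fun x => (∑ j, pderiv j (pderiv i w) x ^ 2) * ‖x‖ ^ (-2 * δ + 1)) ∧
        ∫ x, (∑ j, pderiv j (pderiv i w) x ^ 2) * ‖x‖ ^ (-2 * δ + 1) ≤
          K * weightedEnergy δ w := by
  obtain ⟨χ, B, hχ⟩ := exists_isCutoffSequence
  obtain ⟨C, hC, ha⟩ := hχ.exists_isTruncatedPower (-2 * δ + 1)
  obtain ⟨K, hK, h1⟩ := exists_integral_sq_pderiv_le δ
  refine ⟨(1 + 2 * C) * (K + 1), by positivity, fun w hw i =>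
    hχ.integrable_of_forall_integral_mul_le
      ((continuousOn_sum_sq_pderiv (contDiffOn_pderiv hw.contDiffOn i)).mul
        (contDiffOn_norm_rpow (n := 0) _).continuousOn) (fun x => by positivity) fun n => ?_⟩
  obtain ⟨hint, hle⟩ := h1 w hw i
  have h := (ha n).integral_sum_sq_pderiv_pderiv_mul_le hC hw.contDiffOn i
  rw [show -2 * δ + 1 - 2 = -2 * δ - 1 by ring] at h
  simp only [mul_assoc]
  refine (h hint hw.integrable_lap_sq).trans ?_
  rw [integral_add hint hw.integrable_lap_sq]
  have hlap := hw.integral_lap_sq_le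
  gcongr
  linarith

end WeightedEnergy

section WeightedNorms

variable {δ : ℝ} {f G w : E3 → ℝ} {x : E3}

theorem norm_sq_le_three_mul_sum_norm_sq {F : Type*} [NormedAddCommGroup F] [NormedSpace ℝ F]
    (L : E3 →L[ℝ] F) : ‖L‖ ^ 2 ≤ 3 * ∑ i, ‖L (stdVec i)‖ ^ 2 := by
  have hsum : ‖L‖ ≤ ∑ i, ‖L (stdVec i)‖ := by
    refine L.opNorm_le_bound (Finset.sum_nonneg fun i _ => norm_nonneg _) fun x => ?_
    have hx : x = ∑ i, x i • stdVec i := by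
      simpa using ((EuclideanSpace.basisFun (Fin 3) ℝ).sum_repr x).symm
    calc ‖L x‖ = ‖∑ i, x i • L (stdVec i)‖ := by
          conv_lhs => rw [hx, map_sum]
          simp only [map_smul]
      _ ≤ ∑ i, ‖L (stdVec i)‖ * ‖x‖ := norm_sum_le_of_le _ fun i _ => by
          rw [norm_smul, mul_comm]
          gcongr
          exact PiLp.norm_apply_le x i
      _ = (∑ i, ‖L (stdVec i)‖) * ‖x‖ := (Finset.sum_mul ..).symm
  calc ‖L‖ ^ 2 ≤ (∑ i, ‖L (stdVec i)‖) ^ 2 := by gcongr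
    _ ≤ 3 * ∑ i, ‖L (stdVec i)‖ ^ 2 := by
        simpa using sq_sum_le_card_mul_sum_sq (s := Finset.univ) (f := fun i => ‖L (stdVec i)‖)

theorem norm_iteratedFDeriv_one_sq_le (w : E3 → ℝ) (x : E3) :
    ‖iteratedFDeriv ℝ 1 w x‖ ^ 2 ≤ 3 * ∑ i, pderiv i w x ^ 2 := by
  rw [norm_iteratedFDeriv_one]
  simpa only [pderiv, Real.norm_eq_abs, sq_abs] using
    norm_sq_le_three_mul_sum_norm_sq (fderiv ℝ w x)

theorem norm_iteratedFDeriv_two_sq_le (h : ContDiffAt ℝ 2 w x) :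
    ‖iteratedFDeriv ℝ 2 w x‖ ^ 2 ≤ 9 * ∑ i, ∑ j, pderiv j (pderiv i w) x ^ 2 := by
  rw [← norm_iteratedFDeriv_fderiv, norm_iteratedFDeriv_one]
  calc ‖fderiv ℝ (fderiv ℝ w) x‖ ^ 2
      ≤ 3 * ∑ j, ‖fderiv ℝ (fderiv ℝ w) x (stdVec j)‖ ^ 2 := norm_sq_le_three_mul_sum_norm_sq _
    _ ≤ 3 * ∑ j, 3 * ∑ i, ‖fderiv ℝ (fderiv ℝ w) x (stdVec j) (stdVec i)‖ ^ 2 := by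
        gcongr
        exact norm_sq_le_three_mul_sum_norm_sq _
    _ = 9 * ∑ i, ∑ j, pderiv j (pderiv i w) x ^ 2 := by
        simp_rw [← Finset.mul_sum, Real.norm_eq_abs, sq_abs]
        rw [Finset.sum_comm, ← mul_assoc]
        norm_num [pderiv, fderiv_pderiv (differentiableAt_fderiv_of_contDiffAt_two h)]

theorem wL2norm_le_ofReal_sqrt (hG : Integrable G)
    (hle : ∀ x, x ≠ 0 → f x ^ 2 * ‖x‖ ^ (-2 * δ - 3) ≤ G x) :
    wL2norm δ f ≤ ENNReal.ofReal √(∫ x, G x) := by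
  have hG0 : 0 ≤ᵐ[volume] G := by
    filter_upwards [Measure.ae_ne volume 0] with x hx using
      le_trans (by positivity) (hle x hx)
  have hint := ofReal_integral_eq_lintegral_ofReal hG hG0
  rw [wL2norm, Real.sqrt_eq_rpow,
    ← ENNReal.ofReal_rpow_of_nonneg (integral_nonneg_of_ae hG0) (by norm_num), hint]
  refine ENNReal.rpow_le_rpow ((setLIntegral_mono_ae' isOpen_puncturedSpace.measurableSet
    (ae_of_all _ fun x hx => ?_)).trans (setLIntegral_le_lintegral _ _)) (by norm_num)
  have hr : 0 < ‖x‖ := norm_pos_iff.2 hx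
  refine le_of_eq_of_le ?_ (ENNReal.ofReal_le_ofReal (hle x hx))
  rw [ENNReal.ofReal_mul (sq_nonneg _), ← ENNReal.ofReal_rpow_of_pos hr, ofReal_norm, ← sq_abs,
    ← Real.norm_eq_abs, ← Real.rpow_two,
    ← ENNReal.ofReal_rpow_of_nonneg (norm_nonneg _) (by norm_num), ofReal_norm]
  rfl

theorem HasFiniteEnergy.wL2norm_iteratedFDeriv_zero_le (hw : HasFiniteEnergy δ w) :
    wL2norm δ (fun x => ‖iteratedFDeriv ℝ 0 w x‖) ≤ ENNReal.ofReal √(weightedEnergy δ w) := by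
  refine wL2norm_le_ofReal_sqrt hw.integrable fun x _ => ?_
  rw [norm_iteratedFDeriv_zero, Real.norm_eq_abs, sq_abs]
  exact le_add_of_nonneg_right (by positivity)

theorem exists_wL2norm_iteratedFDeriv_one_le (δ : ℝ) :
    ∃ K ≥ 0, ∀ w, HasFiniteEnergy δ w →
      wL2norm (δ - 1) (fun x => ‖iteratedFDeriv ℝ 1 w x‖) ≤
        ENNReal.ofReal (K * √(weightedEnergy δ w)) := by
  obtain ⟨K, hK, h⟩ := exists_integral_sum_sq_pderiv_le δ
  refine ⟨√(3 * K), by positivity, fun w hw => ?_⟩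
  obtain ⟨hint, hle⟩ := h w hw
  refine (wL2norm_le_ofReal_sqrt (hint.const_mul 3) fun x _ => ?_).trans ?_
  · rw [show -2 * (δ - 1) - 3 = -2 * δ - 1 by ring, ← mul_assoc]
    gcongr
    exact norm_iteratedFDeriv_one_sq_le w x
  · rw [← Real.sqrt_mul (by positivity), integral_const_mul, mul_assoc]
    gcongr

theorem exists_wL2norm_iteratedFDeriv_two_le (δ : ℝ) :
    ∃ K ≥ 0, ∀ w, HasFiniteEnergy δ w →
      wL2norm (δ - 2) (fun x => ‖iteratedFDeriv ℝ 2 w x‖) ≤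
        ENNReal.ofReal (K * √(weightedEnergy δ w)) := by
  obtain ⟨K, hK, h⟩ := exists_integral_sum_sq_pderiv_pderiv_le δ
  refine ⟨√(27 * K), by positivity, fun w hw => ?_⟩
  have hint (i : Fin 3) (_ : i ∈ Finset.univ) := (h w hw i).1
  refine (wL2norm_le_ofReal_sqrt ((integrable_finsetSum _ hint).const_mul 9) fun x hx => ?_).trans
    ?_
  · rw [show -2 * (δ - 2) - 3 = -2 * δ + 1 by ring, ← Finset.sum_mul, ← mul_assoc]
    gcongr
    exact norm_iteratedFDeriv_two_sq_le (contDiffAt_two_of_contDiffOn hw.contDiffOn hx)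
  · rw [← Real.sqrt_mul (by positivity), integral_const_mul, integral_finsetSum _ hint]
    have := Finset.sum_le_card_nsmul Finset.univ _ _ fun i _ => (h w hw i).2
    rw [Finset.card_fin, nsmul_eq_mul, Nat.cast_ofNat] at this
    refine ENNReal.ofReal_le_ofReal (Real.sqrt_le_sqrt ?_)
    linarith

theorem exists_wHnorm_two_le (δ : ℝ) :
    ∃ K ≥ 0, ∀ w, HasFiniteEnergy δ w →
      wHnorm 2 δ w ≤ ENNReal.ofReal (K * √(weightedEnergy δ w)) := by
  obtain ⟨K₁, hK₁, h₁⟩ := exists_wL2norm_iteratedFDeriv_one_le δ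
  obtain ⟨K₂, hK₂, h₂⟩ := exists_wL2norm_iteratedFDeriv_two_le δ
  refine ⟨1 + K₁ + K₂, by positivity, fun w hw => ?_⟩
  rw [wHnorm, Finset.sum_range_succ, Finset.sum_range_succ, Finset.sum_range_one, add_mul, add_mul,
    one_mul, ENNReal.ofReal_add (by positivity) (by positivity),
    ENNReal.ofReal_add (by positivity) (by positivity), Nat.cast_zero, sub_zero, Nat.cast_one,
    Nat.cast_ofNat]
  exact add_le_add (add_le_add hw.wL2norm_iteratedFDeriv_zero_le (h₁ w hw)) (h₂ w hw)

end WeightedNorms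

section EnergyConvergence

variable {δ : ℝ} {v w : E3 → ℝ} {x : E3}

theorem energyDensity_sub_le (δ : ℝ) (hv : ContDiffAt ℝ 2 v x) (hw : ContDiffAt ℝ 2 w x) :
    energyDensity δ (v - w) x ≤ 2 * energyDensity δ v x + 2 * energyDensity δ w x := by
  have hlap : lap (v - w) x = lap v x - lap w x := lap_sub hv hw
  have hsq (a b t : ℝ) (ht : 0 ≤ t) : (a - b) ^ 2 * t ≤ 2 * (a ^ 2 * t) + 2 * (b ^ 2 * t) := by
    nlinarith [mul_nonneg ht (sq_nonneg (a + b))]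
  have hval := hsq (v x) (w x) (‖x‖ ^ (-2 * δ - 3)) (by positivity)
  have hlapsq := hsq (lap v x) (lap w x) (‖x‖ ^ (-2 * δ + 1)) (by positivity)
  rw [energyDensity, energyDensity, energyDensity, hlap, Pi.sub_apply]
  linarith

theorem HasFiniteEnergy.energyDensity_sub_le (hv : HasFiniteEnergy δ v)
    (hw : HasFiniteEnergy δ w) (hx : x ≠ 0) :
    energyDensity δ (v - w) x ≤ 2 * energyDensity δ v x + 2 * energyDensity δ w x :=
  _root_.energyDensity_sub_le δ (contDiffAt_two_of_contDiffOn hv.contDiffOn hx)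
    (contDiffAt_two_of_contDiffOn hw.contDiffOn hx)

theorem HasFiniteEnergy.sub (hv : HasFiniteEnergy δ v) (hw : HasFiniteEnergy δ w) :
    HasFiniteEnergy δ (v - w) :=
  .of_le (hv.contDiffOn.sub hw.contDiffOn)
    ((hv.integrable.const_mul 2).add (hw.integrable.const_mul 2))
    fun _ hx => hv.energyDensity_sub_le hw hx

theorem HasFiniteEnergy.weightedEnergy_sub_le (hv : HasFiniteEnergy δ v)
    (hw : HasFiniteEnergy δ w) :
    weightedEnergy δ (v - w) ≤ 2 * weightedEnergy δ v + 2 * weightedEnergy δ w := by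
  have hv2 := hv.integrable.const_mul 2
  have hw2 := hw.integrable.const_mul 2
  calc weightedEnergy δ (v - w)
      ≤ ∫ x, (2 * energyDensity δ v x + 2 * energyDensity δ w x) :=
        integral_mono_ae (hv.sub hw).integrable (hv2.add hw2)
          ((Measure.ae_ne volume 0).mono fun x hx => hv.energyDensity_sub_le hw hx)
    _ = 2 * weightedEnergy δ v + 2 * weightedEnergy δ w := by
        rw [integral_add hv2 hw2, integral_const_mul, integral_const_mul, weightedEnergy,
          weightedEnergy]

variable {ι : Type*} {l : Filter ι} {f : ι → E3 → ℝ} {f₀ G : E3 → ℝ}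

theorem tendsto_energyDensity (δ : ℝ) (hf : Tendsto (fun n => f n x) l (nhds (f₀ x)))
    (hlap : Tendsto (fun n => lap (f n) x) l (nhds (lap f₀ x))) :
    Tendsto (fun n => energyDensity δ (f n) x) l (nhds (energyDensity δ f₀ x)) :=
  ((hf.pow 2).mul_const _).add ((hlap.pow 2).mul_const _)

/-- Convergence, together with the Laplacians, off the origin under a uniform bound `G` on the
energy densities. -/
structure TendstoEnergyDominated (δ : ℝ) (f : ι → E3 → ℝ) (f₀ G : E3 → ℝ) (l : Filter ι) :
    Prop where
  contDiffOn : ∀ᶠ n in l, ContDiffOn ℝ (⊤ : ℕ∞) (f n) puncturedSpace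
  contDiffOn_limit : ContDiffOn ℝ (⊤ : ℕ∞) f₀ puncturedSpace
  energyDensity_le : ∀ᶠ n in l, ∀ x, x ≠ 0 → energyDensity δ (f n) x ≤ G x
  tendsto : ∀ x, x ≠ 0 → Tendsto (fun n => f n x) l (nhds (f₀ x))
  tendsto_lap : ∀ x, x ≠ 0 → Tendsto (fun n => lap (f n) x) l (nhds (lap f₀ x))

theorem TendstoEnergyDominated.energyDensity_limit_le [l.NeBot]
    (h : TendstoEnergyDominated δ f f₀ G l) (hx : x ≠ 0) : energyDensity δ f₀ x ≤ G x :=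
  le_of_tendsto (tendsto_energyDensity δ (h.tendsto x hx) (h.tendsto_lap x hx))
    (h.energyDensity_le.mono fun _ hn => hn x hx)

theorem TendstoEnergyDominated.hasFiniteEnergy (h : TendstoEnergyDominated δ f f₀ G l)
    (hG : Integrable G) : ∀ᶠ n in l, HasFiniteEnergy δ (f n) := by
  filter_upwards [h.contDiffOn, h.energyDensity_le] with n hn hle using .of_le hn hG hle

theorem TendstoEnergyDominated.hasFiniteEnergy_limit [l.NeBot]
    (h : TendstoEnergyDominated δ f f₀ G l) (hG : Integrable G) : HasFiniteEnergy δ f₀ :=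
  .of_le h.contDiffOn_limit hG fun _ hx => h.energyDensity_limit_le hx

theorem TendstoEnergyDominated.tendsto_weightedEnergy_sub [l.NeBot] [l.IsCountablyGenerated]
    (h : TendstoEnergyDominated δ f f₀ G l) (hG : Integrable G) :
    Tendsto (fun n => weightedEnergy δ (f n - f₀)) l (nhds 0) := by
  have h₀ := h.hasFiniteEnergy_limit hG
  suffices Tendsto (fun n => weightedEnergy δ (f n - f₀)) l (nhds (∫ _ : E3, (0 : ℝ))) by
    rwa [integral_zero] at this
  refine tendsto_integral_filter_of_dominated_convergence (fun x => 4 * G x) ?_ ?_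
    (hG.const_mul 4) ?_
  · filter_upwards [h.hasFiniteEnergy hG] with n hn
    exact (hn.sub h₀).integrable.aestronglyMeasurable
  · filter_upwards [h.hasFiniteEnergy hG, h.energyDensity_le] with n hn hle
    filter_upwards [Measure.ae_ne volume 0] with x hx
    rw [Real.norm_of_nonneg (energyDensity_nonneg _ _ _)]
    linarith [hn.energyDensity_sub_le h₀ hx, hle x hx, h.energyDensity_limit_le hx]
  · filter_upwards [Measure.ae_ne volume 0] with x hx
    have hval := (h.tendsto x hx).sub_const (f₀ x)
    have hlap : Tendsto (fun n => lap (f n - f₀) x) l (nhds (lap f₀ x - lap f₀ x)) := by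
      refine ((h.tendsto_lap x hx).sub_const (lap f₀ x)).congr' ?_
      filter_upwards [h.contDiffOn] with n hn
      exact (lap_sub (contDiffAt_two_of_contDiffOn hn hx)
        (contDiffAt_two_of_contDiffOn h.contDiffOn_limit hx)).symm
    simpa [energyDensity] using
      ((hval.pow 2).mul_const (‖x‖ ^ (-2 * δ - 3))).add
        ((hlap.pow 2).mul_const (‖x‖ ^ (-2 * δ + 1)))

end EnergyConvergence

section PiecewisePower

variable {p p' : ℝ} {x : E3}

/-- `‖x‖ ^ p` in the unit ball and `‖x‖ ^ p'` outside it. -/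
def piecewisePow (p p' : ℝ) (x : E3) : ℝ :=
  if ‖x‖ ≤ 1 then ‖x‖ ^ p else ‖x‖ ^ p'

theorem piecewisePow_nonneg (p p' : ℝ) (x : E3) : 0 ≤ piecewisePow p p' x := by
  unfold piecewisePow
  split_ifs <;> positivity

theorem measurable_piecewisePow (p p' : ℝ) : Measurable (piecewisePow p p') :=
  Measurable.ite (measurableSet_le measurable_norm measurable_const) (by fun_prop) (by fun_prop)

theorem integrable_piecewisePow (hp : -3 < p) (hp' : p' < -3) :
    Integrable (piecewisePow p p') := by
  have hnear : Integrable ((closedBall (0 : E3) 1).indicator fun x => ‖x‖ ^ p) :=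
    (integrableOn_closedBall_norm_rpow hp 1).integrable_indicator measurableSet_closedBall
  have hfar : Integrable fun x : E3 => (1 + ‖x‖) ^ (-(-p')) :=
    integrable_one_add_norm (by rw [finrank_euclideanSpace_fin]; push_cast; linarith)
  refine (hnear.add (hfar.const_mul (2 ^ (-p')))).mono'
    (measurable_piecewisePow p p').aestronglyMeasurable (ae_of_all _ fun x => ?_)
  rw [Real.norm_of_nonneg (piecewisePow_nonneg _ _ _)]
  simp only [piecewisePow, Pi.add_apply, indicator, mem_closedBall, dist_zero_right, neg_neg]
  split_ifs with h
  · exact le_add_of_nonneg_right (by positivity)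
  · calc ‖x‖ ^ p' ≤ ((1 + ‖x‖) / 2) ^ p' :=
          Real.rpow_le_rpow_of_nonpos (by positivity) (by linarith) (by linarith)
      _ = 0 + 2 ^ (-p') * (1 + ‖x‖) ^ p' := by
          rw [Real.div_rpow (by positivity) two_pos.le, Real.rpow_neg two_pos.le]
          ring

theorem sq_mul_norm_rpow_le_piecewisePow {y C : ℝ} (q : ℝ) (hx : x ≠ 0)
    (hy : |y| ≤ C * piecewisePow p p' x) :
    y ^ 2 * ‖x‖ ^ q ≤ C ^ 2 * piecewisePow (2 * p + q) (2 * p' + q) x := by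
  have hr : 0 < ‖x‖ := norm_pos_iff.2 hx
  have hpow : piecewisePow (2 * p + q) (2 * p' + q) x = piecewisePow p p' x ^ 2 * ‖x‖ ^ q := by
    unfold piecewisePow
    split_ifs <;> rw [Real.rpow_add hr, mul_comm 2, Real.rpow_mul hr.le, Real.rpow_two]
  rw [hpow, ← mul_assoc, ← mul_pow, ← sq_abs]
  gcongr

end PiecewisePower

section ExtremeLimitEnergy

variable {A J s δ : ℝ} {σ : E3 → ℝ}

theorem exists_forall_abs_isSolμ_le {β : ℝ} (P : E3) (hD : IsPunctureData A J σ)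
    (hσs : ∀ x, σ x ≤ s) (hβ : 1 / 2 ≤ β) (hβ1 : β < 1) :
    ∃ C, ∀ μ > 0, ∀ u, IsSolμ A J P σ μ u →
      ∀ x ≠ 0, |u x| ≤ C * piecewisePow (-(1 / 2)) (-β) x := by
  obtain ⟨C₁, hC₁, h₁⟩ := exists_forall_isSolμ_le_norm_rpow P hD hσs le_rfl one_half_lt_one
  obtain ⟨C₂, hC₂, h₂⟩ := exists_forall_isSolμ_le_norm_rpow P hD hσs hβ hβ1
  refine ⟨C₁ + C₂, fun μ hμ u hu x hx => ?_⟩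
  rw [abs_of_nonneg (hu.1 x), piecewisePow]
  split_ifs
  · exact (h₁ μ hμ.le u hu x hx).trans (by gcongr; linarith)
  · exact (h₂ μ hμ.le u hu x hx).trans (by gcongr; linarith)

theorem exists_forall_abs_lap_isSolμ_le (P : E3) (hD : IsPunctureData A J σ)
    (hσs : ∀ x, σ x ≤ s) :
    ∃ C, ∀ μ > 0, ∀ u, IsSolμ A J P σ μ u →
      ∀ x ≠ 0, |lap u x| ≤ C * piecewisePow (-(5 / 2)) (-4) x := by
  obtain ⟨c, hc, hlow⟩ := exists_forall_norm_rpow_le_conformalFactor P hD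
  have hk := ksqConst_nonneg A J P
  have hs : 0 ≤ s := (hD.nonneg 0).trans (hσs 0)
  refine ⟨(ksqConst A J P / c ^ 7 + s / c ^ 3) / 4 + (ksqConst A J P + s) / 4,
    fun μ hμ u hu x hx => ?_⟩
  have hlap : lap u x = Fnl A J P σ x (conformalFactor μ u x) := hu.2.2.2 x hx
  rw [hlap, piecewisePow]
  split_ifs with hx1
  · refine (abs_Fnl_le_of_norm_le_one hD.nonneg hσs hx hx1 hc (hlow μ hμ u hu x hx)).trans ?_
    gcongr
    exact le_add_of_nonneg_right (by positivity)
  · refine (abs_Fnl_le_of_one_le_norm hD.nonneg hσs (not_le.1 hx1).le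
      (hu.one_le_conformalFactor hμ.le x)).trans ?_
    gcongr
    exact le_add_of_nonneg_left (by positivity)

theorem exists_integrable_energyDensity_isSolμ_le (P : E3) (hD : IsPunctureData A J σ)
    (hσs : ∀ x, σ x ≤ s) (hδ : δ ∈ Ioo (-1 : ℝ) (-1 / 2)) :
    ∃ G, Integrable G ∧ ∀ μ > 0, ∀ u, IsSolμ A J P σ μ u →
      ∀ x ≠ 0, energyDensity δ u x ≤ G x := by
  obtain ⟨hδ₁, hδ₂⟩ := hδ
  obtain ⟨C, hval⟩ := exists_forall_abs_isSolμ_le (β := (1 - δ) / 2) P hD hσs (by linarith)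
    (by linarith)
  obtain ⟨D, hlap⟩ := exists_forall_abs_lap_isSolμ_le P hD hσs
  exact ⟨_, ((integrable_piecewisePow (by linarith) (by linarith)).const_mul (C ^ 2)).add
      ((integrable_piecewisePow (by linarith) (by linarith)).const_mul (D ^ 2)),
    fun μ hμ u hu x hx => add_le_add
      (sq_mul_norm_rpow_le_piecewisePow _ hx (hval μ hμ u hu x hx))
      (sq_mul_norm_rpow_le_piecewisePow _ hx (hlap μ hμ u hu x hx))⟩

variable {P : E3} {u : ℝ → E3 → ℝ}

theorem tendsto_conformalFactor_extremeLimit {x : E3}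
    (hu : ∀ μ > (0 : ℝ), IsSolμ A J P σ μ (u μ)) (hD : IsPunctureData A J σ)
    (hσs : ∀ x, σ x ≤ s) (hx : x ≠ 0) :
    Tendsto (fun μ => conformalFactor μ (u μ) x) (nhdsWithin 0 (Ioi 0))
      (nhds (conformalFactor 0 (extremeLimit u) x)) := by
  have hid : Tendsto (fun μ : ℝ => μ) (nhdsWithin 0 (Ioi 0)) (nhds 0) := nhdsWithin_le_nhds
  exact ((hid.div_const _).const_add 1).add (tendsto_extremeLimit hu hD hσs hx)

theorem exists_tendstoEnergyDominated_extremeLimit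
    (hu : ∀ μ > (0 : ℝ), IsSolμ A J P σ μ (u μ)) (hD : IsPunctureData A J σ)
    (hσs : ∀ x, σ x ≤ s) (hδ : δ ∈ Ioo (-1 : ℝ) (-1 / 2)) :
    ∃ G, Integrable G ∧
      TendstoEnergyDominated δ u (extremeLimit u) G (nhdsWithin 0 (Ioi 0)) := by
  obtain ⟨G, hG, hle⟩ := exists_integrable_energyDensity_isSolμ_le P hD hσs hδ
  have hpos : ∀ᶠ μ : ℝ in nhdsWithin 0 (Ioi 0), 0 < μ := self_mem_nhdsWithin
  refine ⟨G, hG, ?_, ?_, ?_, fun x hx => tendsto_extremeLimit hu hD hσs hx, fun x hx => ?_⟩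
  · filter_upwards [hpos] with μ hμ x hx
    exact (contDiffAt_infty.2 fun n =>
      (hu μ hμ).contDiffAt hD hμ.le n hx).contDiffWithinAt
  · exact fun x hx => (contDiffAt_infty.2 fun n =>
      contDiffAt_extremeLimit hu hD hσs n hx).contDiffWithinAt
  · filter_upwards [hpos] with μ hμ using hle μ hμ (u μ) (hu μ hμ)
  · rw [lap_extremeLimit hu hD hσs hx]
    refine (tendsto_Fnl A J P σ hx
      (one_pos.trans_le (one_le_conformalFactor_extremeLimit hu hD hσs x)).ne'
      (tendsto_conformalFactor_extremeLimit hu hD hσs hx)).congr' ?_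
    filter_upwards [hpos] with μ hμ using ((hu μ hμ).2.2.2 x hx).symm

end ExtremeLimitEnergy

section Density

variable {δ B : ℝ} {χ : ℕ → E3 → ℝ} {w : E3 → ℝ} {x : E3}

theorem IsCutoffSequence.tendsto_pderiv (hχ : IsCutoffSequence χ B) (i : Fin 3) (hx : x ≠ 0) :
    Tendsto (fun n => pderiv i (χ n) x) atTop (nhds 0) := by
  refine squeeze_zero_norm (fun n => hχ.abs_pderiv_le n i x hx) ?_
  simpa [div_eq_mul_inv] using
    (tendsto_one_div_add_atTop_nhds_zero_nat.const_mul B).mul_const ‖x‖⁻¹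

theorem IsCutoffSequence.tendsto_lap (hχ : IsCutoffSequence χ B) (hx : x ≠ 0) :
    Tendsto (fun n => lap (χ n) x) atTop (nhds 0) := by
  refine squeeze_zero_norm (fun n => hχ.abs_lap_le n x hx) ?_
  simpa [div_eq_mul_inv] using
    (tendsto_one_div_add_atTop_nhds_zero_nat.const_mul B).mul_const (‖x‖ ^ 2)⁻¹

theorem IsCutoffSequence.lap_mul (hχ : IsCutoffSequence χ B)
    (hw : ContDiffOn ℝ (⊤ : ℕ∞) w puncturedSpace) (n : ℕ) (hx : x ≠ 0) :
    lap (fun y => w y * χ n y) x =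
      lap w x * χ n x + 2 * (∑ i, pderiv i w x * pderiv i (χ n) x) + w x * lap (χ n) x :=
  _root_.lap_mul (contDiffAt_two_of_contDiffOn hw hx)
    (contDiffAt_two_of_contDiffOn (hχ.isTestFun n).1.contDiffOn hx)

theorem IsCutoffSequence.tendsto_lap_mul (hχ : IsCutoffSequence χ B)
    (hw : ContDiffOn ℝ (⊤ : ℕ∞) w puncturedSpace) (hx : x ≠ 0) :
    Tendsto (fun n => lap (fun y => w y * χ n y) x) atTop (nhds (lap w x)) := by
  simp only [hχ.lap_mul hw _ hx]
  simpa using (((hχ.tendsto_one x hx).const_mul (lap w x)).add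
    ((tendsto_finsetSum Finset.univ fun i _ =>
      (hχ.tendsto_pderiv i hx).const_mul (pderiv i w x)).const_mul 2)).add
    ((hχ.tendsto_lap hx).const_mul (w x))

theorem IsCutoffSequence.sq_sum_pderiv_mul_pderiv_le (hχ : IsCutoffSequence χ B) (w : E3 → ℝ)
    (n : ℕ) (hx : x ≠ 0) :
    (∑ i, pderiv i w x * pderiv i (χ n) x) ^ 2 ≤
      (∑ i, pderiv i w x ^ 2) * (3 * (B * ‖x‖⁻¹) ^ 2) := by
  refine (Finset.sum_mul_sq_le_sq_mul_sq _ _ _).trans ?_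
  gcongr
  simpa using Finset.sum_le_card_nsmul Finset.univ _ _ fun i _ =>
    sq_le_sq' (abs_le.1 (hχ.abs_pderiv_le_const n hx i)).1
      (abs_le.1 (hχ.abs_pderiv_le_const n hx i)).2

theorem IsCutoffSequence.sq_lap_mul_le (hχ : IsCutoffSequence χ B)
    (hw : ContDiffOn ℝ (⊤ : ℕ∞) w puncturedSpace) (n : ℕ) (hx : x ≠ 0) :
    lap (fun y => w y * χ n y) x ^ 2 ≤
      3 * lap w x ^ 2 + 36 * B ^ 2 * (∑ i, pderiv i w x ^ 2) * (‖x‖ ^ 2)⁻¹ +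
        3 * B ^ 2 * w x ^ 2 * (‖x‖ ^ 4)⁻¹ := by
  have hthree (a b c : ℝ) :
      (a + 2 * b + c) ^ 2 ≤ 3 * a ^ 2 + 12 * b ^ 2 + 3 * c ^ 2 := by
    nlinarith [sq_nonneg (a - 2 * b), sq_nonneg (a - c), sq_nonneg (2 * b - c)]
  have hfirst : (lap w x * χ n x) ^ 2 ≤ lap w x ^ 2 := by
    rw [mul_pow]
    exact mul_le_of_le_one_right (sq_nonneg _) (pow_le_one₀ (hχ.nonneg n x) (hχ.le_one n x))
  have hlast : (w x * lap (χ n) x) ^ 2 ≤ B ^ 2 * w x ^ 2 * (‖x‖ ^ 4)⁻¹ := by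
    calc (w x * lap (χ n) x) ^ 2 = w x ^ 2 * |lap (χ n) x| ^ 2 := by rw [sq_abs, mul_pow]
      _ ≤ w x ^ 2 * (B * (‖x‖ ^ 2)⁻¹) ^ 2 := by
          gcongr
          exact hχ.abs_lap_le_const n hx
      _ = B ^ 2 * w x ^ 2 * (‖x‖ ^ 4)⁻¹ := by ring
  have hmid := hχ.sq_sum_pderiv_mul_pderiv_le w n hx
  rw [mul_pow, inv_pow] at hmid
  rw [hχ.lap_mul hw n hx]
  refine (hthree _ _ _).trans ?_
  linarith

theorem IsCutoffSequence.energyDensity_mul_le (hχ : IsCutoffSequence χ B)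
    (hw : ContDiffOn ℝ (⊤ : ℕ∞) w puncturedSpace) (n : ℕ) (hx : x ≠ 0) :
    energyDensity δ (fun y => w y * χ n y) x ≤ (3 + 3 * B ^ 2) * energyDensity δ w x +
      36 * B ^ 2 * ((∑ i, pderiv i w x ^ 2) * ‖x‖ ^ (-2 * δ - 1)) := by
  have hr : 0 < ‖x‖ := norm_pos_iff.2 hx
  have hp₁ : ‖x‖ ^ (-2 * δ - 1) = (‖x‖ ^ 2)⁻¹ * ‖x‖ ^ (-2 * δ + 1) := by
    rw [← Real.rpow_natCast, ← Real.rpow_neg hr.le, ← Real.rpow_add hr]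
    congr 1
    push_cast
    ring
  have hp₃ : ‖x‖ ^ (-2 * δ - 3) = (‖x‖ ^ 4)⁻¹ * ‖x‖ ^ (-2 * δ + 1) := by
    rw [← Real.rpow_natCast, ← Real.rpow_neg hr.le, ← Real.rpow_add hr]
    congr 1
    push_cast
    ring
  have hval : (w x * χ n x) ^ 2 * ‖x‖ ^ (-2 * δ - 3) ≤ w x ^ 2 * ‖x‖ ^ (-2 * δ - 3) := by
    rw [mul_pow]
    gcongr
    exact mul_le_of_le_one_right (sq_nonneg _) (pow_le_one₀ (hχ.nonneg n x) (hχ.le_one n x))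
  have hlap : lap (fun y => w y * χ n y) x ^ 2 * ‖x‖ ^ (-2 * δ + 1) ≤
      3 * (lap w x ^ 2 * ‖x‖ ^ (-2 * δ + 1)) +
        36 * B ^ 2 * ((∑ i, pderiv i w x ^ 2) * ‖x‖ ^ (-2 * δ - 1)) +
        3 * B ^ 2 * (w x ^ 2 * ‖x‖ ^ (-2 * δ - 3)) := by
    refine (mul_le_mul_of_nonneg_right (hχ.sq_lap_mul_le hw n hx) (by positivity)).trans_eq ?_
    rw [hp₁, hp₃]
    ring
  have hval0 : 0 ≤ w x ^ 2 * ‖x‖ ^ (-2 * δ - 3) := by positivity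
  have hlap0 : 0 ≤ B ^ 2 * (lap w x ^ 2 * ‖x‖ ^ (-2 * δ + 1)) := by positivity
  unfold energyDensity
  linarith

theorem HasFiniteEnergy.exists_tendstoEnergyDominated_mul (hw : HasFiniteEnergy δ w)
    (hχ : IsCutoffSequence χ B) :
    ∃ G, Integrable G ∧ TendstoEnergyDominated δ (fun n x => w x * χ n x) w G atTop := by
  obtain ⟨K, -, hK⟩ := exists_integral_sum_sq_pderiv_le δ
  refine ⟨_, (hw.integrable.const_mul (3 + 3 * B ^ 2)).add ((hK w hw).1.const_mul (36 * B ^ 2)),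
    .of_forall fun n => hw.contDiffOn.mul (hχ.isTestFun n).1.contDiffOn, hw.contDiffOn,
    .of_forall fun n x hx => hχ.energyDensity_mul_le hw.contDiffOn n hx, fun x hx => ?_,
    fun x hx => hχ.tendsto_lap_mul hw.contDiffOn hx⟩
  simpa using (hχ.tendsto_one x hx).const_mul (w x)

variable {ι : Type*} {l : Filter ι} {f : ι → E3 → ℝ} {f₀ G : E3 → ℝ}

theorem tendsto_wHnorm_of_tendsto_weightedEnergy (hf : ∀ᶠ n in l, HasFiniteEnergy δ (f n))
    (h : Tendsto (fun n => weightedEnergy δ (f n)) l (nhds 0)) :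
    Tendsto (fun n => wHnorm 2 δ (f n)) l (nhds 0) := by
  obtain ⟨K, -, hK⟩ := exists_wHnorm_two_le δ
  have hlim : Tendsto (fun n => ENNReal.ofReal (K * √(weightedEnergy δ (f n)))) l (nhds 0) := by
    simpa using ENNReal.tendsto_ofReal (h.sqrt.const_mul K)
  exact tendsto_of_tendsto_of_tendsto_of_le_of_le' tendsto_const_nhds hlim
    (.of_forall fun _ => zero_le) (hf.mono fun _ hn => hK _ hn)

theorem TendstoEnergyDominated.tendsto_wHnorm_sub [l.NeBot] [l.IsCountablyGenerated]
    (h : TendstoEnergyDominated δ f f₀ G l) (hG : Integrable G) :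
    Tendsto (fun n => wHnorm 2 δ (f n - f₀)) l (nhds 0) :=
  tendsto_wHnorm_of_tendsto_weightedEnergy
    ((h.hasFiniteEnergy hG).mono fun _ hn => hn.sub (h.hasFiniteEnergy_limit hG))
    (h.tendsto_weightedEnergy_sub hG)

theorem TendstoEnergyDominated.tendsto_wHnorm_sub_prod [l.NeBot] [l.IsCountablyGenerated]
    (h : TendstoEnergyDominated δ f f₀ G l) (hG : Integrable G) :
    Tendsto (fun p : ι × ι => wHnorm 2 δ (f p.1 - f p.2)) (l ×ˢ l) (nhds 0) := by
  have h₀ := h.hasFiniteEnergy_limit hG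
  have hE := h.tendsto_weightedEnergy_sub hG
  have hfin := (h.hasFiniteEnergy hG).prod_mk (h.hasFiniteEnergy hG)
  have hlim : Tendsto (fun p : ι × ι => 2 * weightedEnergy δ (f p.1 - f₀) +
      2 * weightedEnergy δ (f p.2 - f₀)) (l ×ˢ l) (nhds 0) := by
    simpa using ((hE.comp tendsto_fst).const_mul 2).add ((hE.comp tendsto_snd).const_mul 2)
  refine tendsto_wHnorm_of_tendsto_weightedEnergy (hfin.mono fun p hp => hp.1.sub hp.2)
    (squeeze_zero' (.of_forall fun _ => weightedEnergy_nonneg _ _) ?_ hlim)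
  filter_upwards [hfin] with p hp
  rw [← sub_sub_sub_cancel_right (f p.1) (f p.2) f₀]
  exact (hp.1.sub h₀).weightedEnergy_sub_le (hp.2.sub h₀)

theorem wHnorm_sub_comm (k : ℕ) (δ : ℝ) (v w : E3 → ℝ) :
    wHnorm k δ (v - w) = wHnorm k δ (w - v) := by
  simp only [wHnorm, ← neg_sub w v, iteratedFDeriv_neg_apply, norm_neg]

theorem HasFiniteEnergy.memH (hw : HasFiniteEnergy δ w) : MemH 2 δ w := by
  obtain ⟨K, -, hK⟩ := exists_wHnorm_two_le δ
  refine ⟨(hK w hw).trans_lt ENNReal.ofReal_lt_top, fun ε hε => ?_⟩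
  obtain ⟨χ, B, hχ⟩ := exists_isCutoffSequence
  obtain ⟨G, hG, h⟩ := hw.exists_tendstoEnergyDominated_mul hχ
  obtain ⟨n, hn⟩ := ((h.tendsto_wHnorm_sub hG).eventually (ge_mem_nhds hε)).exists
  exact ⟨_, (hχ.isTestFun n).mul_left hw.contDiffOn, (wHnorm_sub_comm 2 δ _ _).trans_le hn⟩

end Density

theorem u_mu_cauchy_and_convergent_general
    (A J : ℝ) (hAJ : A ≠ 0 ∨ J ≠ 0) (P : E3)
    (σ : E3 → ℝ) (hσsmooth : ContDiff ℝ (⊤ : ℕ∞) σ) (hσnonneg : ∀ x, 0 ≤ σ x)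
    (hσbdd : ∃ C, ∀ x, σ x ≤ C)
    (u : ℝ → E3 → ℝ) (hu : ∀ μ > (0 : ℝ), IsSolμ A J P σ μ (u μ))
    (δ : ℝ) (hδ : δ ∈ Set.Ioo (-1 : ℝ) (-1 / 2)) :
    (∀ ε : ℝ≥0∞, 0 < ε → ∃ μ₀ > (0 : ℝ), ∀ μ₁ μ₂ : ℝ,
      0 < μ₂ → μ₂ ≤ μ₁ → μ₁ ≤ μ₀ → wHnorm 2 δ (u μ₁ - u μ₂) ≤ ε) ∧
    ∃ u₀ : E3 → ℝ, MemH 2 δ u₀ ∧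
      Tendsto (fun μ => wHnorm 2 δ (u μ - u₀)) (nhdsWithin 0 (Set.Ioi 0)) (nhds 0) := by
  obtain ⟨s, hσs⟩ := hσbdd
  obtain ⟨G, hG, hlim⟩ := exists_tendstoEnergyDominated_extremeLimit hu
    ⟨hAJ, hσsmooth, hσnonneg⟩ hσs hδ
  refine ⟨fun ε hε => ?_, extremeLimit u, (hlim.hasFiniteEnergy_limit hG).memH,
    hlim.tendsto_wHnorm_sub hG⟩
  obtain ⟨s, hs, hsε⟩ := Filter.eventually_prod_self_iff'.1
    ((hlim.tendsto_wHnorm_sub_prod hG).eventually (ge_mem_nhds hε))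
  obtain ⟨μ₀, hμ₀, hμ₀s⟩ := mem_nhdsGT_iff_exists_Ioc_subset.1 hs
  exact ⟨μ₀, hμ₀, fun μ₁ μ₂ hμ₂ h₂₁ h₁₀ => hsε _
    (hμ₀s ⟨hμ₂.trans_le h₂₁, h₁₀⟩) _ (hμ₀s ⟨hμ₂, h₂₁.trans h₁₀⟩)⟩

/-- Convergence: for `δ ∈ (-1,-1/2)` the family `u_μ` is Cauchy in
`H'²_δ` as `μ → 0`, and hence converges in `H'²_δ` to some `u₀ ∈ H'²_δ`. -/
theorem u_mu_cauchy_and_convergent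
    (A J : ℝ) (hA : 0 ≤ A) (hAJ : 0 < A ∨ J ≠ 0) (P : E3)
    (σ : E3 → ℝ) (hσsmooth : ContDiff ℝ (⊤ : ℕ∞) σ) (hσnonneg : ∀ x, 0 ≤ σ x)
    (hσbdd : ∃ C, ∀ x, σ x ≤ C)
    (u : ℝ → E3 → ℝ) (hu : ∀ μ > (0:ℝ), IsSolμ A J P σ μ (u μ))
    (δ : ℝ) (hδ : δ ∈ Set.Ioo (-1 : ℝ) (-1/2)) :
    (∀ ε : ℝ≥0∞, 0 < ε → ∃ μ₀ > (0:ℝ), ∀ μ₁ μ₂ : ℝ,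
      0 < μ₂ → μ₂ ≤ μ₁ → μ₁ ≤ μ₀ → wHnorm 2 δ (u μ₁ - u μ₂) ≤ ε) ∧
    ∃ u₀ : E3 → ℝ, MemH 2 δ u₀ ∧
      Tendsto (fun μ => wHnorm 2 δ (u μ - u₀)) (nhdsWithin 0 (Set.Ioi 0)) (nhds 0) :=
  u_mu_cauchy_and_convergent_general A J (hAJ.imp_left ne_of_gt) P σ hσsmooth hσnonneg hσbdd u hu
    δ hδ
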